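/- arXiv:2412.03559 — 3 statements merged into one kernel-verified Lean document; each statement's English description precedes it below -/
import Mathlib

section
/- (Dougall's ₂H₂ summation.) Let a,b,c,d ∈ ℂ with c,d ∉ ℤ, a and b not positive integers, and Re(c+d−a−b−1) > 0. Then Σ_{k=−∞}^{∞} ((a)_k(b)_k)/((c)_k(d)_k) = Γ(1−a)Γ(1−b)Γ(c)Γ(d)Γ(c+d−a−b−1)/(Γ(c−a)Γ(c−b)Γ(d−a)Γ(d−b)), the bilateral sum converging absolutely. -/
open Complex

/-- The shifted factorial `(a)_k = Γ(a+k)/Γ(a)` for integer `k`, given by the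
(generically equal) product formulas. -/
noncomputable def poch (a : ℂ) (k : ℤ) : ℂ :=
  if 0 ≤ k then ∏ j ∈ Finset.range k.toNat, (a + (j : ℂ))
  else (∏ j ∈ Finset.range (-k).toNat, (a - 1 - (j : ℂ)))⁻¹


open Filter Topology

/-- reciprocal Gamma -/
noncomputable def rg (s : ℂ) : ℂ := (Complex.Gamma s)⁻¹

lemma rg_rec (s : ℂ) : rg s = s * rg (s + 1) :=
  Complex.one_div_Gamma_eq_self_mul_one_div_Gamma_add_one s

lemma rg_diff : Differentiable ℂ rg := Complex.differentiable_one_div_Gamma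

lemma beta_bound (v : ℂ) (hv : 0 < v.re) :
    ∃ K : ℝ, ∀ u : ℂ, 1 ≤ u.re → ‖Complex.Gamma u * rg (u + v)‖ ≤ K := by
  refine ⟨(∫ x : ℝ in (0:ℝ)..1, ‖(1 - (x : ℂ)) ^ (v - 1)‖) / ‖Complex.Gamma v‖, fun u hu => ?_⟩
  have hu0 : 0 < u.re := by linarith
  have hv' : Complex.Gamma v ≠ 0 := Complex.Gamma_ne_zero_of_re_pos hv
  have huv : Complex.Gamma (u + v) ≠ 0 :=
    Complex.Gamma_ne_zero_of_re_pos (by rw [Complex.add_re]; linarith)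
  have h1 : Complex.Gamma u * rg (u + v) = Complex.betaIntegral u v / Complex.Gamma v := by
    have := Complex.Gamma_mul_Gamma_eq_betaIntegral hu0 hv
    unfold rg
    field_simp
    rw [this]
  rw [h1, norm_div]
  gcongr
  unfold Complex.betaIntegral
  have hi1 := Complex.betaIntegral_convergent (u := 1) (v := v) (by simp) hv
  refine intervalIntegral.norm_integral_le_of_norm_le zero_le_one ?_ ?_
  · refine Filter.Eventually.of_forall fun x hx => ?_
    rw [norm_mul]
    refine mul_le_of_le_one_left (norm_nonneg _) ?_
    rw [Complex.norm_cpow_eq_rpow_re_of_pos hx.1]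
    exact Real.rpow_le_one hx.1.le hx.2 (by simp; linarith)
  · have := hi1.norm
    simpa using this

lemma norm_sin_le (w : ℂ) : ‖Complex.sin w‖ ≤ Real.exp |w.im| := by
  unfold Complex.sin
  have h1 : ‖Complex.exp (-w * I)‖ ≤ Real.exp |w.im| := by
    rw [Complex.norm_exp]; simp; exact le_abs_self _
  have h2 : ‖Complex.exp (w * I)‖ ≤ Real.exp |w.im| := by
    rw [Complex.norm_exp]; simp; exact neg_le_abs _
  have h3 := norm_sub_le (Complex.exp (-w * I)) (Complex.exp (w * I))
  simp only [norm_div, norm_mul, Complex.norm_I, mul_one, Complex.norm_ofNat]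
  linarith

lemma le_norm_sin (w : ℂ) (hw : 1 ≤ |w.im|) : Real.exp |w.im| / 4 ≤ ‖Complex.sin w‖ := by
  have key : ∀ w : ℂ, 1 ≤ w.im → Real.exp w.im / 4 ≤ ‖Complex.sin w‖ := by
    intro w hw
    unfold Complex.sin
    have h1 : ‖Complex.exp (-w * I)‖ = Real.exp w.im := by
      rw [Complex.norm_exp]; simp
    have h2 : ‖Complex.exp (w * I)‖ = Real.exp (- w.im) := by
      rw [Complex.norm_exp]; simp
    have h3 := norm_sub_norm_le (Complex.exp (-w * I)) (Complex.exp (w * I))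
    simp only [norm_div, norm_mul, Complex.norm_I, mul_one, Complex.norm_ofNat]
    rw [h1, h2] at h3
    have h4 : Real.exp (-w.im) ≤ 1 := by rw [Real.exp_le_one_iff]; linarith
    have h5 : w.im + 1 ≤ Real.exp w.im := Real.add_one_le_exp _
    linarith
  rcases le_abs'.1 hw with h | h
  · have := key (-w) (by simp; linarith)
    rw [abs_of_neg (by linarith)]
    simpa [Complex.sin_neg] using this
  · rw [abs_of_pos (by linarith)]
    exact key w h

lemma rg_one_sub (w : ℂ) (hw : 1 ≤ w.re) :
    rg (1 - w) = Complex.Gamma w * Complex.sin (Real.pi * w) / Real.pi := by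
  have hg : Complex.Gamma w ≠ 0 := Complex.Gamma_ne_zero_of_re_pos (by linarith)
  have h := Complex.Gamma_mul_Gamma_one_sub w
  have h2 : Complex.Gamma (1 - w) = Real.pi / Complex.sin (Real.pi * w) / Complex.Gamma w := by
    rw [← h]; field_simp
  unfold rg
  rw [h2]
  simp only [inv_div, div_div_eq_mul_div]

lemma phi_right (c e : ℂ) (h : 3 < (c + e).re) :
    ∃ C : ℝ, ∀ z : ℂ, e.re ≤ z.re →
      ‖rg (c + z) * rg (e - z)‖ * (1 + ‖z‖ ^ 2) ≤ C * Real.exp (Real.pi * |z.im|) := by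
  obtain ⟨K, hK⟩ := beta_bound (c + e - 3) (by simp at h ⊢; linarith)
  have hK0 : 0 ≤ K := (norm_nonneg _).trans (hK 1 (by simp))
  set M : ℝ := 1 + ‖1 - e‖ with hM
  refine ⟨K * Real.exp (Real.pi * |e.im|) * (1 + M ^ 2), fun z hz => ?_⟩
  set w := 1 - e + z with hw
  have hwre : 1 ≤ w.re := by simp [hw]; linarith
  have hw1 : 1 ≤ ‖w‖ := hwre.trans (Complex.re_le_norm w)
  have hw2 : ‖w‖ ≤ ‖w + 1‖ := by
    rw [← sq_le_sq₀ (norm_nonneg _) (norm_nonneg _), Complex.sq_norm, Complex.sq_norm,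
      Complex.normSq_apply, Complex.normSq_apply]
    simp; nlinarith
  have hw0 : w ≠ 0 := by rw [← norm_pos_iff]; linarith
  have hw10 : w + 1 ≠ 0 := by rw [← norm_pos_iff]; linarith
  have e1 : rg (e - z) = Complex.Gamma w * Complex.sin (Real.pi * w) / Real.pi := by
    rw [← rg_one_sub w hwre, hw]; congr 1; ring
  have e2 : Complex.Gamma (w + 2) = (w + 1) * (w * Complex.Gamma w) := by
    rw [show w + 2 = (w + 1) + 1 by ring, Complex.Gamma_add_one _ hw10, Complex.Gamma_add_one _ hw0]
  have hkk := hK (w + 2) (by simp; linarith)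
  rw [show w + 2 + (c + e - 3) = c + z by rw [hw]; ring] at hkk
  have e3 : rg (c + z) * rg (e - z) =
      (Complex.Gamma (w + 2) * rg (c + z)) * Complex.sin (Real.pi * w) / Real.pi / (w * (w + 1)) := by
    rw [e1, e2]; field_simp
  have hs : ‖Complex.sin (Real.pi * w)‖ ≤
      Real.exp (Real.pi * |e.im|) * Real.exp (Real.pi * |z.im|) := by
    refine (norm_sin_le _).trans ?_
    rw [← Real.exp_add, Real.exp_le_exp, ← mul_add]
    simp [hw, abs_mul, abs_of_pos Real.pi_pos]
    have := abs_add_le (-e.im) z.im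
    rw [abs_neg] at this
    exact mul_le_mul_of_nonneg_left this Real.pi_pos.le
  have hz2 : ‖z‖ ≤ M * ‖w‖ := by
    have : ‖z‖ ≤ ‖w‖ + ‖1 - e‖ := by
      have := norm_sub_le w (1 - e)
      simpa [hw] using this
    rw [hM]; nlinarith [norm_nonneg (1 - e)]
  have hz3 : 1 + ‖z‖ ^ 2 ≤ (1 + M ^ 2) * (‖w‖ * ‖w + 1‖) := by
    have : ‖z‖ ^ 2 ≤ M ^ 2 * ‖w‖ ^ 2 := by rw [← mul_pow]; gcongr
    have h5 : ‖w‖ ^ 2 ≤ ‖w‖ * ‖w + 1‖ := by rw [sq]; gcongr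
    nlinarith [sq_nonneg M]
  rw [e3, norm_div, norm_div, norm_mul, norm_mul w, Complex.norm_real, Real.norm_of_nonneg Real.pi_pos.le]
  set A := ‖Complex.Gamma (w + 2) * rg (c + z)‖
  set B := ‖Complex.sin (Real.pi * w)‖
  have hpi : (1:ℝ) ≤ Real.pi := by linarith [Real.pi_gt_three]
  have hWW : 0 < ‖w‖ * ‖w + 1‖ := by positivity
  calc A * B / Real.pi / (‖w‖ * ‖w + 1‖) * (1 + ‖z‖ ^ 2)
      ≤ A * B / 1 / (‖w‖ * ‖w + 1‖) * ((1 + M ^ 2) * (‖w‖ * ‖w + 1‖)) := by gcongr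
    _ = A * B * (1 + M ^ 2) := by field_simp
    _ ≤ K * (Real.exp (Real.pi * |e.im|) * Real.exp (Real.pi * |z.im|)) * (1 + M ^ 2) := by gcongr
    _ = _ := by ring

lemma phi_shift (c e : ℂ) (R : ℝ)
    (h : ∃ C : ℝ, ∀ z : ℂ, R ≤ z.re → |e.im| + 1 ≤ |z.im| →
      ‖rg (c + z) * rg (e - z)‖ * (1 + ‖z‖ ^ 2) ≤ C * Real.exp (Real.pi * |z.im|)) :
    ∃ C : ℝ, ∀ z : ℂ, R - 1 ≤ z.re → |e.im| + 1 ≤ |z.im| →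
      ‖rg (c + z) * rg (e - z)‖ * (1 + ‖z‖ ^ 2) ≤ C * Real.exp (Real.pi * |z.im|) := by
  obtain ⟨C, hC⟩ := h
  refine ⟨(1 + ‖c + e - 1‖) * 3 * C, fun z hz hy => ?_⟩
  have h1 := hC (z + 1) (by simp; linarith) (by simpa using hy)
  simp only [Complex.add_im, Complex.one_im, add_zero] at h1
  have hq : 1 ≤ ‖e - 1 - z‖ := by
    have a1 := Complex.abs_im_le_norm (e - 1 - z)
    simp at a1
    have a2 := abs_sub_abs_le_abs_sub z.im e.im
    rw [abs_sub_comm] at a2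
    linarith
  have hq0 : e - 1 - z ≠ 0 := by rw [← norm_pos_iff]; linarith
  have e1 : (rg (c + z) * rg (e - z)) =
      (c + z) / (e - 1 - z) * (rg (c + (z + 1)) * rg (e - (z + 1))) := by
    rw [rg_rec (c + z), rg_rec (e - (z + 1)), show e - (z + 1) + 1 = e - z by ring,
      show c + z + 1 = c + (z + 1) by ring, show e - (z + 1) = e - 1 - z by ring]
    field_simp
  have h2 : ‖(c + z) / (e - 1 - z)‖ ≤ 1 + ‖c + e - 1‖ := by
    rw [norm_div, div_le_iff₀ (by linarith)]
    have : ‖c + z‖ ≤ ‖c + e - 1‖ + ‖e - 1 - z‖ := by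
      have := norm_sub_le (c + e - 1) (e - 1 - z)
      rwa [show c + e - 1 - (e - 1 - z) = c + z by ring] at this
    nlinarith [norm_nonneg (c + e - 1)]
  have h3 : 1 + ‖z‖ ^ 2 ≤ 3 * (1 + ‖z + 1‖ ^ 2) := by
    have : ‖z‖ ≤ ‖z + 1‖ + 1 := by
      have := norm_sub_le (z + 1) 1
      simpa using this
    nlinarith [norm_nonneg z, norm_nonneg (z + 1), sq_nonneg (‖z + 1‖ - 1)]
  rw [e1, norm_mul]
  set A := ‖rg (c + (z + 1)) * rg (e - (z + 1))‖
  calc _ ≤ (1 + ‖c + e - 1‖) * A * (3 * (1 + ‖z + 1‖ ^ 2)) := by gcongr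
    _ = (1 + ‖c + e - 1‖) * 3 * (A * (1 + ‖z + 1‖ ^ 2)) := by ring
    _ ≤ (1 + ‖c + e - 1‖) * 3 * (C * Real.exp (Real.pi * |z.im|)) := by gcongr
    _ = _ := by ring

lemma phi_global (c e : ℂ) (h : 3 < (c + e).re) :
    ∃ C : ℝ, 0 ≤ C ∧ ∀ z : ℂ,
      ‖rg (c + z) * rg (e - z)‖ * (1 + ‖z‖ ^ 2) ≤ C * Real.exp (Real.pi * |z.im|) := by
  obtain ⟨C1, h1⟩ := phi_right c e h
  obtain ⟨C2, h2⟩ := phi_right e c (by rwa [add_comm])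
  have hn : ∀ n : ℕ, ∃ C : ℝ, ∀ z : ℂ, e.re - n ≤ z.re → |e.im| + 1 ≤ |z.im| →
      ‖rg (c + z) * rg (e - z)‖ * (1 + ‖z‖ ^ 2) ≤ C * Real.exp (Real.pi * |z.im|) := by
    intro n
    induction n with
    | zero => exact ⟨C1, fun z hz _ => h1 z (by simpa using hz)⟩
    | succ n ih =>
      have := phi_shift c e _ ih
      push_cast
      rwa [← sub_sub]
  obtain ⟨N, hN⟩ := exists_nat_ge (e.re + c.re)
  obtain ⟨C3, h3⟩ := hn N
  set ρ : ℝ := |e.re| + |c.re| + |e.im| + 1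
  have hcont : Continuous fun z : ℂ => ‖rg (c + z) * rg (e - z)‖ * (1 + ‖z‖ ^ 2) := by
    have := rg_diff.continuous
    fun_prop
  obtain ⟨C4, h4⟩ := (isCompact_closedBall (0 : ℂ) ρ).exists_bound_of_continuousOn hcont.continuousOn
  refine ⟨|C1| + |C2| + |C3| + |C4|, by positivity, fun z => ?_⟩
  have hexp : 0 < Real.exp (Real.pi * |z.im|) := Real.exp_pos _
  have hexp1 : 1 ≤ Real.exp (Real.pi * |z.im|) := Real.one_le_exp (by positivity)
  have q1 := abs_nonneg C1
  have q2 := abs_nonneg C2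
  have q3 := abs_nonneg C3
  have q4 := abs_nonneg C4
  have r1 := le_abs_self C1
  have r2 := le_abs_self C2
  have r3 := le_abs_self C3
  have r4 := le_abs_self C4
  by_cases a1 : e.re ≤ z.re
  · refine (h1 z a1).trans ?_
    gcongr; linarith
  by_cases a2 : c.re ≤ (-z).re
  · have := h2 (-z) a2
    rw [← sub_eq_add_neg, sub_neg_eq_add, mul_comm (rg _), norm_neg, Complex.neg_im, abs_neg] at this
    refine this.trans ?_
    gcongr; linarith
  rw [Complex.neg_re] at a2
  push Not at a1 a2
  by_cases a3 : |e.im| + 1 ≤ |z.im|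
  · refine (h3 z (by linarith) a3).trans ?_
    gcongr; linarith
  push Not at a3
  have hz : z ∈ Metric.closedBall (0:ℂ) ρ := by
    rw [mem_closedBall_zero_iff]
    refine (Complex.norm_le_abs_re_add_abs_im z).trans ?_
    have : |z.re| ≤ |e.re| + |c.re| := by
      rw [abs_le]
      constructor
      · linarith [le_abs_self c.re, abs_nonneg e.re]
      · linarith [le_abs_self e.re, abs_nonneg c.re]
    linarith
  have := h4 z hz
  rw [Real.norm_of_nonneg (by positivity)] at this
  nlinarith

/-- bilateral summand -/
noncomputable def uu (c d e f z : ℂ) : ℂ := rg (c + z) * rg (d + z) * rg (e - z) * rg (f - z)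

lemma uu_bound (c d e f : ℂ) (h : 3 < (c + e).re) (h' : 3 < (d + f).re) :
    ∃ C : ℝ, 0 ≤ C ∧ ∀ z : ℂ,
      ‖uu c d e f z‖ ≤ C * Real.exp (2 * Real.pi * |z.im|) / ((1 + z.re ^ 2) * (1 + z.im ^ 2)) := by
  obtain ⟨C1, h10, h1⟩ := phi_global c e h
  obtain ⟨C2, h20, h2⟩ := phi_global d f h'
  refine ⟨C1 * C2, by positivity, fun z => ?_⟩
  rw [le_div_iff₀ (by positivity)]
  have e1 : uu c d e f z = (rg (c + z) * rg (e - z)) * (rg (d + z) * rg (f - z)) := by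
    unfold uu; ring
  have hr : 1 + z.re ^ 2 ≤ 1 + ‖z‖ ^ 2 := by
    rw [Complex.sq_norm, Complex.normSq_apply]; nlinarith [sq_nonneg z.im]
  have hi : 1 + z.im ^ 2 ≤ 1 + ‖z‖ ^ 2 := by
    rw [Complex.sq_norm, Complex.normSq_apply]; nlinarith [sq_nonneg z.re]
  rw [e1, norm_mul]
  set A := ‖rg (c + z) * rg (e - z)‖
  set B := ‖rg (d + z) * rg (f - z)‖
  calc A * B * ((1 + z.re ^ 2) * (1 + z.im ^ 2)) ≤ A * B * ((1 + ‖z‖ ^ 2) * (1 + ‖z‖ ^ 2)) := by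
        gcongr
    _ = (A * (1 + ‖z‖ ^ 2)) * (B * (1 + ‖z‖ ^ 2)) := by ring
    _ ≤ (C1 * Real.exp (Real.pi * |z.im|)) * (C2 * Real.exp (Real.pi * |z.im|)) := by
        exact mul_le_mul (h1 z) (h2 z) (by positivity) (by positivity)
    _ = C1 * C2 * Real.exp (2 * Real.pi * |z.im|) := by
        rw [show 2 * Real.pi * |z.im| = Real.pi * |z.im| + Real.pi * |z.im| by ring, Real.exp_add]
        ring

lemma sn_zero_iff (x : ℂ) : Complex.sin (2 * Real.pi * x) = 0 ↔ ∃ m : ℤ, x = m / 2 := by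
  have hpi : (Real.pi : ℂ) ≠ 0 := by exact_mod_cast Real.pi_ne_zero
  rw [Complex.sin_eq_zero_iff]
  constructor
  · rintro ⟨k, hk⟩
    refine ⟨k, ?_⟩
    have : (Real.pi : ℂ) * (2 * x) = Real.pi * k := by linear_combination hk
    have := mul_left_cancel₀ hpi this
    linear_combination this / 2
  · rintro ⟨k, rfl⟩
    exact ⟨k, by ring⟩

lemma periodic_zero (h : ℂ → ℂ) (hd : Differentiable ℂ h) (hp : ∀ x, h (x + 1) = h x)
    (h0 : h 0 = 0) (h1 : h (1 / 2) = 0)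
    (hs : ∀ ε : ℝ, 0 < ε → ∃ Y : ℝ, ∀ x : ℂ, Y ≤ |x.im| →
      ‖h x‖ ≤ ε * Real.exp (2 * Real.pi * |x.im|)) : ∀ x, h x = 0 := by
  have hpi : (Real.pi : ℂ) ≠ 0 := by exact_mod_cast Real.pi_ne_zero
  have hpZ : ∀ (m : ℤ) x, h (x + m) = h x := by
    intro m x
    have : Function.Periodic h 1 := hp
    simpa using this.int_mul m x
  set sn : ℂ → ℂ := fun x => Complex.sin (2 * Real.pi * x) with hsn
  have snd : Differentiable ℂ sn := by
    rw [hsn]; fun_prop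
  have snp : ∀ (m : ℤ) x, sn (x + m) = sn x := by
    intro m x
    simp only [hsn]
    rw [show 2 * (Real.pi : ℂ) * (x + m) = 2 * Real.pi * x + m * (2 * Real.pi) by ring,
      Complex.sin_add_int_mul_two_pi]
  have snderiv : ∀ x, HasDerivAt sn (Complex.cos (2 * Real.pi * x) * (2 * Real.pi)) x := by
    intro x
    have h1 : HasDerivAt (fun x : ℂ => 2 * (Real.pi : ℂ) * x) (2 * Real.pi) x := by
      simpa using (hasDerivAt_id x).const_mul (2 * (Real.pi : ℂ))
    exact h1.csin
  have snderiv0 : ∀ x, sn x = 0 → deriv sn x ≠ 0 := by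
    intro x hx
    rw [(snderiv x).deriv]
    have h2 := Complex.sin_sq_add_cos_sq (2 * Real.pi * x)
    intro h3
    have h4 : Complex.cos (2 * Real.pi * x) = 0 := by
      rcases mul_eq_zero.1 h3 with h | h
      · exact h
      · simp [hpi] at h
    simp only [hsn] at hx
    rw [hx, h4] at h2
    norm_num at h2
  have hz : ∀ x, sn x = 0 → h x = 0 := by
    intro x hx
    obtain ⟨m, rfl⟩ := (sn_zero_iff x).1 hx
    rcases Int.even_or_odd' m with ⟨k, rfl | rfl⟩
    · have := hpZ k 0
      rw [h0] at this
      rw [← this]; congr 1; push_cast; ring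
    · have := hpZ k (1 / 2)
      rw [h1] at this
      rw [← this]; congr 1; push_cast; ring
  set E : ℂ → ℂ := fun x => if sn x = 0 then deriv h x / deriv sn x else h x / sn x with hE
  have derivp : ∀ (F : ℂ → ℂ), (∀ (m : ℤ) x, F (x + m) = F x) → ∀ (m : ℤ) x,
      deriv F (x + m) = deriv F x := by
    intro F hF m x
    rw [← deriv_comp_add_const]
    congr 1
    funext y
    exact hF m y
  have Ep : ∀ (m : ℤ) x, E (x + m) = E x := by
    intro m x
    simp only [hE, snp, hpZ, derivp sn snp, derivp h hpZ]
  have dsl : ∀ F : ℂ → ℂ, Differentiable ℂ F → ∀ x, DifferentiableAt ℂ (dslope F x) x := by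
    intro F hF x
    have := (Complex.differentiableOn_dslope (f := F) (s := Set.univ) (c := x) univ_mem).2
      hF.differentiableOn
    exact this.differentiableAt univ_mem
  have Ed : Differentiable ℂ E := by
    intro x0
    by_cases hx : sn x0 = 0
    · have d1 := dsl h hd x0
      have d2 := dsl sn snd x0
      have hne : dslope sn x0 x0 ≠ 0 := by rw [dslope_same]; exact snderiv0 x0 hx
      have d3 : DifferentiableAt ℂ (fun x => dslope h x0 x / dslope sn x0 x) x0 := d1.div d2 hne
      refine d3.congr_of_eventuallyEq ?_
      filter_upwards [d2.continuousAt.eventually_ne hne] with x hxx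
      simp only [hE]
      by_cases hxe : x = x0
      · subst hxe; simp [hx]
      · have s1 := sub_smul_dslope_of_zero hx x
        have s2 := sub_smul_dslope_of_zero (hz x0 hx) x
        have hsub : x - x0 ≠ 0 := sub_ne_zero.2 hxe
        rw [smul_eq_mul] at s1 s2
        have : sn x ≠ 0 := by rw [← s1]; exact mul_ne_zero hsub hxx
        rw [if_neg this, ← s1, ← s2]
        field_simp
    · have d3 : DifferentiableAt ℂ (fun x => h x / sn x) x0 := (hd x0).div (snd x0) hx
      refine d3.congr_of_eventuallyEq ?_
      filter_upwards [snd.continuous.continuousAt.eventually_ne hx] with x hxx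
      simp only [hE, if_neg hxx]
  have Esm : ∀ ε : ℝ, 0 < ε → ∃ Y : ℝ, ∀ x : ℂ, Y ≤ |x.im| → ‖E x‖ ≤ ε := by
    intro ε hε
    obtain ⟨Y, hY⟩ := hs (ε / 4) (by positivity)
    refine ⟨max Y 1, fun x hx => ?_⟩
    have hY' := hY x (le_of_max_le_left hx)
    have him : |(2 * (Real.pi : ℂ) * x).im| = 2 * Real.pi * |x.im| := by
      have : (2 * (Real.pi : ℂ) * x).im = 2 * Real.pi * x.im := by simp
      rw [this, abs_mul, abs_of_pos (by positivity)]
    have h1x : 1 ≤ |x.im| := le_of_max_le_right hx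
    have hl := le_norm_sin (2 * Real.pi * x) (by rw [him]; nlinarith [Real.pi_gt_three])
    rw [him] at hl
    have hpos : 0 < Real.exp (2 * Real.pi * |x.im|) := Real.exp_pos _
    have hsx : 0 < ‖sn x‖ := by
      simp only [hsn]; linarith
    have : sn x ≠ 0 := norm_pos_iff.1 hsx
    simp only [hE, if_neg this]
    rw [norm_div, div_le_iff₀ hsx]
    refine hY'.trans ?_
    calc _ = ε * (Real.exp (2 * Real.pi * |x.im|) / 4) := by ring
      _ ≤ _ := by gcongr
  have Eb : Bornology.IsBounded (Set.range E) := by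
    obtain ⟨Y, hY⟩ := Esm 1 one_pos
    obtain ⟨C, hC⟩ := (isCompact_closedBall (0 : ℂ) (1 + |Y|)).exists_bound_of_continuousOn
      Ed.continuous.continuousOn
    rw [isBounded_iff_forall_norm_le]
    refine ⟨max 1 C, ?_⟩
    rintro _ ⟨x, rfl⟩
    by_cases hx : Y ≤ |x.im|
    · exact (hY x hx).trans (le_max_left _ _)
    · have := Ep (-⌊x.re⌋) x
      rw [← this]
      refine (hC _ ?_).trans (le_max_right _ _)
      rw [mem_closedBall_zero_iff]
      refine (Complex.norm_le_abs_re_add_abs_im _).trans ?_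
      have a1 : (x + ((-⌊x.re⌋ : ℤ) : ℂ)).re = Int.fract x.re := by
        simp [Int.fract, sub_eq_add_neg]
      have a2 : (x + ((-⌊x.re⌋ : ℤ) : ℂ)).im = x.im := by simp
      rw [a1, a2, abs_of_nonneg (Int.fract_nonneg _)]
      push Not at hx
      have := (Int.fract_lt_one x.re).le
      linarith [le_abs_self Y]
  have Ez : ∀ x, E x = 0 := by
    intro x
    rw [← norm_le_zero_iff]
    refine le_of_forall_pos_le_add fun ε hε => ?_
    obtain ⟨Y, hY⟩ := Esm ε hε
    rw [Ed.apply_eq_apply_of_bounded Eb x (Y * I), zero_add]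
    exact hY _ (by simpa using le_abs_self Y)
  intro x
  by_cases hx : sn x = 0
  · exact hz x hx
  · have := Ez x
    simp only [hE, if_neg hx] at this
    exact (div_eq_zero_iff.1 this).resolve_right hx

lemma periodic_const (H : ℂ → ℂ) (hd : Differentiable ℂ H) (hp : ∀ x, H (x + 1) = H x)
    (hs : ∀ ε : ℝ, 0 < ε → ∃ Y : ℝ, ∀ x : ℂ, Y ≤ |x.im| →
      ‖H x‖ ≤ ε * Real.exp (2 * Real.pi * |x.im|)) (x y : ℂ) : H x = H y := by
  set p := (x + y) / 2 with hpdef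
  have hp' : ∀ x, H (x - 1) = H x := fun x => by rw [← hp (x - 1), sub_add_cancel]
  have := periodic_zero (fun t => H (p + t) - H (p - t)) (by fun_prop)
    (fun t => by
      rw [← add_assoc, hp, ← sub_sub, hp'])
    (by simp)
    (by
      rw [← hp (p - 1 / 2), sub_eq_zero]
      congr 1; ring)
    (by
      intro ε hε
      set T := Real.exp (2 * Real.pi * |p.im|) with hT
      have hTpos : 0 < T := Real.exp_pos _
      obtain ⟨Y, hY⟩ := hs (ε / 2 / T) (by positivity)
      refine ⟨Y + |p.im|, fun t ht => ?_⟩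
      have key : ∀ z : ℂ, |z.im| ≤ |t.im| + |p.im| → |t.im| - |p.im| ≤ |z.im| →
          ‖H z‖ ≤ ε / 2 * Real.exp (2 * Real.pi * |t.im|) := by
        intro z hz1 hz2
        refine (hY z (by linarith)).trans ?_
        calc ε / 2 / T * Real.exp (2 * Real.pi * |z.im|)
            ≤ ε / 2 / T * Real.exp (2 * Real.pi * (|t.im| + |p.im|)) := by gcongr
          _ = ε / 2 * Real.exp (2 * Real.pi * |t.im|) := by
            rw [mul_add, Real.exp_add, ← hT]; field_simp
      have k1 := key (p + t) (by
        rw [Complex.add_im, add_comm |t.im|]; exact abs_add_le _ _) (by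
        have := abs_sub_abs_le_abs_sub t.im (-p.im)
        rw [abs_neg, sub_neg_eq_add, add_comm t.im] at this
        simpa using this)
      have k2 := key (p - t) (by
        rw [Complex.sub_im, add_comm |t.im|]; exact abs_sub _ _) (by
        rw [Complex.sub_im, abs_sub_comm]; exact abs_sub_abs_le_abs_sub _ _)
      refine (norm_sub_le _ _).trans ?_
      linarith)
    ((x - y) / 2)
  rw [show p + (x - y) / 2 = x by rw [hpdef]; ring, show p - (x - y) / 2 = y by rw [hpdef]; ring,
    sub_eq_zero] at this
  exact this

lemma summable_int_inv : Summable fun k : ℤ => 1 / (1 + (k : ℝ) ^ 2) := by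
  have h := (Real.summable_one_div_int_pow (p := 2)).2 (by norm_num)
  refine Summable.of_norm_bounded_eventually h ?_
  rw [Filter.eventually_cofinite]
  refine (Set.finite_singleton (0 : ℤ)).subset fun k hk => ?_
  by_contra hk0
  apply hk
  have : 0 < (k : ℝ) ^ 2 := by
    have : (k : ℝ) ≠ 0 := by exact_mod_cast hk0
    positivity
  rw [Real.norm_of_nonneg (by positivity)]
  gcongr; linarith

lemma uu_shift_bound (c d e f : ℂ) (h : 3 < (c + e).re) (h' : 3 < (d + f).re) :
    ∃ C : ℝ, 0 ≤ C ∧ ∀ (z : ℂ) (k : ℤ),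
      ‖uu c d e f (z + k)‖ ≤ C * (1 + z.re ^ 2) * Real.exp (2 * Real.pi * |z.im|) / (1 + z.im ^ 2) *
        (1 / (1 + (k : ℝ) ^ 2)) := by
  obtain ⟨C, hC0, hC⟩ := uu_bound c d e f h h'
  refine ⟨2 * C, by positivity, fun z k => (hC _).trans ?_⟩
  have a1 : (z + (k : ℂ)).re = z.re + k := by simp
  have a2 : (z + (k : ℂ)).im = z.im := by simp
  rw [a1, a2, div_mul_div_comm, div_le_div_iff₀ (by positivity) (by positivity)]
  set X := Real.exp (2 * Real.pi * |z.im|)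
  have : 1 + (k : ℝ) ^ 2 ≤ 2 * (1 + z.re ^ 2) * (1 + (z.re + k) ^ 2) := by
    nlinarith [sq_nonneg (z.re + (z.re + k)), sq_nonneg (z.re * (z.re + k))]
  have hX : 0 < X := Real.exp_pos _
  calc C * X * ((1 + z.im ^ 2) * (1 + (k : ℝ) ^ 2))
      ≤ C * X * ((1 + z.im ^ 2) * (2 * (1 + z.re ^ 2) * (1 + (z.re + k) ^ 2))) := by gcongr
    _ = _ := by ring

lemma uu_summable_good (c d e f : ℂ) (h : 3 < (c + e).re) (h' : 3 < (d + f).re) (z : ℂ) :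
    Summable fun k : ℤ => uu c d e f (z + k) := by
  obtain ⟨C, hC0, hC⟩ := uu_shift_bound c d e f h h'
  exact Summable.of_norm_bounded (summable_int_inv.mul_left _) (hC z)

lemma uu_diff (c d e f : ℂ) : Differentiable ℂ (uu c d e f) := by
  unfold uu
  have := rg_diff
  fun_prop

lemma uu_const (c d e f : ℂ) (h : 3 < (c + e).re) (h' : 3 < (d + f).re) (x y : ℂ) :
    ∑' k : ℤ, uu c d e f (x + k) = ∑' k : ℤ, uu c d e f (y + k) := by
  obtain ⟨C, hC0, hC⟩ := uu_shift_bound c d e f h h'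
  refine periodic_const (fun z => ∑' k : ℤ, uu c d e f (z + k)) ?_ ?_ ?_ x y
  · intro z0
    set ρ := ‖z0‖ + 1
    have hd : DifferentiableOn ℂ (fun z => ∑' k : ℤ, uu c d e f (z + k)) (Metric.ball 0 ρ) := by
      refine differentiableOn_tsum_of_summable_norm
        (u := fun k : ℤ => C * (1 + ρ ^ 2) * Real.exp (2 * Real.pi * ρ) / 1 *
          (1 / (1 + (k : ℝ) ^ 2))) (summable_int_inv.mul_left _) ?_ Metric.isOpen_ball ?_
      · intro k
        have := uu_diff c d e f
        exact Differentiable.differentiableOn (by fun_prop)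
      · intro k z hz
        rw [mem_ball_zero_iff] at hz
        refine (hC z k).trans ?_
        have i1 : |z.im| ≤ ρ := (Complex.abs_im_le_norm z).trans hz.le
        have i2 : z.re ^ 2 ≤ ρ ^ 2 := sq_le_sq' (by
          linarith [neg_abs_le z.re, Complex.abs_re_le_norm z])
          ((Complex.re_le_norm z).trans hz.le)
        have i3 : 1 ≤ 1 + z.im ^ 2 := by nlinarith [sq_nonneg z.im]
        gcongr
    exact hd.differentiableAt (Metric.isOpen_ball.mem_nhds (by
      rw [mem_ball_zero_iff]; simp [ρ]))
  · intro z
    rw [← (Equiv.addRight (1 : ℤ)).tsum_eq (fun k : ℤ => uu c d e f (z + k))]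
    refine tsum_congr fun k => ?_
    congr 1
    simp; ring
  · intro ε hε
    set S := ∑' k : ℤ, 1 / (1 + (k : ℝ) ^ 2) with hS
    have hS0 : 0 ≤ S := tsum_nonneg fun k => by positivity
    refine ⟨max 1 (C * 2 * S / ε), fun z hz => ?_⟩
    have hz1 : 1 ≤ |z.im| := le_of_max_le_left hz
    have hz2 : C * 2 * S / ε ≤ |z.im| := le_of_max_le_right hz
    rw [div_le_iff₀ hε] at hz2
    set t : ℂ := z + ((-⌊z.re⌋ : ℤ) : ℂ) with ht
    have e1 : ∑' k : ℤ, uu c d e f (z + k) = ∑' k : ℤ, uu c d e f (t + k) := by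
      rw [← (Equiv.addRight (-⌊z.re⌋ : ℤ)).tsum_eq (fun k : ℤ => uu c d e f (z + k))]
      refine tsum_congr fun k => ?_
      congr 1
      simp [ht]; ring
    have a1 : t.re = Int.fract z.re := by
      simp [ht, Int.fract, sub_eq_add_neg]
    have a2 : t.im = z.im := by simp [ht]
    have a3 : t.re ^ 2 ≤ 1 := by
      rw [a1]
      have := Int.fract_nonneg z.re
      have := Int.fract_lt_one z.re
      nlinarith
    rw [e1]
    have hb := tsum_of_norm_bounded (summable_int_inv.hasSum.mul_left
      (C * (1 + t.re ^ 2) * Real.exp (2 * Real.pi * |t.im|) / (1 + t.im ^ 2))) (hC t)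
    refine hb.trans ?_
    rw [← hS, a2, div_mul_eq_mul_div, div_le_iff₀ (by positivity)]
    set X := Real.exp (2 * Real.pi * |z.im|)
    have hX : 0 < X := Real.exp_pos _
    have hzz : |z.im| ≤ 1 + z.im ^ 2 := by
      rw [← sq_abs]; nlinarith
    calc C * (1 + t.re ^ 2) * X * S ≤ C * (1 + 1) * X * S := by gcongr
      _ = (C * 2 * S) * X := by ring
      _ ≤ (|z.im| * ε) * X := by gcongr
      _ ≤ ((1 + z.im ^ 2) * ε) * X := by gcongr
      _ = _ := by ring

lemma lim_zero (u v : ℕ → ℂ) (A : ℝ) (hA : ∀ n : ℕ, ‖v n‖ ≤ (A + n) * ‖u n‖) (hu : Summable u)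
    (L : ℂ) (hL : Tendsto v atTop (𝓝 L)) : L = 0 := by
  by_contra hne
  have hLp : 0 < ‖L‖ := norm_pos_iff.2 hne
  apply Real.not_summable_one_div_natCast
  refine Summable.of_norm_bounded_eventually_nat (hu.norm.mul_left (4 / ‖L‖)) ?_
  have h1 : ∀ᶠ n in atTop, ‖L‖ / 2 < ‖v n‖ := hL.norm.eventually_const_lt (by linarith)
  obtain ⟨N, hN⟩ := exists_nat_ge A
  filter_upwards [h1, eventually_ge_atTop (N + 1)] with n hn hnN
  have hn' : (N : ℝ) + 1 ≤ n := by exact_mod_cast hnN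
  have hn0 : (0 : ℝ) < n := by
    have : (0 : ℝ) ≤ N := Nat.cast_nonneg N
    linarith
  rw [Real.norm_of_nonneg (by positivity), div_mul_eq_mul_div, div_le_div_iff₀ hn0 hLp]
  have := hA n
  nlinarith [norm_nonneg (u n)]

lemma tele (V u : ℤ → ℂ) (α : ℂ) (hV : ∀ k, V k = (α + k) * u k) (hu : Summable u)
    (hW : Summable fun k => V (k + 1) - V k) : ∑' k, (V (k + 1) - V k) = 0 := by
  have i1 : Function.Injective (fun n : ℕ => (n : ℤ)) := Nat.cast_injective
  have i2 : Function.Injective (fun n : ℕ => -(n : ℤ)) := fun a b h => by simpa using h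
  have i3 : Function.Injective (fun n : ℕ => -((n : ℤ) + 1)) := fun a b h => by simpa using h
  obtain ⟨W, hWd⟩ : ∃ W : ℤ → ℂ, ∀ k, W k = V (k + 1) - V k := ⟨_, fun _ => rfl⟩
  simp only [← hWd] at hW ⊢
  have w1 : Summable fun n : ℕ => W n := hW.comp_injective i1
  have w2 : Summable fun n : ℕ => W (-((n : ℤ) + 1)) := hW.comp_injective i3
  rw [tsum_of_nat_of_neg_add_one w1 w2]
  have s1 := w1.hasSum.tendsto_sum_nat
  have s2 := w2.hasSum.tendsto_sum_nat
  have t1 : ∀ N : ℕ, ∑ n ∈ Finset.range N, W n = V N - V 0 := by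
    intro N
    have := Finset.sum_range_sub (fun n : ℕ => V n) N
    simpa [hWd] using this
  have t2 : ∀ N : ℕ, ∑ n ∈ Finset.range N, W (-((n : ℤ) + 1)) = V 0 - V (-(N : ℤ)) := by
    intro N
    have := Finset.sum_range_sub' (fun n : ℕ => V (-(n : ℤ))) N
    simp only [Nat.cast_zero, neg_zero] at this
    rw [← this]
    refine Finset.sum_congr rfl fun n _ => ?_
    simp [hWd]
  simp only [t1] at s1
  simp only [t2] at s2
  generalize (∑' n : ℕ, W n) = S1 at *
  generalize (∑' n : ℕ, W (-((n : ℤ) + 1))) = S2 at *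
  have l1 : S1 + V 0 = 0 := by
    refine lim_zero (fun n : ℕ => u n) (fun n : ℕ => V n) ‖α‖ ?_ (hu.comp_injective i1) _ ?_
    · intro n
      rw [hV, norm_mul]
      gcongr
      refine (norm_add_le _ _).trans ?_
      simp
    · simpa using s1.add_const (V 0)
  have l2 : V 0 - S2 = 0 := by
    refine lim_zero (fun n : ℕ => u (-(n : ℤ))) (fun n : ℕ => V (-(n : ℤ))) ‖α‖ ?_
      (hu.comp_injective i2) _ ?_
    · intro n
      rw [hV, norm_mul]
      gcongr
      refine (norm_add_le _ _).trans ?_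
      simp
    · simpa using s2.const_sub (V 0)
  linear_combination l1 - l2

lemma uu_rec (c d e f : ℂ) (h1 : Summable fun k : ℤ => uu c d e f k)
    (h2 : Summable fun k : ℤ => uu c (d + 1) e f k) :
    (c + d + e + f - 3) * ∑' k : ℤ, uu c d e f k =
      (d + e - 1) * (d + f - 1) * ∑' k : ℤ, uu c (d + 1) e f k := by
  set V : ℤ → ℂ := fun k => (c - 1 + k) * uu c d e f k with hV
  have key : ∀ k : ℤ, V (k + 1) - V k =
      (d + e - 1) * (d + f - 1) * uu c (d + 1) e f k - (c + d + e + f - 3) * uu c d e f k := by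
    intro k
    have r1 := rg_rec (c + k)
    have r2 := rg_rec (d + k)
    have r3 := rg_rec (e - (k + 1))
    have r4 := rg_rec (f - (k + 1))
    rw [show e - ((k : ℂ) + 1) + 1 = e - k by ring] at r3
    rw [show f - ((k : ℂ) + 1) + 1 = f - k by ring] at r4
    simp only [hV, uu]
    push_cast
    rw [show c + ((k : ℂ) + 1) = c + k + 1 by ring, show d + ((k : ℂ) + 1) = d + k + 1 by ring,
      show d + 1 + (k : ℂ) = d + k + 1 by ring, r3, r4, r2, r1]
    ring
  have hW : Summable fun k : ℤ => V (k + 1) - V k := by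
    simp only [key]
    exact (h2.mul_left _).sub (h1.mul_left _)
  have := tele V (fun k => uu c d e f k) (c - 1) (fun k => rfl) h1 hW
  simp only [key] at this
  rw [(h2.mul_left _).tsum_sub (h1.mul_left _), tsum_mul_left, tsum_mul_left] at this
  linear_combination -this

lemma rg_add (c : ℂ) (n : ℕ) : rg c = (∏ j ∈ Finset.range n, (c + j)) * rg (c + n) := by
  induction n with
  | zero => simp
  | succ n ih =>
    rw [Finset.prod_range_succ, ih, rg_rec (c + n)]
    push_cast
    rw [add_assoc c]; ring

lemma rg_sub (e : ℂ) (n : ℕ) : rg (e - n) = (∏ j ∈ Finset.range n, (e - 1 - j)) * rg e := by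
  induction n with
  | zero => simp
  | succ n ih =>
    rw [Finset.prod_range_succ, rg_rec]
    push_cast
    rw [show e - ((n : ℂ) + 1) + 1 = e - n by ring, ih]
    ring

lemma rg_ne (c : ℂ) (hc : ∀ m : ℕ, c ≠ -m) : rg c ≠ 0 := inv_ne_zero (Complex.Gamma_ne_zero hc)

lemma prod_ne (c : ℂ) (hc : ∀ m : ℕ, c ≠ -m) (n : ℕ) : ∏ j ∈ Finset.range n, (c + j) ≠ 0 := by
  rw [Finset.prod_ne_zero_iff]
  intro j _ h
  exact hc j (by linear_combination h)

lemma rg_nat_bound (c : ℂ) (hc : ∀ m : ℕ, c ≠ -m) :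
    ∃ C : ℝ, 0 ≤ C ∧ ∀ᶠ n : ℕ in atTop,
      ‖rg (c + (n + 1 : ℕ))‖ ≤ C * ((n : ℝ) ^ (-c.re) / (n.factorial : ℝ)) := by
  have h1 := (Complex.GammaSeq_tendsto_Gamma c).norm.eventually_le_const
    (show ‖Complex.Gamma c‖ < ‖Complex.Gamma c‖ + 1 by linarith)
  refine ⟨‖rg c‖ * (‖Complex.Gamma c‖ + 1), by positivity, ?_⟩
  filter_upwards [h1, eventually_gt_atTop 0] with n hn hn0
  have hn0' : (0 : ℝ) < n := by exact_mod_cast hn0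
  have hp := prod_ne c hc (n + 1)
  have e0 : rg (c + (n + 1 : ℕ)) = rg c / ∏ j ∈ Finset.range (n + 1), (c + j) := by
    rw [rg_add c (n + 1)]; field_simp
  have hf : (0 : ℝ) < n.factorial := by exact_mod_cast n.factorial_pos
  rw [e0, norm_div]
  unfold Complex.GammaSeq at hn
  rw [norm_div, norm_mul, Complex.norm_natCast_cpow_of_pos hn0, Complex.norm_natCast,
    div_le_iff₀ (norm_pos_iff.2 hp)] at hn
  rw [div_le_iff₀ (norm_pos_iff.2 hp), Real.rpow_neg hn0'.le]
  have hx : 0 < (n : ℝ) ^ c.re := Real.rpow_pos_of_pos hn0' _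
  calc ‖rg c‖ = ‖rg c‖ * ((n : ℝ) ^ c.re * n.factorial) * (((n : ℝ) ^ c.re)⁻¹ / n.factorial) := by
        field_simp
    _ ≤ ‖rg c‖ * ((‖Complex.Gamma c‖ + 1) * ‖∏ j ∈ Finset.range (n + 1), (c + j)‖) *
        (((n : ℝ) ^ c.re)⁻¹ / n.factorial) := by gcongr
    _ = _ := by ring

lemma rg_neg_bound (e : ℂ) :
    ∃ C : ℝ, 0 ≤ C ∧ ∀ᶠ n : ℕ in atTop,
      ‖rg (e - (n + 1 : ℕ))‖ ≤ C * ((n : ℝ) ^ (1 - e.re) * (n.factorial : ℝ)) := by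
  have e0 : ∀ n : ℕ, ‖rg (e - (n + 1 : ℕ))‖ = ‖∏ j ∈ Finset.range (n + 1), (1 - e + j)‖ * ‖rg e‖ := by
    intro n
    rw [rg_sub, norm_mul, norm_prod, norm_prod]
    congr 1
    refine Finset.prod_congr rfl fun j _ => ?_
    rw [← norm_neg]; congr 1; ring
  by_cases hg : Complex.Gamma (1 - e) = 0
  · obtain ⟨m, hm⟩ := (Complex.Gamma_eq_zero_iff _).1 hg
    refine ⟨0, le_rfl, ?_⟩
    filter_upwards [eventually_ge_atTop m] with n hn
    rw [e0, Finset.prod_eq_zero (i := m) (Finset.mem_range.2 (by omega)) (by rw [hm]; ring)]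
    simp
  · have hgp : 0 < ‖Complex.Gamma (1 - e)‖ := norm_pos_iff.2 hg
    have h1 := (Complex.GammaSeq_tendsto_Gamma (1 - e)).norm.eventually_const_le
      (show ‖Complex.Gamma (1 - e)‖ / 2 < ‖Complex.Gamma (1 - e)‖ by linarith)
    refine ⟨2 / ‖Complex.Gamma (1 - e)‖ * ‖rg e‖, by positivity, ?_⟩
    filter_upwards [h1, eventually_gt_atTop 0] with n hn hn0
    rw [e0]
    by_cases hp : ∏ j ∈ Finset.range (n + 1), (1 - e + j) = 0
    · rw [hp]; simp; positivity
    unfold Complex.GammaSeq at hn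
    rw [norm_div, norm_mul, Complex.norm_natCast_cpow_of_pos hn0, Complex.norm_natCast,
      le_div_iff₀ (norm_pos_iff.2 hp)] at hn
    simp only [Complex.sub_re, Complex.one_re] at hn
    set P := ‖∏ j ∈ Finset.range (n + 1), (1 - e + j)‖
    calc P * ‖rg e‖ = 2 / ‖Complex.Gamma (1 - e)‖ * ‖rg e‖ * (‖Complex.Gamma (1 - e)‖ / 2 * P) := by
          field_simp
      _ ≤ _ := by gcongr

lemma uu_summable_nat (c d e f : ℂ) (hc : ∀ m : ℕ, c ≠ -m) (hd : ∀ m : ℕ, d ≠ -m)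
    (h : 3 < (c + d + e + f).re) : Summable fun n : ℕ => uu c d e f n := by
  rw [← summable_nat_add_iff 1]
  obtain ⟨C1, p1, h1⟩ := rg_nat_bound c hc
  obtain ⟨C2, p2, h2⟩ := rg_nat_bound d hd
  obtain ⟨C3, p3, h3⟩ := rg_neg_bound e
  obtain ⟨C4, p4, h4⟩ := rg_neg_bound f
  have hs := (Real.summable_nat_rpow (p := -c.re + -d.re + (1 - e.re) + (1 - f.re))).2 (by
    simp at h; linarith)
  refine Summable.of_norm_bounded_eventually_nat (hs.mul_left (C1 * C2 * C3 * C4)) ?_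
  filter_upwards [h1, h2, h3, h4, eventually_gt_atTop 0] with n h1 h2 h3 h4 hn0
  have hn0' : (0 : ℝ) < n := by exact_mod_cast hn0
  have hf : (0 : ℝ) < n.factorial := by exact_mod_cast n.factorial_pos
  unfold uu
  rw [norm_mul, norm_mul, norm_mul, Real.rpow_add hn0', Real.rpow_add hn0', Real.rpow_add hn0']
  calc _ ≤ (C1 * ((n : ℝ) ^ (-c.re) / (n.factorial : ℝ))) *
        (C2 * ((n : ℝ) ^ (-d.re) / (n.factorial : ℝ))) *
        (C3 * ((n : ℝ) ^ (1 - e.re) * (n.factorial : ℝ))) *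
        (C4 * ((n : ℝ) ^ (1 - f.re) * (n.factorial : ℝ))) := by gcongr
    _ = _ := by field_simp

lemma uu_summable (c d e f : ℂ) (hc : ∀ m : ℕ, c ≠ -m) (hd : ∀ m : ℕ, d ≠ -m)
    (he : ∀ m : ℕ, e ≠ -m) (hf : ∀ m : ℕ, f ≠ -m)
    (h : 3 < (c + d + e + f).re) : Summable fun k : ℤ => uu c d e f k := by
  refine Summable.of_nat_of_neg ?_ ?_
  · simpa using uu_summable_nat c d e f hc hd h
  · have := uu_summable_nat e f c d he hf (by simp at h ⊢; linarith)
    refine this.congr fun n => ?_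
    simp only [uu]; push_cast
    simp only [sub_neg_eq_add, ← sub_eq_add_neg]
    ring

lemma gamma_ratio (x y p q : ℂ) (hx : 0 < x.re) (hy : 0 < y.re) (hp : 0 < p.re) (hq : 0 < q.re)
    (h : x + y = p + q) :
    Tendsto (fun n : ℕ => rg (p + n) * rg (q + n) / (rg (x + n) * rg (y + n))) atTop (𝓝 1) := by
  rw [← tendsto_add_atTop_iff_nat 1]
  have gx := Complex.Gamma_ne_zero_of_re_pos hx
  have gy := Complex.Gamma_ne_zero_of_re_pos hy
  have gp := Complex.Gamma_ne_zero_of_re_pos hp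
  have gq := Complex.Gamma_ne_zero_of_re_pos hq
  have np : ∀ x : ℂ, 0 < x.re → ∀ m : ℕ, x ≠ -m := by
    intro x hx m h
    rw [h] at hx
    simp at hx
    have : (0 : ℝ) ≤ m := Nat.cast_nonneg m
    linarith
  have hlim : Tendsto (fun n : ℕ => rg p * rg q / (rg x * rg y) *
      ((Complex.GammaSeq p n * Complex.GammaSeq q n) /
        (Complex.GammaSeq x n * Complex.GammaSeq y n))) atTop (𝓝 1) := by
    have := (((Complex.GammaSeq_tendsto_Gamma p).mul (Complex.GammaSeq_tendsto_Gamma q)).div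
      ((Complex.GammaSeq_tendsto_Gamma x).mul (Complex.GammaSeq_tendsto_Gamma y))
      (mul_ne_zero gx gy)).const_mul (rg p * rg q / (rg x * rg y))
    have e1 : rg p * rg q / (rg x * rg y) *
        (Complex.Gamma p * Complex.Gamma q / (Complex.Gamma x * Complex.Gamma y)) = 1 := by
      unfold rg; field_simp
    rw [e1] at this
    exact this
  refine hlim.congr' ?_
  filter_upwards [eventually_gt_atTop 0] with n hn0
  have key : ∀ x : ℂ, 0 < x.re → rg (x + (n + 1 : ℕ)) =
      rg x * Complex.GammaSeq x n / ((n : ℂ) ^ x * n.factorial) := by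
    intro x hx
    have hP := prod_ne x (np x hx) (n + 1)
    have hn : (n : ℂ) ^ x ≠ 0 := by
      rw [Complex.cpow_ne_zero_iff]; left; exact_mod_cast hn0.ne'
    have hfac : (n.factorial : ℂ) ≠ 0 := by exact_mod_cast n.factorial_ne_zero
    rw [rg_add x (n + 1)]
    unfold Complex.GammaSeq
    field_simp
  have hn : (n : ℂ) ≠ 0 := by exact_mod_cast hn0.ne'
  have hn' : ∀ x : ℂ, (n : ℂ) ^ x ≠ 0 := fun x => by
    rw [Complex.cpow_ne_zero_iff]; left; exact hn
  have hfac : (n.factorial : ℂ) ≠ 0 := by exact_mod_cast n.factorial_ne_zero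
  have hpow : (n : ℂ) ^ x * (n : ℂ) ^ y = (n : ℂ) ^ p * (n : ℂ) ^ q := by
    rw [← Complex.cpow_add _ _ hn, ← Complex.cpow_add _ _ hn, h]
  rw [key x hx, key y hy, key p hp, key q hq]
  have e1 : ∀ (A B P Q F : ℂ), A / (P * F) * (B / (Q * F)) = A * B / ((P * Q) * (F * F)) := by
    intro A B P Q F
    rw [div_mul_div_comm]; congr 1; ring
  rw [e1, e1, hpow, div_div_div_cancel_right₀ (mul_ne_zero (mul_ne_zero (hn' _) (hn' _))
    (mul_ne_zero hfac hfac)), div_mul_div_comm]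
  congr 1 <;> ring

lemma ne_neg_nat_of_re_pos (x : ℂ) (hx : 0 < x.re) (m : ℕ) : x ≠ -m := by
  intro h
  rw [h] at hx
  simp at hx
  have : (0 : ℝ) ≤ m := Nat.cast_nonneg m
  linarith

lemma gamma_quot (D : ℂ) (hD : 0 < D.re) (m : ℕ) :
    Complex.Gamma D * rg (D + m) = (∏ j ∈ Finset.range m, (D + j))⁻¹ := by
  have h1 := prod_ne D (ne_neg_nat_of_re_pos D hD) m
  have h2 : Complex.Gamma D * rg D = 1 :=
    mul_inv_cancel₀ (Complex.Gamma_ne_zero_of_re_pos hD)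
  rw [rg_add D m] at h2
  refine eq_inv_of_mul_eq_one_left ?_
  rw [← h2]; ring

lemma rg_nonpos (k : ℤ) (hk : k < 0) : rg (1 + k) = 0 := by
  unfold rg
  rw [inv_eq_zero, Complex.Gamma_eq_zero_iff]
  refine ⟨(-k - 1).toNat, ?_⟩
  have : (((-k - 1).toNat : ℤ) : ℂ) = ((-k - 1 : ℤ) : ℂ) := by
    rw [Int.toNat_of_nonneg (by omega)]
  rw [Int.cast_natCast] at this
  rw [this]; push_cast; ring

lemma gauss_lim (d e f : ℂ) (he : 3 < (1 + e).re) (hdf : 3 < (d + f).re) (hd : 1 ≤ d.re) :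
    Tendsto (fun n : ℕ => Complex.Gamma (d + n) * ∑' k : ℤ, uu 1 (d + n) e f k) atTop
      (𝓝 (rg e * rg f)) := by
  have hS : Summable fun k : ℤ => uu 1 d e f k := by
    simpa using uu_summable_good 1 d e f he hdf 0
  have e1 : rg e * rg f = ∑' k : ℤ, (if k = 0 then rg e * rg f else 0) := by
    rw [tsum_ite_eq]
  simp only [← tsum_mul_left]
  rw [e1]
  have hre : ∀ n j : ℕ, (1 : ℝ) + n ≤ ‖d + n + j‖ := by
    intro n j
    refine le_trans ?_ (Complex.re_le_norm _)
    simp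
    have : (0 : ℝ) ≤ j := Nat.cast_nonneg j
    linarith
  have hform : ∀ n m : ℕ, Complex.Gamma (d + n) * uu 1 (d + n) e f (m : ℤ) =
      (∏ j ∈ Finset.range m, (d + n + j))⁻¹ * (rg (1 + m) * rg (e - m) * rg (f - m)) := by
    intro n m
    rw [← gamma_quot (d + n) (by
      simp
      have : (0 : ℝ) ≤ n := Nat.cast_nonneg n
      linarith) m]
    simp only [uu, Int.cast_natCast]; ring
  have hneg : ∀ (D : ℂ) (k : ℤ), k < 0 → uu 1 D e f k = 0 := by
    intro D k hk
    simp [uu, rg_nonpos k hk]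
  refine tendsto_tsum_of_dominated_convergence
    (bound := fun k : ℤ => ‖Complex.Gamma d * uu 1 d e f k‖) (hS.mul_left _).norm ?_ ?_
  · intro k
    rcases lt_or_ge k 0 with hk | hk
    · simp [hneg _ k hk, hk.ne]
    obtain ⟨m, rfl⟩ := Int.eq_ofNat_of_zero_le hk
    simp only [hform]
    rcases m with _ | m
    · simp [rg]
    · rw [if_neg (by omega)]
      have hz : Tendsto (fun n : ℕ => (∏ j ∈ Finset.range (m + 1), (d + n + j))⁻¹) atTop (𝓝 0) := by
        refine squeeze_zero_norm (a := fun n : ℕ => 1 / ((n : ℝ) + 1)) ?_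
          tendsto_one_div_add_atTop_nhds_zero_nat
        intro n
        rw [norm_inv, ← one_div, Finset.prod_range_succ, norm_mul, norm_prod]
        have hn : (0 : ℝ) ≤ n := Nat.cast_nonneg n
        have h1 : (1 : ℝ) ≤ ∏ j ∈ Finset.range m, ‖d + n + j‖ := by
          have := Finset.prod_le_prod (s := Finset.range m) (f := fun _ => (1 : ℝ))
            (g := fun j : ℕ => ‖d + n + j‖) (fun _ _ => zero_le_one) (fun j _ => by
              have := hre n j; linarith)
          simpa using this
        have h2 := hre n m
        gcongr
        nlinarith
      simpa using hz.mul_const (rg (1 + (m + 1 : ℕ)) * rg (e - (m + 1 : ℕ)) * rg (f - (m + 1 : ℕ)))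
  · refine Eventually.of_forall fun n k => ?_
    rcases lt_or_ge k 0 with hk | hk
    · simp [hneg _ k hk]
    obtain ⟨m, rfl⟩ := Int.eq_ofNat_of_zero_le hk
    have h0 := hform 0 m
    simp only [Nat.cast_zero, add_zero] at h0
    rw [hform, h0]
    generalize rg (1 + (m : ℂ)) * rg (e - m) * rg (f - m) = T
    rw [norm_mul, norm_mul, norm_inv, norm_inv, norm_prod, norm_prod]
    have hpos : ∀ j : ℕ, 0 < ‖d + j‖ := by
      intro j
      have := hre 0 j
      simp only [Nat.cast_zero, add_zero] at this
      linarith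
    gcongr with j hj
    · exact Finset.prod_pos fun j _ => hpos j
    · rw [← sq_le_sq₀ (norm_nonneg _) (norm_nonneg _), Complex.sq_norm, Complex.sq_norm,
        Complex.normSq_apply, Complex.normSq_apply]
      simp
      have hn : (0 : ℝ) ≤ n := Nat.cast_nonneg n
      have hj : (0 : ℝ) ≤ j := Nat.cast_nonneg j
      nlinarith

lemma gauss (d e f : ℂ) (he : 3 < (1 + e).re) (hdf : 3 < (d + f).re) (hd : 1 ≤ d.re) :
    ∑' k : ℤ, uu 1 d e f k =
      Complex.Gamma (d + e + f - 2) * rg e * rg f * rg (d + e - 1) * rg (d + f - 1) := by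
  have hcast : ∀ n : ℕ, (0 : ℝ) ≤ n := fun n => Nat.cast_nonneg n
  have hee : 2 < e.re := by simp at he; linarith
  have hff : 3 < d.re + f.re := by simpa using hdf
  have hx : 0 < (d + e - 1).re := by simp; linarith
  have hy : 0 < (d + f - 1).re := by simp; linarith
  have hs : 0 < (d + e + f - 2).re := by simp; linarith
  have hsum : ∀ n : ℕ, Summable fun k : ℤ => uu 1 (d + n) e f k := by
    intro n
    simpa using uu_summable_good 1 (d + n) e f he (by simp; linarith [hcast n]) 0
  have rgn : ∀ (x : ℂ) (n : ℕ), 0 < x.re → rg (x + n) ≠ 0 := by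
    intro x n hx
    exact rg_ne _ (ne_neg_nat_of_re_pos _ (by simp; linarith [hcast n]))
  set X : ℕ → ℂ := fun n => ∑' k : ℤ, uu 1 (d + n) e f k with hX
  set Z : ℕ → ℂ := fun n => X n * rg (d + e + f - 2 + n) / (rg (d + e - 1 + n) * rg (d + f - 1 + n))
    with hZ
  have hZs : ∀ n, Z (n + 1) = Z n := by
    intro n
    have r := uu_rec 1 (d + n) e f (hsum n) (by
      have := hsum (n + 1)
      push_cast at this
      simpa only [add_assoc] using this)
    have hXn : X (n + 1) = ∑' k : ℤ, uu 1 (d + n + 1) e f k := by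
      simp only [hX]; push_cast; simp only [add_assoc]
    rw [← hXn, show (∑' k : ℤ, uu 1 (d + n) e f k) = X n from rfl] at r
    have q1 := rg_rec (d + e + f - 2 + n)
    have q2 := rg_rec (d + e - 1 + n)
    have q3 := rg_rec (d + f - 1 + n)
    have n1 := rgn _ n hx
    have n2 := rgn _ n hy
    have n3 := rgn _ (n + 1) hx
    have n4 := rgn _ (n + 1) hy
    simp only [hZ]
    push_cast at n3 n4 ⊢
    simp only [← add_assoc] at n3 n4 ⊢
    rw [div_eq_div_iff (mul_ne_zero n3 n4) (mul_ne_zero n1 n2), q1, q2, q3]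
    linear_combination (-rg (d + e + f - 2 + n + 1) * rg (d + e - 1 + n + 1) *
      rg (d + f - 1 + n + 1)) * r
  have hZc : ∀ n, Z n = Z 0 := by
    intro n
    induction n with
    | zero => rfl
    | succ n ih => rw [hZs, ih]
  have l1 := (gauss_lim d e f he hdf hd).mul (gamma_ratio (d + e - 1) (d + f - 1) (d + e + f - 2) d
    hx hy hs (by linarith) (by ring))
  have l2 : Tendsto (fun _ : ℕ => Z 0) atTop (𝓝 (rg e * rg f * 1)) := by
    refine l1.congr fun n => ?_
    rw [← hZc n]
    simp only [hZ]
    have : Complex.Gamma (d + n) * rg (d + n) = 1 :=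
      mul_inv_cancel₀ (Complex.Gamma_ne_zero_of_re_pos (by simp; linarith [hcast n]))
    change Complex.Gamma (d + n) * X n * _ = _
    linear_combination (X n * rg (d + e + f - 2 + n) /
      (rg (d + e - 1 + n) * rg (d + f - 1 + n))) * this
  have hfin := tendsto_nhds_unique tendsto_const_nhds l2
  simp only [hZ, hX, Nat.cast_zero, add_zero, mul_one] at hfin
  have n1 := rgn _ 0 hx
  have n2 := rgn _ 0 hy
  simp only [Nat.cast_zero, add_zero] at n1 n2
  have g : Complex.Gamma (d + e + f - 2) * rg (d + e + f - 2) = 1 :=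
      mul_inv_cancel₀ (Complex.Gamma_ne_zero_of_re_pos hs)
  rw [div_eq_iff (mul_ne_zero n1 n2)] at hfin
  linear_combination Complex.Gamma (d + e + f - 2) * hfin - (∑' k : ℤ, uu 1 d e f k) * g

/-- right-hand side -/
noncomputable def RR (c d e f : ℂ) : ℂ :=
  Complex.Gamma (c + d + e + f - 3) * rg (c + e - 1) * rg (c + f - 1) * rg (d + e - 1) *
    rg (d + f - 1)

lemma main_good (c d e f : ℂ) (h : 3 < (c + e).re) (h' : 3 < (d + f).re) (hcd : c.re ≤ d.re) :
    ∑' k : ℤ, uu c d e f k = RR c d e f := by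
  have h1 := uu_const c d e f h h' 0 (1 - c)
  simp only [zero_add] at h1
  rw [h1]
  have h2 : ∀ k : ℤ, uu c d e f (1 - c + k) = uu 1 (d + 1 - c) (e + c - 1) (f + c - 1) k := by
    intro k
    unfold uu
    congr 1
    · congr 1
      · congr 1
        · congr 1; ring
        · congr 1; ring
      · congr 1; ring
    · congr 1; ring
  simp only [h2]
  rw [gauss _ _ _ (by simp at h ⊢; linarith) (by simp at h' ⊢; linarith) (by simp; linarith)]
  unfold RR
  rw [show d + 1 - c + (e + c - 1) + (f + c - 1) - 2 = c + d + e + f - 3 by ring,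
    show d + 1 - c + (e + c - 1) - 1 = d + e - 1 by ring,
    show d + 1 - c + (f + c - 1) - 1 = d + f - 1 by ring, add_comm e c, add_comm f c]

lemma uu_swap (c d e f z : ℂ) : uu c d e f z = uu d c e f z := by unfold uu; ring

lemma RR_swap (c d e f : ℂ) : RR c d e f = RR d c e f := by
  unfold RR; rw [add_comm c d]; ring

lemma main_step (c d e f : ℂ) (hc : ∀ m : ℕ, c ≠ -m) (hd : ∀ m : ℕ, d ≠ -m)
    (he : ∀ m : ℕ, e ≠ -m) (hf : ∀ m : ℕ, f ≠ -m)
    (h : 3 < (c + d + e + f).re)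
    (hM : ∑' k : ℤ, uu c (d + 1) e f k = RR c (d + 1) e f) :
    ∑' k : ℤ, uu c d e f k = RR c d e f := by
  have r := uu_rec c d e f (uu_summable c d e f hc hd he hf h)
    (uu_summable c (d + 1) e f hc (fun m hm => hd (m + 1) (by
      push_cast; linear_combination hm)) he hf (by simp at h ⊢; linarith))
  have hs : c + d + e + f - 3 ≠ 0 := by
    intro h0
    have := congrArg Complex.re h0
    simp at this h
    linarith
  rw [hM] at r
  apply mul_left_cancel₀ hs
  rw [r]
  unfold RR
  rw [show c + (d + 1) + e + f - 3 = (c + d + e + f - 3) + 1 by ring, Complex.Gamma_add_one _ hs,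
    rg_rec (d + e - 1), rg_rec (d + f - 1), show d + 1 + e - 1 = d + e - 1 + 1 by ring,
    show d + 1 + f - 1 = d + f - 1 + 1 by ring]
  ring

lemma main_steps (c e f : ℂ) (hc : ∀ m : ℕ, c ≠ -m)
    (he : ∀ m : ℕ, e ≠ -m) (hf : ∀ m : ℕ, f ≠ -m) (n : ℕ) : ∀ (d : ℂ) (_ : ∀ m : ℕ, d ≠ -m)
    (_ : 3 < (c + d + e + f).re)
    (_ : ∑' k : ℤ, uu c (d + n) e f k = RR c (d + n) e f),
    ∑' k : ℤ, uu c d e f k = RR c d e f := by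
  induction n with
  | zero => intro d _ _ hM; simpa using hM
  | succ n ih =>
    intro d hd h hM
    refine main_step c d e f hc hd he hf h (ih (d + 1) (fun m hm => hd (m + 1) (by
      push_cast; linear_combination hm)) (by simp at h ⊢; linarith) ?_)
    rw [show d + 1 + (n : ℂ) = d + (n + 1 : ℕ) by push_cast; ring]
    exact hM

lemma main_all (c d e f : ℂ) (hc : ∀ m : ℕ, c ≠ -m) (hd : ∀ m : ℕ, d ≠ -m)
    (he : ∀ m : ℕ, e ≠ -m) (hf : ∀ m : ℕ, f ≠ -m) (h : 3 < (c + d + e + f).re) :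
    ∑' k : ℤ, uu c d e f k = RR c d e f := by
  obtain ⟨N, hN⟩ := exists_nat_gt (3 - (c + e).re)
  obtain ⟨M, hM⟩ := exists_nat_gt (max (3 - (d + f).re) (c.re + N - d.re))
  have hM1 := (le_max_left _ _).trans_lt hM
  have hM2 := (le_max_right _ _).trans_lt hM
  have hN0 : (0 : ℝ) ≤ N := Nat.cast_nonneg N
  have g1 := main_good (c + N) (d + M) e f (by simp at hN ⊢; linarith) (by simp at hM1 ⊢; linarith)
    (by simp; linarith)
  have g2 := main_steps (c + N) e f (fun m hm => hc (m + N) (by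
      push_cast; linear_combination hm)) he hf M d hd (by simp at h ⊢; linarith) g1
  simp only [uu_swap _ d, RR_swap _ d] at g2
  have g3 := main_steps d e f hd he hf N c hc (by simp at h ⊢; linarith) g2
  simpa only [uu_swap d, RR_swap d] using g3

lemma poch_inv (c : ℂ) (hc : ∀ m : ℤ, c ≠ m) (k : ℤ) :
    (poch c k)⁻¹ = Complex.Gamma c * rg (c + k) := by
  have hc' : ∀ m : ℕ, c ≠ -m := fun m h => hc (-m) (by push_cast; exact h)
  have hg : Complex.Gamma c * rg c = 1 := mul_inv_cancel₀ (Complex.Gamma_ne_zero hc')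
  unfold poch
  split_ifs with hk
  · obtain ⟨n, rfl⟩ := Int.eq_ofNat_of_zero_le hk
    have hp := prod_ne c hc' n
    simp only [Int.toNat_natCast, Int.cast_natCast]
    rw [rg_add c n] at hg
    refine inv_eq_of_mul_eq_one_right ?_
    rw [← hg]; ring
  · obtain ⟨n, hn⟩ := Int.eq_ofNat_of_zero_le (show 0 ≤ -k by omega)
    obtain rfl : k = -(n : ℤ) := by omega
    simp only [neg_neg, Int.toNat_natCast, inv_inv]
    push_cast
    rw [← sub_eq_add_neg, rg_sub]
    linear_combination (-∏ j ∈ Finset.range n, (c - 1 - j)) * hg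

lemma poch_eq (a : ℂ) (ha : ∀ m : ℤ, 0 < m → a ≠ m) (k : ℤ) :
    poch a k = (-1) ^ k * (Complex.Gamma (1 - a) * rg (1 - a - k)) := by
  have ha' : ∀ m : ℕ, 1 - a ≠ -m := fun m h => ha (m + 1) (by omega) (by
    push_cast; linear_combination -h)
  have hg : Complex.Gamma (1 - a) * rg (1 - a) = 1 := mul_inv_cancel₀ (Complex.Gamma_ne_zero ha')
  have hsq : ∀ n : ℕ, ((-1 : ℂ) ^ n) * (-1) ^ n = 1 := fun n => by
    rw [← mul_pow]; simp
  unfold poch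
  split_ifs with hk
  · obtain ⟨n, rfl⟩ := Int.eq_ofNat_of_zero_le hk
    simp only [Int.toNat_natCast, Int.cast_natCast, zpow_natCast]
    have : ∏ j ∈ Finset.range n, (1 - a - 1 - (j : ℂ)) =
        (-1) ^ n * ∏ j ∈ Finset.range n, (a + (j : ℂ)) := by
      rw [← Finset.card_range n, ← Finset.prod_const, Finset.card_range, ← Finset.prod_mul_distrib]
      exact Finset.prod_congr rfl fun j _ => by ring
    rw [rg_sub, this]
    linear_combination (-∏ j ∈ Finset.range n, (a + (j : ℂ))) * hg -
      (∏ j ∈ Finset.range n, (a + (j : ℂ))) * Complex.Gamma (1 - a) * rg (1 - a) * hsq n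
  · obtain ⟨n, hn⟩ := Int.eq_ofNat_of_zero_le (show 0 ≤ -k by omega)
    obtain rfl : k = -(n : ℤ) := by omega
    have hp := prod_ne (1 - a) ha' n
    have : ∏ j ∈ Finset.range n, (1 - a + (j : ℂ)) =
        (-1) ^ n * ∏ j ∈ Finset.range n, (a - 1 - (j : ℂ)) := by
      rw [← Finset.card_range n, ← Finset.prod_const, Finset.card_range, ← Finset.prod_mul_distrib]
      exact Finset.prod_congr rfl fun j _ => by ring
    have hp2 : ∏ j ∈ Finset.range n, (a - 1 - (j : ℂ)) ≠ 0 := by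
      intro h0; rw [this, h0, mul_zero] at hp; exact hp rfl
    rw [rg_add _ n, this] at hg
    simp only [neg_neg, Int.toNat_natCast, zpow_neg, zpow_natCast]
    push_cast
    refine inv_eq_of_mul_eq_one_right ?_
    rw [sub_neg_eq_add, ← inv_pow, show (-1 : ℂ)⁻¹ = -1 by norm_num]
    linear_combination hg

/-- Dougall's `₂H₂` summation. -/
theorem dougall_2H2 (a b c d : ℂ)
    (hc : ∀ m : ℤ, c ≠ (m : ℂ)) (hd : ∀ m : ℤ, d ≠ (m : ℂ))
    (ha : ∀ m : ℤ, 0 < m → a ≠ (m : ℂ)) (hb : ∀ m : ℤ, 0 < m → b ≠ (m : ℂ))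
    (hre : 0 < (c + d - a - b - 1).re) :
    (Summable fun k : ℤ => ‖poch a k * poch b k / (poch c k * poch d k)‖) ∧
      (∑' k : ℤ, poch a k * poch b k / (poch c k * poch d k)) =
        Complex.Gamma (1 - a) * Complex.Gamma (1 - b) * Complex.Gamma c * Complex.Gamma d *
            Complex.Gamma (c + d - a - b - 1) /
          (Complex.Gamma (c - a) * Complex.Gamma (c - b) * Complex.Gamma (d - a) *
            Complex.Gamma (d - b)) := by

  have hc' : ∀ m : ℕ, c ≠ -m := fun m h => hc (-m) (by push_cast; exact h)
  have hd' : ∀ m : ℕ, d ≠ -m := fun m h => hd (-m) (by push_cast; exact h)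
  have ha' : ∀ m : ℕ, 1 - a ≠ -m := fun m h => ha (m + 1) (by omega) (by
    push_cast; linear_combination -h)
  have hb' : ∀ m : ℕ, 1 - b ≠ -m := fun m h => hb (m + 1) (by omega) (by
    push_cast; linear_combination -h)
  have hre' : 3 < (c + d + (1 - a) + (1 - b)).re := by
    simp at hre ⊢; linarith
  have hterm : ∀ k : ℤ, poch a k * poch b k / (poch c k * poch d k) =
      Complex.Gamma (1 - a) * Complex.Gamma (1 - b) * Complex.Gamma c * Complex.Gamma d *
        uu c d (1 - a) (1 - b) k := by
    intro k
    have hsq : ((-1 : ℂ) ^ k) * (-1) ^ k = 1 := by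
      rw [← mul_zpow]; simp
    rw [div_eq_mul_inv, mul_inv, poch_inv c hc, poch_inv d hd, poch_eq a ha, poch_eq b hb]
    unfold uu
    linear_combination (Complex.Gamma (1 - a) * Complex.Gamma (1 - b) * Complex.Gamma c *
      Complex.Gamma d * (rg (c + k) * rg (d + k) * rg (1 - a - k) * rg (1 - b - k))) * hsq
  simp only [hterm]
  refine ⟨((uu_summable c d (1 - a) (1 - b) hc' hd' ha' hb' hre').mul_left _).norm, ?_⟩
  rw [tsum_mul_left, main_all c d (1 - a) (1 - b) hc' hd' ha' hb' hre']
  unfold RR rg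
  rw [show c + d + (1 - a) + (1 - b) - 3 = c + d - a - b - 1 by ring,
    show c + (1 - a) - 1 = c - a by ring, show c + (1 - b) - 1 = c - b by ring,
    show d + (1 - a) - 1 = d - a by ring, show d + (1 - b) - 1 = d - b by ring,
    div_eq_mul_inv, mul_inv, mul_inv, mul_inv]
  ring
end

section
/- (Pfaff–Saalschütz summation.) Let m be a non-negative integer and a,b,c ∈ ℂ with c and a+b+1−m−c not in {0,−1,…,−m+1} (so no denominator vanishes). Then Σ_{k=0}^{m} ((a)_k(b)_k(−m)_k)/(k!·(c)_k(a+b+1−m−c)_k) = ((c−a)_m(c−b)_m)/((c)_m(c−a−b)_m). -/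
open Complex

/-- rising factorial as a product -/
noncomputable def rf (a : ℂ) (n : ℕ) : ℂ := ∏ j ∈ Finset.range n, (a + (j : ℂ))

theorem rf_zero (a : ℂ) : rf a 0 = 1 := by simp [rf]

theorem rf_succ (a : ℂ) (n : ℕ) : rf a (n + 1) = rf a n * (a + n) := by
  simp [rf, Finset.prod_range_succ]

theorem rf_succ' (a : ℂ) (n : ℕ) : rf a (n + 1) = a * rf (a + 1) n := by
  simp only [rf, Finset.prod_range_succ']
  rw [mul_comm]
  congr 1
  · simp
  · apply Finset.prod_congr rfl
    intro j _
    push_cast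
    ring

theorem rf_add (a : ℂ) (k n : ℕ) : rf a (k + n) = rf a k * rf (a + k) n := by
  simp only [rf, Finset.prod_range_add]
  congr 1
  apply Finset.prod_congr rfl
  intro j _
  push_cast
  ring

theorem poch_eq_rf (a : ℂ) (n : ℕ) : poch a (n : ℤ) = rf a n := by
  simp [poch, rf]

theorem choose_step (k i : ℕ) :
    (((k + i + 1).choose (k + 1) : ℕ) : ℂ) * ((k : ℂ) + 1)
      = ((k + i + 1).choose k : ℂ) * ((i : ℂ) + 1) := by
  have h := Nat.choose_succ_right_eq (k + i + 1) k
  have h2 : k + i + 1 - k = i + 1 := by omega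
  rw [h2] at h
  exact_mod_cast h

/-- the telescoping partial sums -/
theorem tele_s11 (a b c e : ℂ) (he : c = a + b + e) (m n : ℕ) (hn : n ≤ m) :
    ∑ k ∈ Finset.range n, (m.choose k : ℂ) * (rf a k * rf b k * rf (c + 1 + k) (m - k) *
        (rf e (m - k) * ((a + k) * (b + k)) - (a * b - k * e) * rf (e + 1) (m - k)))
      = - (n * (m.choose n : ℂ) * rf a n * rf b n * (c + n) * rf (c + 1 + n) (m - n)
            * rf (e + 1) (m - n)) := by
  induction n with
  | zero => simp
  | succ k ih =>
    obtain ⟨i, rfl⟩ : ∃ i, m = k + i + 1 := ⟨m - k - 1, by omega⟩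
    rw [Finset.sum_range_succ, ih (by omega)]
    have h1 : k + i + 1 - k = i + 1 := by omega
    have h2 : k + i + 1 - (k + 1) = i := by omega
    rw [h1, h2, rf_succ' e i, rf_succ (e + 1) i, rf_succ a k, rf_succ b k, rf_succ' (c + 1 + k) i]
    have h3 : c + 1 + ((k + 1 : ℕ) : ℂ) = c + 1 + k + 1 := by push_cast; ring
    rw [h3]
    have h4 := choose_step k i
    push_cast
    generalize rf (c + 1 + k + 1) i = X
    generalize rf (e + 1) i = Y
    generalize rf a k = A
    generalize rf b k = B
    subst he
    linear_combination (A * (a + k) * (B * (b + k)) * (a + b + e + (k + 1)) * X * Y) * h4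

theorem step (a b c e : ℂ) (he : c = a + b + e) (m : ℕ) :
    ∑ k ∈ Finset.range (m + 1), (m.choose k : ℂ) *
      (rf a k * rf b k * rf (c + 1 + k) (m - k) *
        (rf e (m - k) * ((a + k) * (b + k)) - (a * b - k * e) * rf (e + 1) (m - k))) = 0 := by
  rw [Finset.sum_range_succ, tele_s11 a b c e he m m le_rfl]
  simp only [Nat.sub_self, rf_zero, he]
  ring

theorem key (a b : ℂ) (m : ℕ) : ∀ c e : ℂ, c = a + b + e →
    ∑ k ∈ Finset.range (m + 1), (m.choose k : ℂ) *
      (rf a k * rf b k * rf (c + k) (m - k) * rf e (m - k)) = rf (c - a) m * rf (c - b) m := by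
  induction m with
  | zero => intro c e _; simp [rf_zero]
  | succ m ih =>
    intro c e he
    have h := Finset.sum_antidiagonal_choose_succ_mul
      (fun k j => rf a k * rf b k * rf (c + k) j * rf e j) m
    rw [Finset.Nat.sum_antidiagonal_eq_sum_range_succ
      (fun k j => ((m + 1).choose k : ℂ) * (rf a k * rf b k * rf (c + k) j * rf e j))] at h
    rw [h, Finset.Nat.sum_antidiagonal_eq_sum_range_succ
      (fun k j => (m.choose k : ℂ) * (rf a k * rf b k * rf (c + k) (j + 1) * rf e (j + 1))),
      Finset.Nat.sum_antidiagonal_eq_sum_range_succ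
      (fun k j => (m.choose j : ℂ) * (rf a (k + 1) * rf b (k + 1) *
        rf (c + (k + 1 : ℕ)) j * rf e j))]
    have ih' := ih (c + 1) (e + 1) (by rw [he]; ring)
    have hs := step a b c e he m
    rw [rf_succ' (c - a), rf_succ' (c - b)]
    have e1 : c - a + 1 = c + 1 - a := by ring
    have e2 : c - b + 1 = c + 1 - b := by ring
    rw [e1, e2]
    have : (c - a) * rf (c + 1 - a) m * ((c - b) * rf (c + 1 - b) m)
      = (c - a) * (c - b) * (rf (c + 1 - a) m * rf (c + 1 - b) m) := by ring
    rw [this, ← ih', ← sub_eq_zero, Finset.mul_sum, ← Finset.sum_add_distrib,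
      ← Finset.sum_sub_distrib, ← hs]
    apply Finset.sum_congr rfl
    intro k hk
    have hk' : k ≤ m := by simpa [Nat.lt_succ_iff] using hk
    rw [Nat.choose_symm hk', rf_succ' (c + k), rf_succ' e, rf_succ a, rf_succ b]
    have e3 : c + ((k + 1 : ℕ) : ℂ) = c + 1 + k := by push_cast; ring
    have e4 : c + (k : ℂ) + 1 = c + 1 + k := by ring
    rw [e3, e4]
    generalize rf (c + 1 + k) (m - k) = X
    generalize rf (e + 1) (m - k) = Y
    subst he
    ring

theorem reflect (e d : ℂ) (m k : ℕ) (hd : d = 1 - m - e) (hk : k ≤ m) :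
    rf (-(m : ℂ)) k * rf e m = (k.factorial : ℂ) * m.choose k * rf e (m - k) * rf d k := by
  induction k with
  | zero => simp [rf_zero]
  | succ k ih =>
    obtain ⟨i, rfl⟩ : ∃ i, m = k + i + 1 := ⟨m - k - 1, by omega⟩
    have ih := ih (by omega)
    have h1 : k + i + 1 - k = i + 1 := by omega
    have h2 : k + i + 1 - (k + 1) = i := by omega
    have h4 := choose_step k i
    rw [h1, rf_succ e i] at ih
    rw [h2, rf_succ _ k, rf_succ d k, Nat.factorial_succ]
    have h5 : d + k = -(e + i) := by rw [hd]; push_cast; ring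
    have h6 : -((k + i + 1 : ℕ) : ℂ) + k = -(i + 1) := by push_cast; ring
    rw [h5, h6]
    push_cast at ih ⊢
    linear_combination (-((i : ℂ) + 1)) * ih + (k.factorial * rf e i * rf d k * (e + i)) * h4

/-- The Pfaff–Saalschütz summation. -/
theorem pfaff_saalschuetz (m : ℕ) (a b c : ℂ)
    (hc : ∀ j : ℕ, j < m → c ≠ -(j : ℂ))
    (hd : ∀ j : ℕ, j < m → a + b + 1 - m - c ≠ -(j : ℂ)) :
    (∑ k ∈ Finset.range (m + 1),
        poch a k * poch b k * poch (-(m : ℂ)) k /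
          ((k.factorial : ℂ) * poch c k * poch (a + b + 1 - m - c) k)) =
      poch (c - a) m * poch (c - b) m / (poch c m * poch (c - a - b) m) := by
  have hcz : rf c m ≠ 0 := by
    rw [rf, Finset.prod_ne_zero_iff]
    intro j hj h
    exact hc j (Finset.mem_range.mp hj) (eq_neg_of_add_eq_zero_left h)
  have hez : rf (c - a - b) m ≠ 0 := by
    rw [rf, Finset.prod_ne_zero_iff]
    intro j hj h
    have hj' := Finset.mem_range.mp hj
    obtain ⟨i, rfl⟩ : ∃ i, m = j + i + 1 := ⟨m - j - 1, by omega⟩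
    apply hd i (by omega)
    push_cast
    linear_combination -h
  simp only [poch_eq_rf]
  rw [← key a b m c (c - a - b) (by ring), Finset.sum_div]
  apply Finset.sum_congr rfl
  intro k hk
  have hk' : k ≤ m := by simpa [Nat.lt_succ_iff] using hk
  have hr := reflect (c - a - b) (a + b + 1 - m - c) m k (by ring) hk'
  have hs : rf c m = rf c k * rf (c + k) (m - k) := by
    rw [← rf_add, Nat.add_sub_cancel' hk']
  have hck : rf c k ≠ 0 := fun h => hcz (by rw [hs, h, zero_mul])
  have hdk : rf (a + b + 1 - m - c) k ≠ 0 := by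
    rw [rf, Finset.prod_ne_zero_iff]
    intro j hj h
    exact hd j (lt_of_lt_of_le (Finset.mem_range.mp hj) hk') (eq_neg_of_add_eq_zero_left h)
  have hf : (k.factorial : ℂ) ≠ 0 := by exact_mod_cast k.factorial_ne_zero
  rw [div_eq_div_iff (mul_ne_zero (mul_ne_zero hf hck) hdk) (mul_ne_zero hcz hez), hs]
  linear_combination (rf a k * rf b k * rf c k * rf (c + k) (m - k)) * hr
end

section
/- (Gustafson's A_r extension of Dougall's ₂H₂ summation.) Let r ≥ 1 and let a_1,…,a_{r+1}, b_1,…,b_{r+1}, x_1,…,x_r ∈ ℂ be generic (no gamma function evaluated at a nonpositive integer and no denominator vanishing, with x_i−x_j ∉ ℤ for i≠j) such that Re(−r + Σ_{j=1}^{r+1}(b_j−a_j)) > 0. Then Σ_{k∈ℤ^r} [ ∏_{1≤i<j≤r} ((x_i+k_i−x_j−k_j)/(x_i−x_j)) · ∏_{i=1}^r ∏_{j=1}^{r+1} ((a_j+x_i)_{k_i}/(b_j+x_i)_{k_i}) ] = Γ(−r+Σ_{j=1}^{r+1}(b_j−a_j)) · ∏_{i=1}^r ∏_{j=1}^{r+1}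 Γ(1−a_j−x_i)Γ(b_j+x_i) / [ ∏_{i,j=1}^{r+1} Γ(b_j−a_i) · ∏_{i,j=1}^{r} Γ(1+x_j−x_i) ], the multilateral sum converging absolutely. -/
open Complex

section part1
open Finset

noncomputable def gphi (a b z : ℂ) : ℂ := (Gamma (1 - a - z))⁻¹ * (Gamma (b + z))⁻¹

lemma rGamma_step (s : ℂ) : (Gamma s)⁻¹ = s * (Gamma (s + 1))⁻¹ :=
  one_div_Gamma_eq_self_mul_one_div_Gamma_add_one s

lemma gphi_symm (a b z : ℂ) : gphi a b z = gphi (1 - b) (1 - a) (-z) := by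
  unfold gphi
  rw [mul_comm]
  congr 3; ring

lemma gphi_b_succ (a b z : ℂ) : gphi a b z = (b + z) * gphi a (b + 1) z := by
  unfold gphi
  rw [rGamma_step (b + z)]
  rw [show b + 1 + z = b + z + 1 by ring]; ring

lemma gphi_shift (a b z : ℂ) : (b + z) * gphi a b (z + 1) = -(a + z) * gphi a b z := by
  unfold gphi
  rw [rGamma_step (b + z), rGamma_step (1 - a - (z + 1))]
  rw [show b + (z + 1) = b + z + 1 by ring, show 1 - a - (z + 1) + 1 = 1 - a - z by ring]; ring

lemma rGamma_mul_prod (s : ℂ) (n : ℕ) :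
    (Gamma s)⁻¹ = (∏ l ∈ range n, (s + l)) * (Gamma (s + n))⁻¹ := by
  induction n with
  | zero => simp
  | succ n ih =>
    rw [ih, prod_range_succ, rGamma_step (s + n)]
    push_cast
    rw [add_assoc s n 1]; ring

lemma rGamma_sub_nat (s : ℂ) (n : ℕ) :
    (Gamma (1 - s - n))⁻¹ = (-1) ^ n * (∏ l ∈ range n, (s + l)) * (Gamma (1 - s))⁻¹ := by
  induction n with
  | zero => simp
  | succ n ih =>
    rw [rGamma_step, prod_range_succ]
    push_cast
    rw [show 1 - s - (n + 1 : ℂ) + 1 = 1 - s - n by ring, ih]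
    ring

open Filter Topology Asymptotics

lemma prod_eq_GammaSeq (A : ℂ) (n : ℕ) (hn : n ≠ 0) :
    ∏ l ∈ range (n + 1), (A + l) = (n : ℂ) ^ A * (n.factorial : ℂ) / GammaSeq A n := by
  unfold GammaSeq
  rw [div_div_cancel₀]
  apply mul_ne_zero
  · rw [Ne, cpow_eq_zero_iff]; simp [hn]
  · exact_mod_cast n.factorial_ne_zero

lemma norm_nat_cpow (A : ℂ) (n : ℕ) (hn : n ≠ 0) : ‖(n : ℂ) ^ A‖ = (n : ℝ) ^ A.re :=
  norm_natCast_cpow_of_pos (Nat.pos_of_ne_zero hn) A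

lemma prod_isBigO (A : ℂ) : (fun n : ℕ => ∏ l ∈ range (n + 1), (A + l)) =O[atTop]
    (fun n : ℕ => (n : ℝ) ^ A.re * (n.factorial : ℝ)) := by
  by_cases hA : Gamma A = 0
  · rw [Gamma_eq_zero_iff] at hA
    obtain ⟨m, rfl⟩ := hA
    refine IsBigO.congr' (isBigO_zero _ _) ?_ EventuallyEq.rfl
    filter_upwards [eventually_ge_atTop m] with n hn
    symm
    apply prod_eq_zero (i := m) (by simp; omega)
    simp
  · have h1 : (fun n => (GammaSeq A n)⁻¹) =O[atTop] (fun _ => (1 : ℝ)) :=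
      ((GammaSeq_tendsto_Gamma A).inv₀ hA).isBigO_one ℝ
    have h2 : (fun n : ℕ => (n : ℂ) ^ A * (n.factorial : ℂ)) =O[atTop]
        (fun n : ℕ => (n : ℝ) ^ A.re * (n.factorial : ℝ)) := by
      apply IsBigO.of_bound 1
      filter_upwards [eventually_ne_atTop 0] with n hn
      rw [norm_mul, norm_nat_cpow A n hn, norm_natCast, one_mul]
      exact le_abs_self _
    refine (h2.mul h1).congr' ?_ (by simp)
    filter_upwards [eventually_ne_atTop 0] with n hn
    rw [prod_eq_GammaSeq A n hn, div_eq_mul_inv]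

lemma rGamma_isBigO_aux (B : ℂ) (hB : Gamma B ≠ 0) :
    (fun n : ℕ => (Gamma (B + n + 1))⁻¹) =O[atTop]
    (fun n : ℕ => ((n : ℝ) ^ B.re * (n.factorial : ℝ))⁻¹) := by
  have h1 : (fun n => (GammaSeq B n)) =O[atTop] (fun _ => (1 : ℝ)) :=
      ((GammaSeq_tendsto_Gamma B)).isBigO_one ℝ
  have h2 : (fun n : ℕ => (Gamma B)⁻¹ * ((n : ℂ) ^ B * (n.factorial : ℂ))⁻¹) =O[atTop]
        (fun n : ℕ => ((n : ℝ) ^ B.re * (n.factorial : ℝ))⁻¹) := by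
    apply IsBigO.of_bound ‖(Gamma B)⁻¹‖
    filter_upwards [eventually_ne_atTop 0] with n hn
    rw [norm_mul, norm_inv (_ * _), norm_mul, norm_nat_cpow B n hn, norm_natCast]
    gcongr
    exact le_abs_self _
  refine (h2.mul h1).congr' ?_ (by simp)
  filter_upwards [eventually_ne_atTop 0] with n hn
  have h3 := rGamma_mul_prod B (n + 1)
  have h4 : ∏ l ∈ range (n + 1), (B + l) ≠ 0 := by
    intro h
    rw [h] at h3
    simp [hB] at h3
  rw [prod_eq_GammaSeq B n hn] at h3 h4
  have h5 : GammaSeq B n ≠ 0 := by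
    intro h; rw [h] at h4; simp at h4
  have h6 : (n : ℂ) ^ B * (n.factorial : ℂ) ≠ 0 := by
    intro h; rw [h] at h4; simp at h4
  rw [h3]
  push_cast
  rw [← add_assoc]
  generalize (n : ℂ) ^ B * (n.factorial : ℂ) = W at *
  field_simp

lemma rGamma_isBigO (B : ℂ) :
    (fun n : ℕ => (Gamma (B + n + 1))⁻¹) =O[atTop]
    (fun n : ℕ => ((n : ℝ) ^ B.re * (n.factorial : ℝ))⁻¹) := by
  obtain ⟨m, hm⟩ := exists_nat_gt (-B.re)
  induction m generalizing B with
  | zero => exact rGamma_isBigO_aux B (Gamma_ne_zero_of_re_pos (by simpa using hm))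
  | succ m ih =>
    have h := ih (B + 1) (by simp; push_cast at hm; linarith)
    have h2 : (fun n : ℕ => (B + n + 1)) =O[atTop] (fun n : ℕ => (n : ℝ)) := by
      apply IsBigO.of_bound (‖B‖ + 2)
      filter_upwards [eventually_ge_atTop 1] with n hn
      have : (1 : ℝ) ≤ n := by exact_mod_cast hn
      calc ‖B + n + 1‖ ≤ ‖B‖ + n + 1 := by
            refine (norm_add_le _ _).trans ?_
            gcongr
            · refine (norm_add_le _ _).trans ?_
              simp
            · simp
        _ ≤ (‖B‖ + 2) * n := by nlinarith [norm_nonneg B]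
        _ = _ := by simp
    refine (h2.mul h).congr' ?_ ?_
    · filter_upwards with n
      rw [rGamma_step (B + n + 1)]; congr 3; ring
    · filter_upwards [eventually_ge_atTop 1] with n hn
      have : (0 : ℝ) < n := by exact_mod_cast hn
      rw [add_re, one_re, Real.rpow_add this, Real.rpow_one]
      field_simp

lemma shift_rpow (e : ℝ) : (fun n : ℕ => (n : ℝ) ^ e) =O[atTop] (fun n : ℕ => ((n : ℝ) + 2) ^ e) := by
  have h : (fun n : ℕ => (n : ℝ)) =Θ[atTop] (fun n : ℕ => ((n : ℝ) + 2)) := by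
    constructor
    · apply IsBigO.of_bound 1
      filter_upwards with n
      rw [Real.norm_of_nonneg (by positivity), Real.norm_of_nonneg (by positivity)]; linarith
    · apply IsBigO.of_bound 3
      filter_upwards [eventually_ge_atTop 1] with n hn
      have : (1 : ℝ) ≤ n := by exact_mod_cast hn
      rw [Real.norm_of_nonneg (by positivity), Real.norm_of_nonneg (by positivity)]; linarith
  exact (h.rpow (by filter_upwards with n; simp)
    (by filter_upwards with n; simp only [Pi.zero_apply]; positivity)).1

lemma gphi_nat_bound (a b z : ℂ) : ∃ C : ℝ, 0 < C ∧ ∀ n : ℕ,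
    ‖gphi a b (z + n)‖ ≤ C * (1 + (n : ℝ)) ^ (a - b).re := by
  have h1 := prod_isBigO (a + z)
  have h2 := rGamma_isBigO (b + z)
  have h3 : (fun n : ℕ => gphi a b (z + (n + 1 : ℕ))) =O[atTop]
      (fun n : ℕ => (n : ℝ) ^ (a - b).re) := by
    have h4 := ((h1.mul h2).const_mul_left ((Gamma (1 - (a + z)))⁻¹))
    refine IsBigO.trans ?_ (h4.congr' EventuallyEq.rfl
      (g₂ := fun n : ℕ => (n : ℝ) ^ (a - b).re) ?_)
    · apply IsBigO.of_bound 1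
      filter_upwards with n
      unfold gphi
      rw [show 1 - a - (z + (n + 1 : ℕ)) = 1 - (a + z) - (n + 1 : ℕ) by ring, rGamma_sub_nat]
      rw [show b + (z + (n + 1 : ℕ)) = b + z + n + 1 by push_cast; ring]
      simp only [norm_mul, norm_pow, norm_neg, norm_one, one_pow, one_mul]
      apply le_of_eq; ring
    · filter_upwards [eventually_ge_atTop 1] with n hn
      have : (0 : ℝ) < n := by exact_mod_cast hn
      have h5 : (n.factorial : ℝ) ≠ 0 := by exact_mod_cast n.factorial_ne_zero
      rw [show (a - b).re = (a + z).re - (b + z).re by simp, Real.rpow_sub this]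
      field_simp
  have h5 : (fun n : ℕ => gphi a b (z + n)) =O[atTop]
      (fun n : ℕ => (1 + (n : ℝ)) ^ (a - b).re) := by
    rw [← Filter.map_add_atTop_eq_nat 1, isBigO_map]
    refine (h3.trans (shift_rpow _)).congr (fun n => by simp) (fun n => ?_)
    simp only [Function.comp]
    congr 1
    push_cast; ring
  obtain ⟨C, hC, h⟩ := bound_of_isBigO_nat_atTop h5
  refine ⟨C, hC, fun n => ?_⟩
  have h6 : 0 < (1 + (n : ℝ)) ^ (a - b).re := by positivity
  have h7 := h (x := n) h6.ne'
  rwa [Real.norm_of_nonneg h6.le] at h7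

lemma gphi_int_bound (a b z : ℂ) : ∃ C : ℝ, 0 < C ∧ ∀ k : ℤ,
    ‖gphi a b (z + k)‖ ≤ C * (1 + |(k : ℝ)|) ^ (a - b).re := by
  obtain ⟨C, hC, h⟩ := gphi_nat_bound a b z
  obtain ⟨D, hD, h'⟩ := gphi_nat_bound (1 - b) (1 - a) (-z)
  refine ⟨C + D, by positivity, fun k => ?_⟩
  have hp : 0 < (1 + |(k : ℝ)|) ^ (a - b).re := by positivity
  obtain ⟨n, rfl | rfl⟩ := k.eq_nat_or_neg
  · have := h n
    simp only [Int.cast_natCast, Nat.abs_cast] at *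
    nlinarith
  · have := h' n
    rw [show -z + (n : ℂ) = -(z + ((-n : ℤ) : ℂ)) by push_cast; ring, ← gphi_symm] at this
    rw [show (1 - b - (1 - a)) = a - b by ring] at this
    simp only [Int.cast_neg, Int.cast_natCast, abs_neg, Nat.abs_cast] at *
    nlinarith

/-- Stirling-type asymptotics. -/
lemma Gamma_asymp (s : ℂ) (hs : Gamma s ≠ 0) :
    Tendsto (fun n : ℕ => Gamma (s + n + 1) / ((n : ℂ) ^ s * (n.factorial : ℂ))) atTop (𝓝 1) := by
  have h1 := (GammaSeq_tendsto_Gamma s).inv₀ hs |>.const_mul (Gamma s)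
  rw [mul_inv_cancel₀ hs] at h1
  refine h1.congr' ?_
  filter_upwards [eventually_ne_atTop 0] with n hn
  have h3 := rGamma_mul_prod s (n + 1)
  have h4 : ∏ l ∈ range (n + 1), (s + l) ≠ 0 := by
    intro h
    rw [h] at h3
    simp [hs] at h3
  have h7 : (Gamma (s + (n + 1 : ℕ)))⁻¹ ≠ 0 := by
    intro h
    rw [h] at h3
    simp [hs] at h3
  rw [prod_eq_GammaSeq s n hn] at h3 h4
  have h5 : GammaSeq s n ≠ 0 := by
    intro h; rw [h] at h4; simp at h4
  have h6 : (n : ℂ) ^ s * (n.factorial : ℂ) ≠ 0 := by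
    intro h; rw [h] at h4; simp at h4
  push_cast at h3 h7
  rw [← add_assoc] at h3 h7
  rw [Ne, inv_eq_zero] at h7
  generalize (n : ℂ) ^ s * (n.factorial : ℂ) = W at *
  generalize GammaSeq s n = V at *
  field_simp at h3 ⊢
  linear_combination -h3
end part1

section part2
lemma norm_sin_le_exp (w : ℂ) : ‖sin w‖ ≤ Real.exp |w.im| := by
  rw [Complex.sin, norm_div, norm_mul, norm_I, mul_one, Complex.norm_two]
  have h1 : ‖cexp (-w * I) - cexp (w * I)‖ ≤ Real.exp |w.im| + Real.exp |w.im| := by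
    refine (norm_sub_le _ _).trans ?_
    rw [norm_exp, norm_exp]
    gcongr
    · simp [le_abs_self]
    · simp [neg_le_abs]
  linarith

lemma norm_beta_le_one (u v : ℂ) (hu : 1 ≤ u.re) (hv : 1 ≤ v.re) : ‖betaIntegral u v‖ ≤ 1 := by
  have key : ∀ (x : ℝ), 0 ≤ x → x ≤ 1 → ∀ w : ℂ, 1 ≤ w.re → ‖(x : ℂ) ^ (w - 1)‖ ≤ 1 := by
    intro x hx hx1 w hw
    rcases hx.eq_or_lt with rfl | hx
    · by_cases h : w - 1 = 0
      · simp [h]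
      · simp [Complex.zero_cpow h]
    · rw [norm_cpow_eq_rpow_re_of_pos hx]
      exact Real.rpow_le_one hx.le hx1 (by simpa using hw)
  unfold betaIntegral
  have := intervalIntegral.norm_integral_le_of_norm_le_const (a := (0:ℝ)) (b := 1) (C := 1)
    (f := fun x : ℝ => (x : ℂ) ^ (u - 1) * (1 - (x : ℂ)) ^ (v - 1)) ?_
  · simpa using this
  · intro x hx
    rw [Set.uIoc_of_le zero_le_one] at hx
    rw [norm_mul]
    have h2 := key (1 - x) (by linarith [hx.2]) (by linarith [hx.1]) v hv
    push_cast at h2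
    exact mul_le_one₀ (key x hx.1.le hx.2 u hu) (norm_nonneg _) h2

lemma gphi_right (a b z : ℂ) (h1 : 1 ≤ (a + z).re) (h2 : 1 ≤ (b - a).re) :
    ‖gphi a b z‖ ≤ ‖(Gamma (b - a))⁻¹‖ * Real.exp (Real.pi * |(a + z).im|) := by
  unfold gphi
  rw [show 1 - a - z = 1 - (a + z) by ring]
  by_cases h0 : Gamma (1 - (a + z)) = 0
  · rw [h0]; simp; positivity
  have hA : Gamma (a + z) ≠ 0 := Gamma_ne_zero_of_re_pos (by linarith)
  have hba : Gamma (b - a) ≠ 0 := Gamma_ne_zero_of_re_pos (by linarith)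
  have hb : Gamma (b + z) ≠ 0 := Gamma_ne_zero_of_re_pos (by
    have : (b + z).re = (a + z).re + (b - a).re := by simp; ring
    linarith)
  have h3 := Gamma_mul_Gamma_one_sub (a + z)
  have hs : sin (Real.pi * (a + z)) ≠ 0 := by
    intro h; rw [h] at h3; simp [h0, hA] at h3
  have h4 := betaIntegral_eq_Gamma_mul_div (a + z) (b - a) (by linarith) (by linarith)
  rw [show a + z + (b - a) = b + z by ring] at h4
  have hpi : (Real.pi : ℂ) ≠ 0 := by exact_mod_cast Real.pi_ne_zero
  have h5 : (Gamma (1 - (a + z)))⁻¹ * (Gamma (b + z))⁻¹ =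
      (Gamma (b - a))⁻¹ * betaIntegral (a + z) (b - a) * (sin (Real.pi * (a + z)) / Real.pi) := by
    rw [h4]
    have : (Gamma (1 - (a + z)))⁻¹ = Gamma (a + z) * (sin (Real.pi * (a + z)) / Real.pi) := by
      generalize sin (Real.pi * (a + z)) = S at *
      field_simp
      field_simp at h3
      linear_combination -h3
    rw [this]
    field_simp
  rw [h5, norm_mul, norm_mul, norm_div]
  have h6 := norm_sin_le_exp (Real.pi * (a + z))
  have h7 : |((Real.pi : ℂ) * (a + z)).im| = Real.pi * |(a + z).im| := by
    rw [Complex.im_ofReal_mul, abs_mul, abs_of_pos Real.pi_pos]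
  rw [h7] at h6
  have h8 : ‖sin (Real.pi * (a + z))‖ / ‖(Real.pi : ℂ)‖ ≤ Real.exp (Real.pi * |(a + z).im|) := by
    rw [Complex.norm_real, Real.norm_of_nonneg Real.pi_pos.le]
    refine (div_le_self (norm_nonneg _) ?_).trans h6
    linarith [Real.pi_gt_three]
  have h9 := norm_beta_le_one (a + z) (b - a) h1 h2
  calc _ ≤ ‖(Gamma (b - a))⁻¹‖ * 1 * Real.exp (Real.pi * |(a + z).im|) := by gcongr
    _ = _ := by ring

lemma continuous_rGamma : Continuous (fun s : ℂ => (Gamma s)⁻¹) :=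
  differentiable_one_div_Gamma.continuous

lemma gphi_step_bound (R : ℝ) (a b z : ℂ) (ha : ‖a‖ ≤ R) (hb : ‖b‖ ≤ R) (hz : R + 1 ≤ |z.im|) :
    ‖gphi a b z‖ ≤ (2 * R + 1) * ‖gphi a b (z + 1)‖ := by
  have h := gphi_shift a b z
  have h1 : 1 ≤ ‖a + z‖ := by
    have h2 := abs_im_le_norm (a + z)
    have h3 := abs_im_le_norm a
    rw [add_im] at h2
    have := abs_sub_abs_le_abs_sub z.im (-a.im)
    rw [abs_neg, sub_neg_eq_add, add_comm z.im] at this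
    linarith
  have h4 : ‖b + z‖ ≤ (2 * R + 1) * ‖a + z‖ := by
    have : b + z = (b - a) + (a + z) := by ring
    rw [this]
    have h5 := norm_add_le (b - a) (a + z)
    have h6 := norm_sub_le b a
    nlinarith [norm_nonneg a]
  have h5 : ‖a + z‖ * ‖gphi a b z‖ = ‖b + z‖ * ‖gphi a b (z + 1)‖ := by
    rw [← norm_mul, ← norm_mul, h, neg_mul, norm_neg]
  have h6 : ‖a + z‖ * ‖gphi a b z‖ ≤ ‖a + z‖ * ((2 * R + 1) * ‖gphi a b (z + 1)‖) := by
    rw [h5]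
    nlinarith [norm_nonneg (gphi a b (z + 1))]
  exact le_of_mul_le_mul_left h6 (by linarith)

lemma gphi_uniform0 (K : Set (ℂ × ℂ)) (hK : IsCompact K) (h : ∀ p ∈ K, 1 ≤ (p.2 - p.1).re) :
    ∃ C : ℝ, 0 ≤ C ∧ ∀ p ∈ K, ∀ z, ‖gphi p.1 p.2 z‖ ≤ C * Real.exp (Real.pi * |z.im|) := by
  obtain ⟨R0, hR0⟩ := hK.isBounded.exists_norm_le
  obtain ⟨R, hR⟩ := exists_nat_ge R0
  have ha : ∀ p ∈ K, ‖p.1‖ ≤ (R : ℝ) := fun p hp => (norm_fst_le p).trans ((hR0 p hp).trans hR)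
  have hb : ∀ p ∈ K, ‖p.2‖ ≤ (R : ℝ) := fun p hp => (norm_snd_le p).trans ((hR0 p hp).trans hR)
  obtain ⟨C0, hC0⟩ := hK.exists_bound_of_continuousOn (f := fun p : ℂ × ℂ => (Gamma (p.2 - p.1))⁻¹)
    (continuous_rGamma.comp (continuous_snd.sub continuous_fst)).continuousOn
  obtain ⟨C1, hC1⟩ := (hK.prod (isCompact_closedBall (0 : ℂ) (2 * R + 2))).exists_bound_of_continuousOn
    (f := fun q : (ℂ × ℂ) × ℂ => gphi q.1.1 q.1.2 q.2) (by
      unfold gphi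
      refine Continuous.continuousOn (Continuous.mul ?_ ?_)
      · exact continuous_rGamma.comp (by fun_prop)
      · exact continuous_rGamma.comp (by fun_prop))
  set E : ℝ := Real.exp (Real.pi * R) with hE
  have hE0 : 0 < E := Real.exp_pos _
  have right : ∀ p ∈ K, ∀ z : ℂ, (R : ℝ) + 1 ≤ z.re →
      ‖gphi p.1 p.2 z‖ ≤ |C0| * E * Real.exp (Real.pi * |z.im|) := by
    intro p hp z hz
    have h1 := gphi_right p.1 p.2 z (by
      have := abs_re_le_norm p.1
      have := ha p hp
      have := neg_abs_le p.1.re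
      rw [add_re]; linarith) (h p hp)
    refine h1.trans ?_
    rw [mul_assoc, hE, ← Real.exp_add, ← mul_add]
    gcongr
    · exact (hC0 p hp).trans (le_abs_self _)
    · rw [add_im]
      refine (abs_add_le _ _).trans ?_
      gcongr
      exact (abs_im_le_norm _).trans (ha p hp)
  have left : ∀ p ∈ K, ∀ z : ℂ, z.re ≤ -((R : ℝ) + 1) →
      ‖gphi p.1 p.2 z‖ ≤ |C0| * E * Real.exp (Real.pi * |z.im|) := by
    intro p hp z hz
    have h1 := gphi_right (1 - p.2) (1 - p.1) (-z) (by
      have := abs_re_le_norm p.2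
      have := hb p hp
      have := le_abs_self p.2.re
      simp only [add_re, sub_re, one_re, neg_re]; linarith) (by
      have := h p hp
      simp only [sub_re, one_re] at *; linarith)
    rw [← gphi_symm, show 1 - p.1 - (1 - p.2) = p.2 - p.1 by ring] at h1
    refine h1.trans ?_
    rw [mul_assoc, hE, ← Real.exp_add, ← mul_add]
    gcongr
    · exact (hC0 p hp).trans (le_abs_self _)
    · have : (1 - p.2 + -z).im = -(p.2.im + z.im) := by simp; ring
      rw [this, abs_neg]
      refine (abs_add_le _ _).trans ?_
      gcongr
      exact (abs_im_le_norm _).trans (hb p hp)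
  have mid : ∀ n : ℕ, ∀ p ∈ K, ∀ z : ℂ, (R : ℝ) + 1 ≤ |z.im| → (R : ℝ) + 1 ≤ z.re + n →
      ‖gphi p.1 p.2 z‖ ≤ (2 * R + 1) ^ n * (|C0| * E * Real.exp (Real.pi * |z.im|)) := by
    intro n
    induction n with
    | zero => intro p hp z _ hz; simpa using right p hp z (by simpa using hz)
    | succ n ih =>
      intro p hp z hz1 hz2
      have h1 := gphi_step_bound R p.1 p.2 z (ha p hp) (hb p hp) hz1
      have h2 := ih p hp (z + 1) (by simpa using hz1) (by simp; push_cast at hz2; linarith)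
      simp only [add_im, one_im, add_zero] at h2
      calc _ ≤ _ := h1
        _ ≤ (2 * R + 1) * ((2 * R + 1) ^ n * (|C0| * E * Real.exp (Real.pi * |z.im|))) := by gcongr
        _ = _ := by ring
  set D : ℝ := (2 * R + 1) ^ (2 * R + 2) with hD
  have hD0 : 1 ≤ D := one_le_pow₀ (by linarith [(Nat.cast_nonneg R : (0:ℝ) ≤ R)])
  refine ⟨|C1| + D * (|C0| * E), by positivity, fun p hp z => ?_⟩
  have he : 1 ≤ Real.exp (Real.pi * |z.im|) := Real.one_le_exp (by have := Real.pi_pos; positivity)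
  have hX : 0 ≤ |C0| * E := by positivity
  by_cases h1 : (R : ℝ) + 1 ≤ |z.im|
  · by_cases h2 : z.re ≤ -((R : ℝ) + 1)
    · refine (left p hp z h2).trans ?_
      gcongr
      nlinarith [abs_nonneg C1]
    · have := mid (2 * R + 2) p hp z h1 (by push_cast; linarith)
      refine this.trans ?_
      rw [← mul_assoc]
      gcongr
      linarith [abs_nonneg C1]
  · by_cases h2 : z.re ≤ -((R : ℝ) + 1)
    · refine (left p hp z h2).trans ?_
      gcongr
      nlinarith [abs_nonneg C1]
    · by_cases h3 : (R : ℝ) + 1 ≤ z.re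
      · refine (right p hp z h3).trans ?_
        gcongr
        nlinarith [abs_nonneg C1]
      · have h4 : ‖gphi p.1 p.2 z‖ ≤ C1 := hC1 (p, z) ⟨hp, by
          rw [mem_closedBall_zero_iff]
          refine (norm_le_abs_re_add_abs_im z).trans ?_
          have : |z.re| ≤ R + 1 := abs_le.2 ⟨by linarith, by linarith⟩
          linarith⟩
        have h5 : C1 ≤ |C1| := le_abs_self _
        have h6 : 0 ≤ D * (|C0| * E) := by positivity
        nlinarith [abs_nonneg C1]

lemma gphi_uniform (M : ℕ) : ∀ (K : Set (ℂ × ℂ)) (_ : IsCompact K)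
    (_ : ∀ p ∈ K, (M : ℝ) + 1 ≤ (p.2 - p.1).re),
    ∃ C : ℝ, 0 ≤ C ∧ ∀ p ∈ K, ∀ z, ‖gphi p.1 p.2 z‖ * (1 + ‖z‖) ^ M ≤
      C * Real.exp (Real.pi * |z.im|) := by
  induction M with
  | zero =>
    intro K hK h
    simpa using gphi_uniform0 K hK (by simpa using h)
  | succ M ih =>
    intro K hK h
    obtain ⟨R, hR⟩ := hK.isBounded.exists_norm_le
    have hb : ∀ p ∈ K, ‖p.2‖ ≤ R := fun p hp => (norm_snd_le p).trans (hR p hp)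
    obtain ⟨C, hC, h1⟩ := ih K hK (fun p hp => by have := h p hp; push_cast at this; linarith)
    obtain ⟨C', hC', h2⟩ := ih ((fun p : ℂ × ℂ => (p.1, p.2 - 1)) '' K)
      (hK.image (by fun_prop)) (by
        rintro _ ⟨p, hp, rfl⟩
        have := h p hp; push_cast at this; simp at *; linarith)
    refine ⟨|C * (R + 2)| + C', by positivity, fun p hp z => ?_⟩
    have h3 := h1 p hp z
    have h4 := h2 _ ⟨p, hp, rfl⟩ z
    simp only at h4
    have h5 := gphi_b_succ p.1 (p.2 - 1) z
    rw [sub_add_cancel] at h5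
    rw [h5, norm_mul] at h4
    have h6 : 1 + ‖z‖ ≤ (R + 2) + ‖p.2 - 1 + z‖ := by
      have : z = (p.2 - 1 + z) + (1 - p.2) := by ring
      have h7 : ‖z‖ ≤ ‖p.2 - 1 + z‖ + ‖1 - p.2‖ := by
        conv_lhs => rw [this]
        exact norm_add_le _ _
      have h8 := norm_sub_le 1 p.2
      have := hb p hp
      simp at h8
      linarith
    have hR0 : 0 ≤ R := (norm_nonneg _).trans (hb p hp)
    have hG : 0 ≤ ‖gphi p.1 p.2 z‖ * (1 + ‖z‖) ^ M := by positivity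
    calc ‖gphi p.1 p.2 z‖ * (1 + ‖z‖) ^ (M + 1)
        = ‖gphi p.1 p.2 z‖ * (1 + ‖z‖) ^ M * (1 + ‖z‖) := by ring
      _ ≤ ‖gphi p.1 p.2 z‖ * (1 + ‖z‖) ^ M * ((R + 2) + ‖p.2 - 1 + z‖) := by gcongr
      _ = (‖gphi p.1 p.2 z‖ * (1 + ‖z‖) ^ M) * (R + 2) +
          ‖p.2 - 1 + z‖ * ‖gphi p.1 p.2 z‖ * (1 + ‖z‖) ^ M := by ring
      _ ≤ (C * Real.exp (Real.pi * |z.im|)) * (R + 2) + C' * Real.exp (Real.pi * |z.im|) := by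
          gcongr
      _ = (C * (R + 2) + C') * Real.exp (Real.pi * |z.im|) := by ring
      _ ≤ _ := by gcongr; exact le_abs_self _
end part2

section part3
open Filter Topology Asymptotics Function.Periodic

lemma poly_of_growth (d : ℕ) : ∀ (f : ℂ → ℂ) (_ : Differentiable ℂ f)
    (_ : Tendsto (fun w => f w / w ^ d) (cocompact ℂ) (𝓝 0)),
    ∃ c : Fin d → ℂ, ∀ w, f w = ∑ i, c i * w ^ (i : ℕ) := by
  induction d with
  | zero =>
    intro f hf h
    refine ⟨0, fun w => ?_⟩
    simp only [pow_zero, div_one] at h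
    simpa using hf.apply_eq_of_tendsto_cocompact w h
  | succ d ih =>
    intro f hf h
    have hg : Differentiable ℂ (dslope f 0) := by
      rw [← differentiableOn_univ, Complex.differentiableOn_dslope univ_mem]
      exact hf.differentiableOn
    have hne : ∀ᶠ w : ℂ in cocompact ℂ, w ≠ 0 := by
      have := (isCompact_singleton (x := (0 : ℂ))).compl_mem_cocompact
      filter_upwards [this] with w hw using hw
    have hinv : Tendsto (fun w : ℂ => f 0 * (w⁻¹) ^ (d + 1)) (cocompact ℂ) (𝓝 0) := by
      have := ((tendsto_inv₀_cobounded (α := ℂ)).pow (d + 1)).const_mul (f 0)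
      rw [Metric.cobounded_eq_cocompact] at this
      simpa using this
    obtain ⟨c, hc⟩ := ih _ hg (by
      have := h.sub hinv
      rw [sub_zero] at this
      refine this.congr' ?_
      filter_upwards [hne] with w hw
      rw [dslope_of_ne _ hw, slope_def_field, sub_zero]
      rw [inv_pow]
      field_simp
      ring)
    refine ⟨Fin.cons (f 0) c, fun w => ?_⟩
    rw [Fin.sum_univ_succ]
    simp only [Fin.cons_zero, Fin.cons_succ, Fin.val_zero, pow_zero, mul_one, Fin.val_succ]
    have h1 : f w = f 0 + w * dslope f 0 w := by
      have := sub_smul_dslope f 0 w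
      simp only [sub_zero, smul_eq_mul] at this
      rw [this]; ring
    rw [h1, hc w, Finset.mul_sum]
    congr 1
    exact Finset.sum_congr rfl (fun i _ => by ring)

lemma trig_poly_of_growth (s : ℕ) (G : ℂ → ℂ) (hG : Differentiable ℂ G)
    (hper : ∀ z, G (z + 1) = (-1) ^ s * G z) (C : ℝ)
    (hb : ∀ z, ‖G z‖ * (1 + |z.im|) ≤ C * Real.exp (Real.pi * (s + 2) * |z.im|)) :
    ∃ c : Fin (s + 1) → ℂ, ∀ z, G z = cexp (-(Real.pi * I * s * z)) *
      ∑ i, c i * (cexp (2 * Real.pi * I * z)) ^ (i : ℕ) := by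
  set f : ℂ → ℂ := fun z => cexp (Real.pi * I * s * z) * G z with hf
  have hfd : Differentiable ℂ f := by fun_prop
  have hfp : Function.Periodic f ((1 : ℝ) : ℂ) := by
    intro z
    simp only [hf, ofReal_one, hper]
    rw [show (Real.pi : ℂ) * I * s * (z + 1) = Real.pi * I * s * z + s * (Real.pi * I) by ring,
      Complex.exp_add, Complex.exp_nat_mul, Complex.exp_pi_mul_I]
    have : ((-1 : ℂ) ^ s) * (-1) ^ s = 1 := by rw [← mul_pow]; simp
    linear_combination (cexp (Real.pi * I * s * z) * G z) * this
  have hC : 0 ≤ C := by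
    have := hb 0
    simp at this
    exact (norm_nonneg _).trans this
  -- bound on f
  have hfb : ∀ z, ‖f z‖ ≤ C / (1 + |z.im|) * Real.exp (Real.pi * (s + 2) * |z.im| - Real.pi * s * z.im) := by
    intro z
    have h1 : ‖f z‖ = Real.exp (-(Real.pi * s * z.im)) * ‖G z‖ := by
      rw [hf, norm_mul, norm_exp]
      congr 2
      simp
    have h2 : ‖G z‖ ≤ C * Real.exp (Real.pi * (s + 2) * |z.im|) / (1 + |z.im|) := by
      rw [le_div_iff₀ (by positivity)]; exact hb z
    rw [h1, sub_eq_add_neg, Real.exp_add]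
    calc _ ≤ Real.exp (-(Real.pi * s * z.im)) * (C * Real.exp (Real.pi * (s + 2) * |z.im|) / (1 + |z.im|)) := by gcongr
      _ = _ := by ring
  set F := cuspFunction 1 f with hF
  have hFq : ∀ z, F (qParam 1 z) = f z := eq_cuspFunction one_ne_zero hfp
  have hq : ∀ q : ℂ, q ≠ 0 → qParam 1 (invQParam 1 q) = q := fun q hq =>
    qParam_right_inv one_ne_zero hq
  have hnorm : ∀ q : ℂ, q ≠ 0 → ‖q‖ = Real.exp (-2 * Real.pi * (invQParam 1 q).im) := by
    intro q h0
    conv_lhs => rw [← hq q h0, norm_qParam]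
    simp
  have hlog : ∀ q : ℂ, (invQParam 1 q).im = -1 / (2 * Real.pi) * Real.log ‖q‖ := im_invQParam 1
  have hFne : ∀ q : ℂ, q ≠ 0 → DifferentiableAt ℂ F q := by
    intro q h0
    rw [← hq q h0]
    exact differentiableAt_cuspFunction one_ne_zero hfp (hfd _)
  have hpi := Real.pi_pos
  have hlim0 : Tendsto (fun q : ℂ => C / (1 + |(invQParam 1 q).im|)) (𝓝[≠] 0) (𝓝 0) := by
    have h1 : Tendsto (fun q => (invQParam 1 q).im) (𝓝[≠] 0) atTop :=
      tendsto_comap_iff.1 (invQParam_tendsto one_pos)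
    exact tendsto_const_nhds.div_atTop (tendsto_atTop_add_const_left _ _ (tendsto_abs_atTop_atTop.comp h1))
  have hlimI : Tendsto (fun q : ℂ => C / (1 + |(invQParam 1 q).im|)) (cocompact ℂ) (𝓝 0) := by
    have h0 : Tendsto (fun q : ℂ => Real.log ‖q‖) (cocompact ℂ) atTop :=
      Real.tendsto_log_atTop.comp tendsto_norm_cocompact_atTop
    have h1 : Tendsto (fun q => (invQParam 1 q).im) (cocompact ℂ) atBot := by
      simp_rw [hlog]
      exact h0.const_mul_atTop_of_neg (by
        apply div_neg_of_neg_of_pos <;> linarith)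
    exact tendsto_const_nhds.div_atTop (tendsto_atTop_add_const_left _ _ (tendsto_abs_atBot_atTop.comp h1))
  have hdF : Differentiable ℂ F := by
    rw [← differentiableOn_univ]
    apply Complex.differentiableOn_update_limUnder_of_isLittleO univ_mem
    · intro q hq0
      have h0 : q ≠ 0 := hq0.2
      apply DifferentiableAt.differentiableWithinAt
      refine (hFne q h0).congr_of_eventuallyEq ?_
      filter_upwards [isOpen_ne.mem_nhds h0] with q' hq'
      exact (cuspFunction_eq_of_nonzero 1 f hq').symm
    · have hne : ∀ᶠ q : ℂ in 𝓝[≠] 0, q ≠ 0 := by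
        filter_upwards [self_mem_nhdsWithin] with q h using h
      rw [isLittleO_iff_tendsto' (by
        filter_upwards [hne] with q h h2; simp [h] at h2)]
      have hA : Tendsto (fun q : ℂ => (f ∘ invQParam 1) q * q) (𝓝[≠] 0) (𝓝 0) := by
        refine squeeze_zero_norm' ?_ hlim0
        have hsm : ∀ᶠ q : ℂ in 𝓝[≠] 0, ‖q‖ < 1 := by
          apply nhdsWithin_le_nhds
          have := Metric.ball_mem_nhds (0 : ℂ) one_pos
          filter_upwards [this] with q hq'; simpa using hq'
        filter_upwards [hne, hsm] with q h0 h1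
        have hy : 0 ≤ (invQParam 1 q).im := by
          rw [hnorm q h0, Real.exp_lt_one_iff] at h1
          nlinarith
        have h2 := hfb (invQParam 1 q)
        rw [norm_mul, Function.comp_apply]
        calc _ ≤ C / (1 + |(invQParam 1 q).im|) * Real.exp (Real.pi * (s + 2) * |(invQParam 1 q).im| - Real.pi * s * (invQParam 1 q).im) * ‖q‖ := by gcongr
          _ = C / (1 + |(invQParam 1 q).im|) := by
            rw [hnorm q h0, mul_assoc, ← Real.exp_add, abs_of_nonneg hy]
            ring_nf
            simp
      have hB : Tendsto (fun q : ℂ => (f ∘ invQParam 1) 0 * q) (𝓝[≠] 0) (𝓝 0) := by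
        have : Tendsto (fun q : ℂ => (f ∘ invQParam 1) 0 * q) (𝓝 0) (𝓝 ((f ∘ invQParam 1) 0 * 0)) :=
          (continuous_const.mul continuous_id).tendsto 0
        rw [mul_zero] at this
        exact this.mono_left nhdsWithin_le_nhds
      have := hA.sub hB
      rw [sub_zero] at this
      refine this.congr (fun q => ?_)
      simp; ring
  obtain ⟨c, hc⟩ := poly_of_growth (s + 1) F hdF (by
    refine squeeze_zero_norm' ?_ hlimI
    have hbig : ∀ᶠ q : ℂ in cocompact ℂ, 1 < ‖q‖ :=
      tendsto_norm_cocompact_atTop.eventually_gt_atTop 1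
    filter_upwards [hbig] with q h1
    have h0 : q ≠ 0 := by rintro rfl; simp at h1; linarith
    have hy : (invQParam 1 q).im ≤ 0 := by
      rw [hnorm q h0, Real.one_lt_exp_iff] at h1
      nlinarith
    have h2 := hfb (invQParam 1 q)
    rw [← hFq, hq q h0] at h2
    rw [norm_div, norm_pow, div_le_iff₀ (by positivity)]
    refine h2.trans (le_of_eq ?_)
    rw [hnorm q h0, abs_of_nonpos hy, ← Real.exp_nat_mul]
    congr 2
    push_cast; ring)
  refine ⟨c, fun z => ?_⟩
  have h1 := hFq z
  rw [hc] at h1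
  have h2 : qParam 1 z = cexp (2 * Real.pi * I * z) := by simp [qParam]
  rw [h2] at h1
  rw [h1, hf]
  simp only
  rw [← mul_assoc, ← Complex.exp_add]
  simp
end part3

section part4
open Filter Topology

noncomputable def hh {n : ℕ} (a b : Fin n → ℂ) (z : ℂ) : ℂ := ∏ j, gphi (a j) (b j) z

noncomputable def gt {n : ℕ} (a b : Fin n → ℂ) (z : ℂ) (k : ℤ) : ℂ :=
  ((-1 : ℂ) ^ n) ^ k * hh a b (z + k)

noncomputable def GG {n : ℕ} (a b : Fin n → ℂ) (p : Polynomial ℂ) (z : ℂ) : ℂ :=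
  ∑' k : ℤ, p.eval (z + k) * gt a b z k

noncomputable def Tterm {n r : ℕ} (a b : Fin n → ℂ) (x : Fin r → ℂ) (k : Fin r → ℤ) : ℂ :=
  (Matrix.vandermonde (fun i => x i + (k i : ℂ))).det * ∏ i, gt a b (x i) (k i)

noncomputable def TT {n r : ℕ} (a b : Fin n → ℂ) (x : Fin r → ℂ) : ℂ :=
  ∑' k : Fin r → ℤ, Tterm a b x k

noncomputable def SS {n : ℕ} (a b : Fin n → ℂ) : ℂ := ∑ j, (b j - a j)

lemma norm_sign_zpow (n : ℕ) (k : ℤ) : ‖((-1 : ℂ) ^ n) ^ k‖ = 1 := by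
  simp [norm_zpow, norm_pow]

lemma gt_bound {n : ℕ} (a b : Fin n → ℂ) (z : ℂ) :
    ∃ C, 0 < C ∧ ∀ k : ℤ, ‖gt a b z k‖ ≤ C * (1 + |(k : ℝ)|) ^ (-(SS a b).re) := by
  choose C hC hb using fun j => gphi_int_bound (a j) (b j) z
  refine ⟨∏ j, C j, Finset.prod_pos (fun j _ => hC j), fun k => ?_⟩
  have hpos : 0 < 1 + |(k : ℝ)| := by positivity
  rw [gt, norm_mul, norm_sign_zpow, one_mul, hh, norm_prod]
  calc _ ≤ ∏ j, (C j * (1 + |(k : ℝ)|) ^ (a j - b j).re) :=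
        Finset.prod_le_prod (fun _ _ => norm_nonneg _) (fun j _ => hb j k)
    _ = _ := by
      rw [Finset.prod_mul_distrib, ← Real.rpow_sum_of_pos hpos, SS, re_sum, ← Finset.sum_neg_distrib]
      congr 2
      refine Finset.sum_congr rfl (fun j _ => by simp)

lemma poly_bound (p : Polynomial ℂ) (d : ℕ) (hd : p.natDegree ≤ d) :
    ∃ C, 0 < C ∧ ∀ w : ℂ, ‖p.eval w‖ ≤ C * (1 + ‖w‖) ^ d := by
  refine ⟨1 + ∑ i ∈ Finset.range (d + 1), ‖p.coeff i‖, by positivity, fun w => ?_⟩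
  rw [Polynomial.eval_eq_sum_range' (Nat.lt_succ_of_le hd)]
  refine (norm_sum_le _ _).trans ?_
  rw [add_mul, Finset.sum_mul]
  refine le_add_of_nonneg_of_le (by positivity) (Finset.sum_le_sum fun i hi => ?_)
  rw [norm_mul, norm_pow]
  gcongr
  calc ‖w‖ ^ i ≤ (1 + ‖w‖) ^ i := by gcongr; linarith [norm_nonneg w]
    _ ≤ _ := pow_le_pow_right₀ (by linarith [norm_nonneg w]) (by simpa [Nat.lt_succ_iff] using hi)

lemma one_add_norm_add (z : ℂ) (k : ℤ) : 1 + ‖z + k‖ ≤ (1 + ‖z‖) * (1 + |(k : ℝ)|) := by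
  have h := norm_add_le z (k : ℂ)
  rw [Complex.norm_intCast] at h
  nlinarith [norm_nonneg z, abs_nonneg (k : ℝ), mul_nonneg (norm_nonneg z) (abs_nonneg (k : ℝ))]

lemma summable_int_rpow (e : ℝ) (he : e < -1) : Summable fun k : ℤ => (1 + |(k : ℝ)|) ^ e := by
  have h := (Real.summable_one_div_nat_add_rpow 1 (-e)).2 (by linarith)
  have h2 : Summable fun n : ℕ => (1 + |(n : ℝ)|) ^ e := by
    refine h.congr (fun n => ?_)
    rw [abs_of_nonneg (by positivity : (0 : ℝ) ≤ (n : ℝ) + 1), Real.rpow_neg (by positivity), one_div, inv_inv,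
      abs_of_nonneg (by positivity : (0 : ℝ) ≤ (n : ℝ)), add_comm]
  rw [summable_int_iff_summable_nat_and_neg]
  constructor
  · simpa using h2
  · simpa using h2

lemma GG_term_bound {n : ℕ} (a b : Fin n → ℂ) (p : Polynomial ℂ) (d : ℕ) (hd : p.natDegree ≤ d) (z : ℂ) :
    ∃ C, 0 < C ∧ ∀ k : ℤ, ‖p.eval (z + k) * gt a b z k‖ ≤ C * (1 + |(k : ℝ)|) ^ (d - (SS a b).re) := by
  obtain ⟨C1, h1, hb1⟩ := gt_bound a b z
  obtain ⟨C2, h2, hb2⟩ := poly_bound p d hd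
  refine ⟨C2 * (1 + ‖z‖) ^ d * C1, by positivity, fun k => ?_⟩
  have hpos : 0 < 1 + |(k : ℝ)| := by positivity
  rw [norm_mul]
  calc _ ≤ (C2 * ((1 + ‖z‖) * (1 + |(k : ℝ)|)) ^ d) * (C1 * (1 + |(k : ℝ)|) ^ (-(SS a b).re)) := by
        gcongr
        · exact (hb2 _).trans (by gcongr; exact one_add_norm_add z k)
        · exact hb1 k
    _ = _ := by
      rw [sub_eq_add_neg, Real.rpow_add hpos, Real.rpow_natCast, mul_pow]; ring

lemma GG_summable {n : ℕ} (a b : Fin n → ℂ) (p : Polynomial ℂ) (d : ℕ) (hd : p.natDegree ≤ d)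
    (hS : (d : ℝ) + 1 < (SS a b).re) (z : ℂ) : Summable fun k : ℤ => ‖p.eval (z + k) * gt a b z k‖ := by
  obtain ⟨C, _, hb⟩ := GG_term_bound a b p d hd z
  exact Summable.of_nonneg_of_le (fun _ => norm_nonneg _) hb
    ((summable_int_rpow _ (by linarith)).mul_left C)

lemma pi_prod_sum : ∀ (r : ℕ) (g : Fin r → ℤ → ℂ) (_ : ∀ i, Summable fun k => ‖g i k‖),
    (Summable fun k : Fin r → ℤ => ‖∏ i, g i (k i)‖) ∧
    ∑' k : Fin r → ℤ, ∏ i, g i (k i) = ∏ i, ∑' k, g i k := by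
  intro r
  induction r with
  | zero =>
    intro g _
    refine ⟨Summable.of_finite, ?_⟩
    simp
  | succ r ih =>
    intro g hg
    obtain ⟨h1, h2⟩ := ih (fun i => g i.succ) (fun i => hg i.succ)
    let e := Fin.consEquiv (fun _ : Fin (r + 1) => ℤ)
    have he : ∀ p : ℤ × (Fin r → ℤ), ∏ i, g i (e p i) = g 0 p.1 * ∏ i : Fin r, g i.succ (p.2 i) := by
      intro p
      rw [Fin.prod_univ_succ]
      simp [e, Fin.consEquiv]
    constructor
    · rw [← e.summable_iff]
      refine ((hg 0).mul_norm h1).congr (fun p => ?_)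
      simp only [Function.comp, he]
    · rw [← e.tsum_eq, Fin.prod_univ_succ, ← h2, tsum_mul_tsum_of_summable_norm (hg 0) h1]
      exact tsum_congr he

lemma det_sum (r : ℕ) (f : Fin r → Fin r → ℤ → ℂ) (hf : ∀ i j, Summable fun k => ‖f i j k‖) :
    (Summable fun k : Fin r → ℤ => ‖(Matrix.of fun i j => f i j (k i)).det‖) ∧
    ∑' k : Fin r → ℤ, (Matrix.of fun i j => f i j (k i)).det = (Matrix.of fun i j => ∑' k, f i j k).det := by
  have hexp : ∀ F : Matrix (Fin r) (Fin r) ℂ, F.det =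
      ∑ σ : Equiv.Perm (Fin r), ((Equiv.Perm.sign σ : ℤ) : ℂ) * ∏ i, F i (σ i) := by
    intro F
    rw [← Matrix.det_transpose, Matrix.det_apply']
    rfl
  have hs : ∀ σ : Equiv.Perm (Fin r), Summable fun k : Fin r → ℤ =>
      ‖((Equiv.Perm.sign σ : ℤ) : ℂ) * ∏ i, f i (σ i) (k i)‖ := by
    intro σ
    simp only [norm_mul]
    exact (pi_prod_sum r (fun i => f i (σ i)) (fun i => hf _ _)).1.mul_left _
  simp only [hexp, Matrix.of_apply]
  constructor
  · exact Summable.of_nonneg_of_le (fun _ => norm_nonneg _) (fun k => norm_sum_le _ _)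
      (summable_sum fun σ _ => hs σ)
  · rw [Summable.tsum_finsetSum (fun σ _ => (hs σ).of_norm)]
    refine Finset.sum_congr rfl (fun σ _ => ?_)
    rw [tsum_mul_left, (pi_prod_sum r (fun i => f i (σ i)) (fun i => hf _ _)).2]

lemma TT_eq {n r : ℕ} (a b : Fin n → ℂ) (x : Fin r → ℂ) (hS : (r : ℝ) < (SS a b).re) :
    (Summable fun k => ‖Tterm a b x k‖) ∧
    ∀ p : Fin r → Polynomial ℂ, (∀ i, (p i).natDegree = i) → (∀ i, (p i).Monic) →
      TT a b x = (Matrix.of fun i m => GG a b (p m) (x i)).det := by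
  have key : ∀ p : Fin r → Polynomial ℂ, (∀ i, (p i).natDegree = i) → (∀ i, (p i).Monic) →
      (Summable fun k => ‖Tterm a b x k‖) ∧
      TT a b x = (Matrix.of fun i m => GG a b (p m) (x i)).det := by
    intro p hd hm
    have ht : ∀ k, Tterm a b x k =
        (Matrix.of fun i m => (p m).eval (x i + (k i : ℂ)) * gt a b (x i) (k i)).det := by
      intro k
      rw [Tterm, Matrix.det_eval_matrixOfPolynomials_eq_det_vandermonde _ p hd hm, mul_comm,
        ← Matrix.det_mul_column]
      congr 1
      ext i m
      simp [mul_comm]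
    have hs : ∀ i m : Fin r, Summable fun k : ℤ => ‖(p m).eval (x i + k) * gt a b (x i) k‖ := by
      intro i m
      refine GG_summable a b (p m) m (hd m).le ?_ _
      have : ((m : ℕ) : ℝ) + 1 ≤ r := by exact_mod_cast m.2
      linarith
    have := det_sum r (fun i m k => (p m).eval (x i + k) * gt a b (x i) k) hs
    constructor
    · simpa only [ht] using this.1
    · simp only [TT, ht]
      exact this.2
  refine ⟨(key (fun i => Polynomial.X ^ (i : ℕ)) (by simp) (fun i => Polynomial.monic_X_pow _)).1, fun p hd hm => (key p hd hm).2⟩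

end part4

section part5
open Filter Topology

lemma det_rec (s : ℕ) (H : ℕ → Fin (s + 1) → ℂ) (q : ℕ → ℂ)
    (h : ∀ i, ∑ m ∈ Finset.range (s + 2), q m * H m i = 0) :
    -q (s + 1) * (Matrix.of fun i (m : Fin (s + 1)) => H (m + 1) i).det =
      q 0 * (-1) ^ s * (Matrix.of fun i (m : Fin (s + 1)) => H m i).det := by
  set A : Matrix (Fin (s + 1)) (Fin (s + 1)) ℂ := Matrix.of fun i (m : Fin (s + 1)) => H m i with hA
  set B : Matrix (Fin (s + 1)) (Fin (s + 1)) ℂ := Matrix.of fun i (m : Fin (s + 1)) => H (m + 1) i with hB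
  set A' := A.submatrix id (finRotate (s + 1)) with hA'
  have h1 := Matrix.det_updateCol_sum A' (Fin.last s) (fun m => q (finRotate (s + 1) m))
  have h2 : (fun k => ∑ i, q (finRotate (s + 1) i) • A' k i) = (-q (s + 1)) • (fun k => H (s + 1) k) := by
    funext k
    have e1 : ∑ i, q (finRotate (s + 1) i) • A' k i = ∑ i : Fin (s + 1), q i * H i k := by
      rw [← Equiv.sum_comp (finRotate (s + 1)) (fun i : Fin (s + 1) => q i * H i k)]
      rfl
    rw [e1, Fin.sum_univ_eq_sum_range (fun i => q i * H i k)]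
    have := h k
    rw [Finset.sum_range_succ] at this
    simp only [Pi.smul_apply, smul_eq_mul]
    linear_combination this
  rw [h2, Matrix.det_updateCol_smul, hA', Matrix.det_permute', sign_finRotate, finRotate_last] at h1
  have h3 : (A.submatrix id (finRotate (s + 1))).updateCol (Fin.last s) (fun k => H (s + 1) k) = B := by
    ext i m
    rw [Matrix.updateCol_apply]
    split_ifs with hm
    · subst hm; simp [hB]
    · have hlt : (m : ℕ) < s := by
        rcases m with ⟨m, hm'⟩
        simp [Fin.last] at hm
        simp; omega
      have := finRotate_of_lt hlt
      simp only [hA, hB, Matrix.submatrix_apply, Matrix.of_apply, id]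
      rw [show m = ⟨(m : ℕ), by omega⟩ from rfl, this]
  rw [h3] at h1
  rw [h1]
  simp
  ring

lemma hh_b_succ {n : ℕ} (a b : Fin n → ℂ) (j : Fin n) (w : ℂ) :
    hh a b w = (b j + w) * hh a (Function.update b j (b j + 1)) w := by
  rw [hh, hh, ← Finset.mul_prod_erase _ _ (Finset.mem_univ j),
    ← Finset.mul_prod_erase _ (fun i => gphi (a i) (Function.update b j (b j + 1) i) w) (Finset.mem_univ j)]
  rw [Function.update_self, gphi_b_succ, mul_assoc]
  congr 2
  refine Finset.prod_congr rfl (fun i hi => ?_)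
  rw [Function.update_of_ne (Finset.ne_of_mem_erase hi)]

lemma gt_b_succ {n : ℕ} (a b : Fin n → ℂ) (j : Fin n) (z : ℂ) (k : ℤ) :
    gt a b z k = (b j + (z + k)) * gt a (Function.update b j (b j + 1)) z k := by
  rw [gt, gt, hh_b_succ a b j]; ring

lemma SS_succ {n : ℕ} (a b : Fin n → ℂ) (j : Fin n) :
    SS a (Function.update b j (b j + 1)) = SS a b + 1 := by
  rw [SS, SS, ← Finset.add_sum_erase _ _ (Finset.mem_univ j),
    ← Finset.add_sum_erase _ (fun i => b i - a i) (Finset.mem_univ j), Function.update_self]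
  have : ∑ x ∈ Finset.univ.erase j, (Function.update b j (b j + 1) x - a x) =
      ∑ x ∈ Finset.univ.erase j, (b x - a x) :=
    Finset.sum_congr rfl (fun i hi => by rw [Function.update_of_ne (Finset.ne_of_mem_erase hi)])
  rw [this]; ring

lemma tendsto_one_add_abs_rpow (e : ℝ) (he : e < 0) (u : ℕ → ℤ) (hu : ∀ N, |(u N : ℝ)| = N) (C : ℝ) :
    Tendsto (fun N => C * (1 + |(u N : ℝ)|) ^ e) atTop (𝓝 0) := by
  simp only [hu]
  have h1 : Tendsto (fun N : ℕ => 1 + (N : ℝ)) atTop atTop :=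
    tendsto_atTop_add_const_left _ _ tendsto_natCast_atTop_atTop
  have h2 := (tendsto_rpow_neg_atTop (y := -e) (by linarith)).comp h1
  simpa [Function.comp_def] using h2.const_mul C

lemma telescope {n : ℕ} (a b : Fin n → ℂ) (z : ℂ) (hS : (n : ℝ) < (SS a b).re)
    (hsum : Summable fun k : ℤ => (∏ j, (a j + (z + k)) - ∏ j, (b j - 1 + (z + k))) * gt a b z k) :
    ∑' k : ℤ, (∏ j, (a j + (z + k)) - ∏ j, (b j - 1 + (z + k))) * gt a b z k = 0 := by
  set P : Polynomial ℂ := ∏ j, (Polynomial.X + Polynomial.C (b j - 1)) with hP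
  have hdeg : P.natDegree ≤ n := by
    rw [hP, Polynomial.natDegree_prod_of_monic _ _ (fun j _ => Polynomial.monic_X_add_C _)]
    simp only [Polynomial.natDegree_X_add_C]
    simp
  have hPe : ∀ w, P.eval w = ∏ j, (b j - 1 + w) := by
    intro w
    rw [hP, Polynomial.eval_prod]
    exact Finset.prod_congr rfl (fun j _ => by simp [add_comm])
  obtain ⟨C, hC, hb⟩ := GG_term_bound a b P n hdeg z
  set Φ : ℤ → ℂ := fun k => P.eval (z + k) * gt a b z k with hΦ
  have hstep : ∀ k : ℤ, Φ (k + 1) = (∏ j, (a j + (z + k))) * gt a b z k := by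
    intro k
    simp only [hΦ, hPe, gt, hh]
    have e1 : (∏ j, (b j - 1 + (z + ((k + 1 : ℤ) : ℂ)))) * ∏ j, gphi (a j) (b j) (z + ((k + 1 : ℤ) : ℂ)) =
        (-1) ^ n * ((∏ j, (a j + (z + k))) * ∏ j, gphi (a j) (b j) (z + k)) := by
      rw [← Finset.prod_mul_distrib, ← Finset.prod_mul_distrib]
      rw [show ((-1 : ℂ)) ^ n = ∏ j : Fin n, (-1 : ℂ) by simp, ← Finset.prod_mul_distrib]
      refine Finset.prod_congr rfl (fun j _ => ?_)
      have := gphi_shift (a j) (b j) (z + k)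
      push_cast
      rw [show z + ((k : ℂ) + 1) = z + k + 1 by ring]
      rw [show b j - 1 + (z + k + 1) = b j + (z + k) by ring, this]; ring
    have e2 : ((-1 : ℂ) ^ n) * (-1) ^ n = 1 := by rw [← mul_pow]; simp
    rw [zpow_add_one₀ (by simp)]
    linear_combination ((-1 : ℂ) ^ n) ^ k * ((-1) ^ n) * e1 + ((-1 : ℂ) ^ n) ^ k * ((∏ j, (a j + (z + k))) * ∏ j, gphi (a j) (b j) (z + k)) * e2
  have hterm : ∀ k : ℤ, (∏ j, (a j + (z + k)) - ∏ j, (b j - 1 + (z + k))) * gt a b z k = -(Φ k - Φ (k + 1)) := by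
    intro k
    rw [hstep]; simp only [hΦ, hPe]; ring
  have h0 : ∀ u : ℕ → ℤ, (∀ N, |(u N : ℝ)| = N) → Tendsto (fun N => Φ (u N)) atTop (𝓝 0) := by
    intro u hu
    exact squeeze_zero_norm (fun N => hb (u N)) (tendsto_one_add_abs_rpow _ (by linarith) u hu C)
  have ht := hsum.hasSum.comp (Finset.tendsto_Ico_neg (R := ℤ))
  refine tendsto_nhds_unique ht ?_
  have := ((h0 (fun N => -(N : ℤ)) (by simp)).sub (h0 (fun N => (N : ℤ)) (by simp))).neg
  simp only [sub_zero, neg_zero] at this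
  refine this.congr (fun N => ?_)
  simp only [Function.comp, hterm]
  rw [Finset.sum_neg_distrib, Finset.sum_Ico_int_sub]

lemma TT_rec (s : ℕ) (a b : Fin (s + 2) → ℂ) (x : Fin (s + 1) → ℂ) (j : Fin (s + 2))
    (hS : ((s + 1 : ℕ) : ℝ) < (SS a b).re) :
    (SS a b - (s + 1)) * TT a b x = (∏ i, (b j - a i)) * TT a (Function.update b j (b j + 1)) x := by
  set b' := Function.update b j (b j + 1) with hb'
  set β := b j with hβ
  have hSS : SS a b' = SS a b + 1 := SS_succ a b j
  set L : Polynomial ℂ := Polynomial.X + Polynomial.C β with hL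
  have hLe : ∀ w, L.eval w = β + w := by intro w; simp [hL, add_comm]
  have hLm : L.Monic := Polynomial.monic_X_add_C _
  have hLd : ∀ m : ℕ, (L ^ m).natDegree = m := by
    intro m; rw [hLm.natDegree_pow, hL, Polynomial.natDegree_X_add_C, mul_one]
  have hT := (TT_eq a b x hS).2 (fun m => L ^ (m : ℕ)) (fun i => hLd i) (fun i => hLm.pow _)
  have hS' : ((s + 1 : ℕ) : ℝ) < (SS a b').re := by rw [hSS]; simp at hS ⊢; linarith
  have hT' := (TT_eq a b' x hS').2 (fun m => L ^ (m : ℕ)) (fun i => hLd i) (fun i => hLm.pow _)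
  have hG : ∀ m z, GG a b (L ^ m) z = GG a b' (L ^ (m + 1)) z := by
    intro m z
    refine tsum_congr (fun k => ?_)
    rw [gt_b_succ a b j, Polynomial.eval_pow, Polynomial.eval_pow, hLe]; ring
  rw [hT, hT']
  simp only [hG]
  set P1 : Polynomial ℂ := ∏ i, (Polynomial.X - Polynomial.C (β - a i)) with hP1
  set P2 : Polynomial ℂ := ∏ i, (Polynomial.X - Polynomial.C (β - (b' i - 1))) with hP2
  have hm1 : P1.Monic := Polynomial.monic_prod_of_monic _ _ (fun _ _ => Polynomial.monic_X_sub_C _)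
  have hm2 : P2.Monic := Polynomial.monic_prod_of_monic _ _ (fun _ _ => Polynomial.monic_X_sub_C _)
  have hd1 : P1.natDegree = s + 2 := by
    rw [hP1, Polynomial.natDegree_prod_of_monic _ _ (fun j _ => Polynomial.monic_X_sub_C _)]
    simp only [Polynomial.natDegree_X_sub_C]
    simp
  have hd2 : P2.natDegree = s + 2 := by
    rw [hP2, Polynomial.natDegree_prod_of_monic _ _ (fun j _ => Polynomial.monic_X_sub_C _)]
    simp only [Polynomial.natDegree_X_sub_C]
    simp
  set Q := P1 - P2 with hQ
  have hQd : Q.natDegree < s + 2 := by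
    have h1 : Q.degree < P1.degree := Polynomial.degree_sub_lt_left
      (by rw [Polynomial.degree_eq_natDegree hm1.ne_zero, Polynomial.degree_eq_natDegree hm2.ne_zero, hd1, hd2])
      hm1.ne_zero (by rw [hm1.leadingCoeff, hm2.leadingCoeff])
    rw [Polynomial.degree_eq_natDegree hm1.ne_zero, hd1] at h1
    by_cases h0 : Q = 0
    · rw [h0]; simp
    · exact (Polynomial.natDegree_lt_iff_degree_lt h0).2 h1
  have hc1 : Q.coeff (s + 1) = -(SS a b - (s + 1)) := by
    have e1 := Polynomial.prod_X_sub_C_coeff_card_pred Finset.univ (fun i : Fin (s + 2) => β - a i) (by simp)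
    have e2 := Polynomial.prod_X_sub_C_coeff_card_pred Finset.univ (fun i : Fin (s + 2) => β - (b' i - 1)) (by simp)
    simp only [Finset.card_univ, Fintype.card_fin, Nat.add_succ_sub_one] at e1 e2
    rw [hQ, Polynomial.coeff_sub, hP1, hP2, e1, e2]
    have : SS a b = SS a b' - 1 := by rw [hSS]; ring
    rw [this, SS]
    simp only [Finset.sum_sub_distrib]
    simp
    ring
  have hc0 : Q.coeff 0 = (-1) ^ s * ∏ i, (β - a i) := by
    rw [Polynomial.coeff_zero_eq_eval_zero, hQ, Polynomial.eval_sub, hP1, hP2, Polynomial.eval_prod, Polynomial.eval_prod]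
    have : ∏ i, Polynomial.eval 0 (Polynomial.X - Polynomial.C (β - (b' i - 1))) = 0 := by
      refine Finset.prod_eq_zero (Finset.mem_univ j) ?_
      simp [hb']
    rw [this, sub_zero]
    have : ((-1 : ℂ)) ^ s = (-1) ^ (s + 2) := by rw [pow_add]; simp
    rw [this, show ((-1 : ℂ)) ^ (s + 2) = ∏ j : Fin (s + 2), (-1 : ℂ) by simp, ← Finset.prod_mul_distrib]
    exact Finset.prod_congr rfl (fun i _ => by simp)
  have hrel : ∀ z, ∑ m ∈ Finset.range (s + 2), Q.coeff m * GG a b' (L ^ m) z = 0 := by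
    intro z
    have hsm : ∀ m ∈ Finset.range (s + 2), Summable fun k : ℤ => Q.coeff m * ((L ^ m).eval (z + k) * gt a b' z k) := by
      intro m hm
      refine ((GG_summable a b' (L ^ m) m (hLd m).le ?_ z).of_norm).mul_left _
      have : m ≤ s + 1 := by simp at hm; omega
      have : (m : ℝ) ≤ s + 1 := by exact_mod_cast this
      rw [hSS]; simp at hS ⊢; linarith
    have hev : ∀ k : ℤ, (∏ j, (a j + (z + k)) - ∏ j, (b' j - 1 + (z + k))) * gt a b' z k =
        ∑ m ∈ Finset.range (s + 2), Q.coeff m * ((L ^ m).eval (z + k) * gt a b' z k) := by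
      intro k
      have e1 : Q.eval (β + (z + k)) = ∏ j, (a j + (z + k)) - ∏ j, (b' j - 1 + (z + k)) := by
        rw [hQ, Polynomial.eval_sub, hP1, hP2, Polynomial.eval_prod, Polynomial.eval_prod]
        congr 1
        · exact Finset.prod_congr rfl (fun i _ => by simp; ring)
        · exact Finset.prod_congr rfl (fun i _ => by simp; ring)
      rw [← e1, Polynomial.eval_eq_sum_range' hQd, Finset.sum_mul]
      exact Finset.sum_congr rfl (fun m _ => by rw [Polynomial.eval_pow, hLe]; ring)
    have h1 := telescope a b' z (by rw [hSS]; simp at hS ⊢; linarith) (by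
      simp only [hev]
      exact summable_sum hsm)
    simp only [hev] at h1
    rw [Summable.tsum_finsetSum hsm] at h1
    rw [← h1]
    refine Finset.sum_congr rfl (fun m _ => ?_)
    rw [GG, tsum_mul_left]
  have := det_rec s (fun m i => GG a b' (L ^ m) (x i)) (fun m => Q.coeff m) (fun i => hrel (x i))
  rw [hc1, hc0] at this
  rw [neg_neg] at this
  rw [this]
  have h1 : ((-1 : ℂ) ^ s) * (-1) ^ s = 1 := by rw [← mul_pow]; simp
  linear_combination (∏ i, (β - a i)) * (Matrix.of fun i (m : Fin (s + 1)) => GG a b' (L ^ (m : ℕ)) (x i)).det * h1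

end part5

section part6
open Filter Topology

lemma hh_uniform {n : ℕ} (K : Fin n → Set (ℂ × ℂ)) (hK : ∀ j, IsCompact (K j))
    (h3 : ∀ j, ∀ p ∈ K j, (3 : ℝ) ≤ (p.2 - p.1).re) :
    ∃ C, 0 ≤ C ∧ ∀ a b : Fin n → ℂ, (∀ j, (a j, b j) ∈ K j) → ∀ z,
      ‖hh a b z‖ * (1 + ‖z‖) ^ (2 * n) ≤ C * Real.exp (Real.pi * n * |z.im|) := by
  choose C hC hb using fun j => gphi_uniform 2 (K j) (hK j) (fun p hp => by
    have := h3 j p hp; push_cast; linarith)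
  refine ⟨∏ j, C j, Finset.prod_nonneg fun j _ => hC j, fun a b hab z => ?_⟩
  calc ‖hh a b z‖ * (1 + ‖z‖) ^ (2 * n) = ∏ j, (‖gphi (a j) (b j) z‖ * (1 + ‖z‖) ^ 2) := by
        rw [hh, norm_prod, Finset.prod_mul_distrib, pow_mul]; simp
    _ ≤ ∏ j, (C j * Real.exp (Real.pi * |z.im|)) :=
        Finset.prod_le_prod (fun _ _ => by positivity) (fun j _ => hb j _ (hab j) z)
    _ = _ := by
      rw [Finset.prod_mul_distrib, Finset.prod_const, ← Real.exp_nat_mul]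
      simp
      left; ring

lemma GG_term_uniform (s : ℕ) (a b : Fin (s + 2) → ℂ) (C : ℝ) 
    (hC : ∀ z, ‖hh a b z‖ * (1 + ‖z‖) ^ (2 * (s + 2)) ≤ C * Real.exp (Real.pi * (s + 2 : ℕ) * |z.im|))
    (m : ℕ) (hm : m ≤ s) (z : ℂ) (R : ℝ) (hR : |z.re| ≤ R) (k : ℤ) :
    ‖(Polynomial.X ^ m : Polynomial ℂ).eval (z + k) * gt a b z k‖ * (1 + |z.im|) ≤
      C * Real.exp (Real.pi * (s + 2) * |z.im|) * (1 + R) ^ 2 * (1 + |(k : ℝ)|) ^ (-2 : ℝ) := by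
  have hR0 : 0 ≤ R := (abs_nonneg _).trans hR
  have h0 := hC (z + k)
  set w := z + k with hw
  have him : w.im = z.im := by simp [hw]
  have hre : w.re = z.re + k := by simp [hw]
  rw [him] at h0
  push_cast at h0
  have hA : (1 : ℝ) ≤ 1 + ‖w‖ := by linarith [norm_nonneg w]
  have h1 : ‖w‖ ^ m ≤ (1 + ‖w‖) ^ s :=
    (pow_le_pow_left₀ (norm_nonneg _) (by linarith) m).trans (pow_le_pow_right₀ hA hm)
  have h2 : 1 + |z.im| ≤ 1 + ‖w‖ := by
    have := abs_im_le_norm w; rw [him] at this; linarith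
  have h3 : 1 + |(k : ℝ)| ≤ (1 + R) * (1 + ‖w‖) := by
    have := abs_re_le_norm w
    rw [hre] at this
    have h4 : |(k : ℝ)| ≤ |z.re + k| + |z.re| := by
      have := abs_add_le (z.re + k) (-z.re)
      simpa using this
    nlinarith [mul_nonneg hR0 (norm_nonneg w)]
  have hk : 0 < 1 + |(k : ℝ)| := by positivity
  rw [show (-2 : ℝ) = -((2 : ℕ) : ℝ) by norm_num, Real.rpow_neg hk.le, Real.rpow_natCast, ← div_eq_mul_inv,
    le_div_iff₀ (by positivity)]
  rw [norm_mul, gt, norm_mul, norm_sign_zpow, one_mul, Polynomial.eval_pow, Polynomial.eval_X, norm_pow]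
  calc ‖w‖ ^ m * ‖hh a b w‖ * (1 + |z.im|) * (1 + |(k : ℝ)|) ^ 2
      ≤ (1 + ‖w‖) ^ s * ‖hh a b w‖ * (1 + ‖w‖) * ((1 + R) * (1 + ‖w‖)) ^ 2 := by gcongr
    _ = ‖hh a b w‖ * (1 + ‖w‖) ^ (s + 3) * (1 + R) ^ 2 := by ring
    _ ≤ ‖hh a b w‖ * (1 + ‖w‖) ^ (2 * (s + 2)) * (1 + R) ^ 2 := by
        gcongr
        omega
    _ ≤ _ := by gcongr

lemma differentiable_gphi (a b : ℂ) : Differentiable ℂ (gphi a b) := by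
  have h := Complex.differentiable_one_div_Gamma
  unfold gphi
  exact (h.comp (by fun_prop : Differentiable ℂ fun z : ℂ => 1 - a - z)).mul
    (h.comp (by fun_prop : Differentiable ℂ fun z : ℂ => b + z))

lemma differentiable_gt {n : ℕ} (a b : Fin n → ℂ) (k : ℤ) : Differentiable ℂ fun z => gt a b z k := by
  unfold gt hh
  have h := fun j => (differentiable_gphi (a j) (b j)).comp (by fun_prop : Differentiable ℂ fun z : ℂ => z + k)
  simp only [Function.comp_def] at h
  fun_prop

lemma GG_entire (s : ℕ) (a b : Fin (s + 2) → ℂ) (C : ℝ) (hC0 : 0 ≤ C)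
    (hC : ∀ z, ‖hh a b z‖ * (1 + ‖z‖) ^ (2 * (s + 2)) ≤ C * Real.exp (Real.pi * (s + 2 : ℕ) * |z.im|))
    (m : ℕ) (hm : m ≤ s) : Differentiable ℂ (GG a b (Polynomial.X ^ m)) := by
  intro z
  set R := ‖z‖ + 1 with hR
  have hmem : z ∈ Metric.ball (0 : ℂ) R := by simp [hR]
  have h := Complex.differentiableOn_tsum_of_summable_norm (U := Metric.ball (0 : ℂ) R)
    (F := fun (k : ℤ) z => (Polynomial.X ^ m : Polynomial ℂ).eval (z + k) * gt a b z k)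
    (u := fun k : ℤ => C * Real.exp (Real.pi * (s + 2) * R) * (1 + R) ^ 2 * (1 + |(k : ℝ)|) ^ (-2 : ℝ))
    ((summable_int_rpow _ (by norm_num)).mul_left _)
    (fun k => by
      have := differentiable_gt a b k
      simp only [Polynomial.eval_pow, Polynomial.eval_X]
      exact Differentiable.differentiableOn (by fun_prop)) Metric.isOpen_ball (fun k w hw => by
      have hw' : ‖w‖ < R := by simpa using hw
      have h1 := GG_term_uniform s a b C hC m hm w R ((abs_re_le_norm w).trans hw'.le) k
      have h2 : |w.im| ≤ R := (abs_im_le_norm w).trans hw'.le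
      calc _ ≤ ‖(Polynomial.X ^ m : Polynomial ℂ).eval (w + k) * gt a b w k‖ * (1 + |w.im|) :=
            le_mul_of_one_le_right (norm_nonneg _) (by linarith [abs_nonneg w.im])
        _ ≤ _ := h1
        _ ≤ _ := by gcongr)
  exact h.differentiableAt (Metric.isOpen_ball.mem_nhds hmem)

lemma GG_periodic {n : ℕ} (a b : Fin n → ℂ) (p : Polynomial ℂ) (z : ℂ) :
    GG a b p (z + 1) = (-1) ^ n * GG a b p z := by
  have hsq : ((-1 : ℂ) ^ n) * (-1) ^ n = 1 := by rw [← mul_pow]; simp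
  rw [GG, GG, ← tsum_mul_left, ← (Equiv.addRight (1 : ℤ)).tsum_eq]
  rw [← (Equiv.addRight (1 : ℤ)).tsum_eq (fun k : ℤ => (-1) ^ n * (p.eval (z + k) * gt a b z k))]
  rw [← (Equiv.addRight (1 : ℤ)).tsum_eq (fun k : ℤ => (-1) ^ n * (p.eval (z + ((Equiv.addRight (1 : ℤ)) k : ℤ)) * gt a b z ((Equiv.addRight (1 : ℤ)) k)))]
  refine tsum_congr (fun k => ?_)
  simp only [Equiv.coe_addRight, gt]
  push_cast
  rw [zpow_add_one₀ (a := (-1 : ℂ) ^ n) (by simp) (k + 1)]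
  rw [show z + ((k : ℂ) + 1 + 1) = z + 1 + (k + 1) by ring]
  linear_combination -(p.eval (z + 1 + (k + 1)) * ((-1 : ℂ) ^ n) ^ (k + 1) * hh a b (z + 1 + (k + 1))) * hsq

lemma GG_growth (s : ℕ) (a b : Fin (s + 2) → ℂ) (C : ℝ) (hC0 : 0 ≤ C)
    (hC : ∀ z, ‖hh a b z‖ * (1 + ‖z‖) ^ (2 * (s + 2)) ≤ C * Real.exp (Real.pi * (s + 2 : ℕ) * |z.im|))
    (m : ℕ) (hm : m ≤ s) : ∃ C' : ℝ, ∀ z, ‖GG a b (Polynomial.X ^ m) z‖ * (1 + |z.im|) ≤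
      C' * Real.exp (Real.pi * (s + 2) * |z.im|) := by
  refine ⟨C * (1 + 1) ^ 2 * ∑' k : ℤ, (1 + |(k : ℝ)|) ^ (-2 : ℝ), fun z => ?_⟩
  have hsum := summable_int_rpow (-2) (by norm_num)
  have h1 : ∀ z : ℂ, |z.re| ≤ 1 → ‖GG a b (Polynomial.X ^ m) z‖ * (1 + |z.im|) ≤
      C * (1 + 1) ^ 2 * (∑' k : ℤ, (1 + |(k : ℝ)|) ^ (-2 : ℝ)) * Real.exp (Real.pi * (s + 2) * |z.im|) := by
    intro z hz
    have hb := GG_term_uniform s a b C hC m hm z 1 hz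
    have hpos : 0 < 1 + |z.im| := by positivity
    have hb' : ∀ k : ℤ, ‖(Polynomial.X ^ m : Polynomial ℂ).eval (z + k) * gt a b z k‖ ≤
      (C * Real.exp (Real.pi * (s + 2) * |z.im|) * (1 + 1) ^ 2 / (1 + |z.im|)) * (1 + |(k : ℝ)|) ^ (-2 : ℝ) := by
      intro k
      rw [div_mul_eq_mul_div, le_div_iff₀ hpos]; exact hb k
    have := tsum_of_norm_bounded (hsum.mul_left _).hasSum hb'
    rw [tsum_mul_left] at this
    rw [← le_div_iff₀ hpos]
    refine this.trans (le_of_eq (by ring))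
  have hp : Function.Periodic (fun z => ‖GG a b (Polynomial.X ^ m) z‖) (1 : ℂ) := by
    intro z
    simp only [GG_periodic, norm_mul]; simp
  have h2 := hp.sub_zsmul_eq (x := z) ⌊z.re⌋
  have h3 := h1 (z - ⌊z.re⌋ • (1 : ℂ)) (by
    simp
    rw [abs_of_nonneg (Int.fract_nonneg _)]
    exact (Int.fract_lt_one _).le)
  rw [h2] at h3
  simpa using h3

noncomputable def Wf {r : ℕ} (x : Fin r → ℂ) : ℂ :=
  (Matrix.vandermonde x).det * ∏ i, ∏ j, (Complex.Gamma (1 + x j - x i))⁻¹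

noncomputable def Kf {r : ℕ} (x : Fin r → ℂ) : ℂ :=
  (∏ i, cexp (-(Real.pi * I * (r - 1 : ℕ) * x i))) * (Matrix.vandermonde fun i => cexp (2 * Real.pi * I * x i)).det

lemma sin_gamma (y : ℂ) : y * ((Gamma (1 + y))⁻¹ * (Gamma (1 - y))⁻¹) = Complex.sin (Real.pi * y) / Real.pi := by
  have h1 := rGamma_step y
  have h2 := Complex.Gamma_mul_Gamma_one_sub y
  rw [← mul_assoc, add_comm 1 y, ← h1, ← mul_inv, h2, inv_div]

lemma sin_exp (u v : ℂ) : Complex.sin (Real.pi * (v - u)) = 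
    (2 * I)⁻¹ * (cexp (2 * Real.pi * I * v) - cexp (2 * Real.pi * I * u)) * (cexp (-(Real.pi * I * u)) * cexp (-(Real.pi * I * v))) := by
  rw [Complex.sin, mul_inv, Complex.inv_I]
  have e1 : cexp (2 * Real.pi * I * v) * (cexp (-(Real.pi * I * u)) * cexp (-(Real.pi * I * v))) = cexp (Real.pi * (v - u) * I) := by
    rw [← Complex.exp_add, ← Complex.exp_add]; congr 1; ring
  have e2 : cexp (2 * Real.pi * I * u) * (cexp (-(Real.pi * I * u)) * cexp (-(Real.pi * I * v))) = cexp (-(Real.pi * (v - u)) * I) := by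
    rw [← Complex.exp_add, ← Complex.exp_add]; congr 1; ring
  rw [← e1, ← e2]; ring

lemma Kf_eq (r : ℕ) : ∃ κ : ℂ, ∀ x : Fin r → ℂ, Kf x = κ * Wf x := by
  refine ⟨∏ i : Fin r, ∏ _j ∈ Finset.Ioi i, (2 * Real.pi * I), fun x => ?_⟩
  have h1 : ∏ i, cexp (-(Real.pi * I * (r - 1 : ℕ) * x i)) =
      ∏ i, ∏ j ∈ Finset.Ioi i, (cexp (-(Real.pi * I * x i)) * cexp (-(Real.pi * I * x j))) := by
    rw [Finset.prod_prod_Ioi_mul_eq_prod_prod_off_diag (fun j i : Fin r => cexp (-(Real.pi * I * x i)))]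
    refine Finset.prod_congr rfl (fun i _ => ?_)
    rw [Finset.prod_const, Finset.card_compl, Finset.card_singleton, Fintype.card_fin, ← Complex.exp_nat_mul]
    congr 1; ring
  have h2 : ∏ i, ∏ j, (Complex.Gamma (1 + x j - x i))⁻¹ = 
      ∏ i, ∏ j ∈ Finset.Ioi i, ((Gamma (1 + x j - x i))⁻¹ * (Gamma (1 + x i - x j))⁻¹) := by
    rw [Finset.prod_prod_Ioi_mul_eq_prod_prod_off_diag (fun j i : Fin r => (Gamma (1 + x j - x i))⁻¹)]
    refine Finset.prod_congr rfl (fun i _ => ?_)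
    rw [← Finset.prod_mul_prod_compl {i}]
    simp
  rw [Kf, Wf, h1, h2, Matrix.det_vandermonde, Matrix.det_vandermonde]
  simp only [← Finset.prod_mul_distrib]
  refine Finset.prod_congr rfl (fun i _ => Finset.prod_congr rfl (fun j _ => ?_))
  have e1 := sin_gamma (x j - x i)
  rw [sin_exp] at e1
  rw [show 1 + x j - x i = 1 + (x j - x i) by ring, show 1 + x i - x j = 1 - (x j - x i) by ring, e1]
  have : (Real.pi : ℂ) ≠ 0 := by exact_mod_cast Real.pi_ne_zero
  field_simp

lemma TT_Wf (s : ℕ) (a b : Fin (s + 2) → ℂ) (h3 : ∀ j, (3 : ℝ) ≤ (b j - a j).re) :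
    ∃ D : ℂ, ∀ x : Fin (s + 1) → ℂ, TT a b x = D * Wf x := by
  obtain ⟨C, hC0, hC'⟩ := hh_uniform (fun j => {(a j, b j)}) (fun j => isCompact_singleton)
    (fun j p hp => by rw [Set.mem_singleton_iff.1 hp]; exact h3 j)
  have hC := hC' a b (fun j => rfl)
  have hS : ((s + 1 : ℕ) : ℝ) < (SS a b).re := by
    have : ∑ j : Fin (s + 2), (3 : ℝ) ≤ (SS a b).re := by
      rw [SS, re_sum]; exact Finset.sum_le_sum (fun j _ => h3 j)
    simp at this ⊢
    linarith
  have hG : ∀ m : Fin (s + 1), ∃ c : Fin (s + 1) → ℂ, ∀ z, GG a b (Polynomial.X ^ (m : ℕ)) z =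
      cexp (-(Real.pi * I * s * z)) * ∑ i, c i * (cexp (2 * Real.pi * I * z)) ^ (i : ℕ) := by
    intro m
    obtain ⟨C', hb⟩ := GG_growth s a b C hC0 hC m (by omega)
    refine trig_poly_of_growth s _ (GG_entire s a b C hC0 hC m (by omega)) (fun z => ?_) C' hb
    rw [GG_periodic, pow_add]; simp
  choose c hc using hG
  obtain ⟨κ, hκ⟩ := Kf_eq (s + 1)
  refine ⟨(Matrix.of fun i m : Fin (s + 1) => c m i).det * κ, fun x => ?_⟩
  rw [mul_assoc, ← hκ, (TT_eq a b x hS).2 (fun m => Polynomial.X ^ (m : ℕ)) (by simp) (fun i => Polynomial.monic_X_pow _)]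
  simp only [hc]
  have := Matrix.det_mul_column (fun i => cexp (-(Real.pi * I * s * x i)))
    ((Matrix.vandermonde fun i => cexp (2 * Real.pi * I * x i)) * (Matrix.of fun i m : Fin (s + 1) => c m i))
  rw [Matrix.det_mul] at this
  rw [Kf]
  simp only [Nat.add_sub_cancel]
  refine Eq.trans ?_ (this.trans (by ring))
  congr 1
  ext i m
  simp [Matrix.mul_apply, Matrix.vandermonde_apply, mul_comm]

end part6

section part7
open Filter Topology

lemma gamma_ratio_limit {n : ℕ} (s t : Fin n → ℂ) (hs : ∀ j, Gamma (s j) ≠ 0) (ht : ∀ j, Gamma (t j) ≠ 0)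
    (hst : ∑ j, s j = ∑ j, t j) :
    Tendsto (fun N : ℕ => (∏ j, Gamma (s j + N + 1)) / ∏ j, Gamma (t j + N + 1)) atTop (𝓝 1) := by
  have h1 := tendsto_finsetProd Finset.univ (fun j _ => Gamma_asymp (s j) (hs j))
  have h2 := tendsto_finsetProd Finset.univ (fun j _ => Gamma_asymp (t j) (ht j))
  have h3 := h1.div h2 (by simp)
  simp only [Finset.prod_const_one, div_one] at h3
  refine h3.congr' ?_
  filter_upwards [eventually_ge_atTop 1] with N hN
  have hN0 : (N : ℂ) ≠ 0 := by exact_mod_cast (by omega : N ≠ 0)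
  have hp : ∀ u : Fin n → ℂ, ∏ j, ((N : ℂ) ^ (u j) * (N.factorial : ℂ)) = (N : ℂ) ^ (∑ j, u j) * (N.factorial : ℂ) ^ n := by
    intro u
    rw [Finset.prod_mul_distrib, Complex.cpow_def_of_ne_zero hN0, Finset.mul_sum, Complex.exp_sum]
    simp [Complex.cpow_def_of_ne_zero hN0]
  simp only [Pi.div_apply, Finset.prod_div_distrib, hp, hst]
  rw [div_div_div_cancel_right₀]
  refine mul_ne_zero ?_ (pow_ne_zero _ (by exact_mod_cast N.factorial_ne_zero))
  rw [Complex.cpow_ne_zero_iff]; left; exact hN0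

lemma norm_shift_le (σ : ℂ) (hσ : 1 ≤ σ.re) (N l : ℕ) : ‖σ + l‖ ≤ ‖σ + N + l‖ := by
  rw [← sq_le_sq₀ (norm_nonneg _) (norm_nonneg _), Complex.sq_norm, Complex.sq_norm, normSq_apply, normSq_apply]
  simp
  have h1 : (0 : ℝ) ≤ N := by positivity
  have h2 : (0 : ℝ) ≤ l := by positivity
  nlinarith

lemma rho_eq (σ : ℂ) (hσ : 1 ≤ σ.re) (N k : ℕ) :
    Gamma (σ + N) * (Gamma (σ + N + k))⁻¹ = (∏ l ∈ Finset.range k, (σ + N + l))⁻¹ := by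
  have h0 : Gamma (σ + N) ≠ 0 := Gamma_ne_zero_of_re_pos (by simp; positivity)
  have h1 := rGamma_mul_prod (σ + N) k
  refine eq_inv_of_mul_eq_one_left ?_
  rw [mul_assoc, mul_comm (Gamma (σ + N + k))⁻¹, ← h1, mul_inv_cancel₀ h0]

lemma rho_bound (σ : ℂ) (hσ : 1 ≤ σ.re) (N k : ℕ) :
    ‖Gamma (σ + N) * (Gamma (σ + N + k))⁻¹‖ ≤ ‖Gamma σ * (Gamma (σ + k))⁻¹‖ := by
  have h2 := rho_eq σ hσ 0 k
  simp only [Nat.cast_zero, add_zero] at h2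
  rw [rho_eq σ hσ, h2, norm_inv, norm_inv, norm_prod, norm_prod]
  refine inv_anti₀ (Finset.prod_pos fun l _ => ?_) (Finset.prod_le_prod (fun _ _ => norm_nonneg _) fun l _ => norm_shift_le σ hσ N l)
  have : 0 < (σ + l).re := by simp; positivity
  exact norm_pos_iff.2 (fun h => by rw [h] at this; simp at this)

lemma rho_tendsto (σ : ℂ) (hσ : 1 ≤ σ.re) (k : ℕ) (hk : k ≠ 0) :
    Tendsto (fun N : ℕ => Gamma (σ + N) * (Gamma (σ + N + k))⁻¹) atTop (𝓝 0) := by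
  obtain ⟨k, rfl⟩ := Nat.exists_eq_succ_of_ne_zero hk
  refine squeeze_zero_norm (a := fun N : ℕ => 1 / ((N : ℝ) + 1)) (fun N => ?_) tendsto_one_div_add_atTop_nhds_zero_nat
  rw [rho_eq σ hσ, norm_inv, one_div, norm_prod, Finset.prod_range_succ']
  refine inv_anti₀ (by positivity) ?_
  have h1 : ∀ l : ℕ, (N : ℝ) + 1 ≤ ‖σ + N + l‖ := by
    intro l
    refine le_trans ?_ (re_le_norm _)
    simp
    have h2 : (0 : ℝ) ≤ l := by positivity
    linarith
  have h2 : (1 : ℝ) ≤ ∏ l ∈ Finset.range k, ‖σ + N + ((l + 1 : ℕ) : ℂ)‖ := by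
    rw [show (1 : ℝ) = ∏ l ∈ Finset.range k, (1 : ℝ) by simp]
    refine Finset.prod_le_prod (fun _ _ => zero_le_one) fun l _ => (le_trans ?_ (h1 (l + 1)))
    have h2 : (0 : ℝ) ≤ N := by positivity
    linarith
  calc (N : ℝ) + 1 ≤ 1 * ‖σ + N + ((0 : ℕ) : ℂ)‖ := by rw [one_mul]; exact h1 0
    _ ≤ _ := by gcongr

noncomputable def AA (s : ℕ) (a b : Fin (s + 2) → ℂ) (w : ℂ) : ℂ :=
  (∏ j, (Gamma (1 - a j - w))⁻¹) * ∏ j : Fin (s + 1), (Gamma (b j.castSucc + w))⁻¹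

lemma hh_last (s : ℕ) (a b : Fin (s + 2) → ℂ) (β w : ℂ) :
    hh a (Function.update b (Fin.last (s + 1)) β) w = AA s a b w * (Gamma (β + w))⁻¹ := by
  simp only [hh, gphi, AA, Finset.prod_mul_distrib]
  rw [mul_assoc]
  congr 1
  rw [Fin.prod_univ_castSucc]
  congr 1
  · exact Finset.prod_congr rfl (fun j _ => by rw [Function.update_of_ne (Fin.castSucc_ne_last j)])
  · simp

lemma row_limit (s : ℕ) (a b : Fin (s + 2) → ℂ) (i : Fin (s + 1)) (x : ℂ) (hx : x = 1 - b i.castSucc)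
    (β : ℂ) (hβ : β = b (Fin.last _)) (hσ : 1 ≤ (β + x).re) (p : Polynomial ℂ)
    (hp : p.natDegree ≤ s) (hS : ((s + 1 : ℕ) : ℝ) < (SS a b).re) :
    Tendsto (fun N : ℕ => Gamma (β + x + N) * GG a (Function.update b (Fin.last (s + 1)) (β + N)) p x)
      atTop (𝓝 (p.eval x * AA s a b x)) := by
  have hA : ∀ k : ℤ, k < 0 → AA s a b (x + k) = 0 := by
    intro k hk
    rw [AA]
    have : ∏ j : Fin (s + 1), (Gamma (b j.castSucc + (x + k)))⁻¹ = 0 := by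
      refine Finset.prod_eq_zero (Finset.mem_univ i) ?_
      rw [inv_eq_zero, Gamma_eq_zero_iff]
      refine ⟨(-(1 + k)).toNat, ?_⟩
      have : (((-(1 + k)).toNat : ℤ) : ℂ) = ((-(1 + k) : ℤ) : ℂ) := by
        rw [Int.toNat_of_nonneg (by omega)]
      rw [Int.cast_natCast] at this
      rw [this, hx]; push_cast; ring
    rw [this, mul_zero]
  set f : ℕ → ℤ → ℂ := fun N k => Gamma (β + x + N) * (p.eval (x + k) * gt a (Function.update b (Fin.last (s + 1)) (β + N)) x k) with hf
  have hfk : ∀ N k, f N k = (p.eval (x + k) * ((-1 : ℂ) ^ (s + 2)) ^ k * AA s a b (x + k)) * (Gamma (β + x + N) * (Gamma (β + x + N + k))⁻¹) := by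
    intro N k
    simp only [hf, gt, hh_last]
    rw [show β + N + (x + k) = β + x + N + k by ring]; ring
  have hneg : ∀ N (k : ℤ), k < 0 → f N k = 0 := by
    intro N k hk; rw [hfk, hA k hk]; simp
  have hb0 : Function.update b (Fin.last (s + 1)) (β + (0 : ℕ)) = b := by
    rw [hβ]; simp
  have hsum : Summable fun k => ‖f 0 k‖ := by
    have := (GG_summable a b p s hp (by push_cast at hS; exact hS) x).mul_left ‖Gamma (β + x + (0 : ℕ))‖
    refine this.congr (fun k => ?_)
    simp only [hf, hb0]
    rw [norm_mul (Gamma _)]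
  have hlim := tendsto_tsum_of_dominated_convergence (f := f) (𝓕 := atTop)
    (g := fun k => if k = 0 then p.eval x * AA s a b x else 0) hsum (fun k => ?_) (Eventually.of_forall fun N k => ?_)
  · rw [tsum_ite_eq] at hlim
    refine hlim.congr (fun N => ?_)
    simp only [hf]
    rw [tsum_mul_left]; rfl
  · rcases lt_trichotomy k 0 with hk | hk | hk
    · simp only [hneg _ k hk, hk.ne, if_false]; exact tendsto_const_nhds
    · subst hk
      simp only [if_true]
      refine tendsto_const_nhds.congr (fun N => ?_)
      rw [hfk]
      have h0 : Gamma (β + x + N) ≠ 0 := Gamma_ne_zero_of_re_pos (by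
        rw [add_re, natCast_re]; positivity)
      simp [h0]
    · obtain ⟨k, rfl⟩ := Int.eq_ofNat_of_zero_le hk.le
      simp only [hk.ne', if_false, hfk]
      have := (rho_tendsto (β + x) hσ k (by omega)).const_mul (p.eval (x + (k : ℤ)) * ((-1 : ℂ) ^ (s + 2)) ^ (k : ℤ) * AA s a b (x + (k : ℤ)))
      simpa using this
  · rcases lt_or_ge k 0 with hk | hk
    · simp [hneg _ k hk]
    · obtain ⟨k, rfl⟩ := Int.eq_ofNat_of_zero_le hk
      rw [hfk, hfk, norm_mul _ (Gamma _ * _), norm_mul _ (Gamma _ * _)]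
      gcongr
      simpa using rho_bound (β + x) hσ N k


lemma update_step (s : ℕ) (b : Fin (s + 2) → ℂ) (j : Fin (s + 2)) (β : ℂ) (N : ℕ) :
    Function.update (Function.update b j (β + N)) j ((Function.update b j (β + N)) j + 1) =
      Function.update b j (β + (N + 1 : ℕ)) := by
  simp; ring_nf

lemma F_const (s : ℕ) (a b : Fin (s + 2) → ℂ) (x : Fin (s + 1) → ℂ) 
    (hS : ((s + 1 : ℕ) : ℝ) < (SS a b).re) (hβ : ∀ j, 1 ≤ (b (Fin.last _) - a j).re) (N : ℕ) :
    SS a (Function.update b (Fin.last _) (b (Fin.last _) + N)) = SS a b + N ∧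
    TT a (Function.update b (Fin.last _) (b (Fin.last _) + N)) x * (Gamma (SS a b - (s + 1) + N))⁻¹ *
      ∏ j, Gamma (b (Fin.last _) - a j + N) =
    TT a b x * (Gamma (SS a b - (s + 1)))⁻¹ * ∏ j, Gamma (b (Fin.last _) - a j) := by
  induction N with
  | zero => simp
  | succ N ih =>
    obtain ⟨ih1, ih2⟩ := ih
    set β := b (Fin.last (s + 1)) with hβ'
    set bN := Function.update b (Fin.last (s + 1)) (β + N) with hbN
    have hu := update_step s b (Fin.last _) β N
    have hSS := SS_succ a bN (Fin.last _)
    rw [hu, ih1] at hSS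
    refine ⟨by rw [hSS]; push_cast; ring, ?_⟩
    have hr := TT_rec s a bN x (Fin.last _) (by rw [ih1]; simp at hS ⊢; linarith [N.cast_nonneg (α := ℝ)])
    rw [hu, ih1] at hr
    have e1 : bN (Fin.last (s + 1)) = β + N := by simp [hbN]
    rw [e1] at hr
    have e2 := rGamma_step (SS a b - (s + 1) + N)
    have e3 : ∏ j, Gamma (β - a j + (N + 1 : ℕ)) = (∏ j, (β + N - a j)) * ∏ j, Gamma (β - a j + N) := by
      rw [← Finset.prod_mul_distrib]
      refine Finset.prod_congr rfl (fun j _ => ?_)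
      have hne : β - a j + N ≠ 0 := by
        intro h
        have h1 := hβ j
        have h2 := congrArg Complex.re h
        rw [add_re, natCast_re, zero_re] at h2
        linarith [N.cast_nonneg (α := ℝ)]
      push_cast
      rw [← add_assoc, Gamma_add_one _ hne]; ring
    rw [← ih2, e3, e2]
    push_cast
    rw [show SS a b - (s + 1) + ((N : ℂ) + 1) = SS a b - (s + 1) + N + 1 by ring]
    push_cast at hr
    linear_combination -(Gamma (SS a b - (s + 1) + N + 1))⁻¹ * (∏ j, Gamma (β - a j + N)) * hr

noncomputable def RHSf (s : ℕ) (a b : Fin (s + 2) → ℂ) : ℂ :=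
  Gamma (SS a b - (s + 1)) * ∏ i, ∏ j, (Gamma (b i - a j))⁻¹

lemma eval_star (s : ℕ) (a b : Fin (s + 2) → ℂ)
    (hS : ((s + 2 : ℕ) : ℝ) < (SS a b).re) (hβ : ∀ j, 1 ≤ (b (Fin.last _) - a j).re)
    (hβb : ∀ i : Fin (s + 1), 0 ≤ (b (Fin.last _) - b i.castSucc).re) :
    TT a b (fun i : Fin (s + 1) => 1 - b i.castSucc) = RHSf s a b * Wf (fun i : Fin (s + 1) => 1 - b i.castSucc) := by
  set x : Fin (s + 1) → ℂ := fun i => 1 - b i.castSucc with hx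
  set β := b (Fin.last (s + 1)) with hβ'
  have hS1 : ((s + 1 : ℕ) : ℝ) < (SS a b).re := by push_cast at hS ⊢; linarith
  have hσ : ∀ i, 1 ≤ (β + x i).re := by
    intro i
    have := hβb i
    simp only [hx, sub_re, add_re, one_re] at this ⊢; linarith
  have hrow := fun (i m : Fin (s + 1)) => row_limit s a b i (x i) rfl β rfl (hσ i) (Polynomial.X ^ (m : ℕ))
    (by simp; omega) hS1
  have hdet : Tendsto (fun N : ℕ => (∏ i, Gamma (β + x i + N)) * TT a (Function.update b (Fin.last (s + 1)) (β + N)) x)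
      atTop (𝓝 ((∏ i, AA s a b (x i)) * (Matrix.vandermonde x).det)) := by
    have hM : Tendsto (fun N : ℕ => (Matrix.of fun i m : Fin (s + 1) => Gamma (β + x i + N) * GG a (Function.update b (Fin.last (s + 1)) (β + N)) (Polynomial.X ^ (m : ℕ)) (x i)))
        atTop (𝓝 (Matrix.of fun i m : Fin (s + 1) => (Polynomial.X ^ (m : ℕ) : Polynomial ℂ).eval (x i) * AA s a b (x i))) := by
      refine tendsto_pi_nhds.2 fun i => tendsto_pi_nhds.2 fun m => ?_
      exact hrow i m
    have hD := ((continuous_id.matrix_det (n := Fin (s + 1)) (R := ℂ)).tendsto _).comp hM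
    rw [← Matrix.det_mul_column]
    refine (hD.congr (fun N => ?_)).trans (le_of_eq ?_)
    · simp only [Function.comp, id]
      rw [(TT_eq a (Function.update b (Fin.last (s + 1)) (β + N)) x (by
        rw [(F_const s a b x hS1 hβ N).1, add_re, natCast_re]
        linarith [N.cast_nonneg (α := ℝ)])).2 (fun m => Polynomial.X ^ (m : ℕ)) (by simp) (fun i => Polynomial.monic_X_pow _)]
      rw [← Matrix.det_mul_column]
      rfl
    · congr 2
      ext i m
      simp [Matrix.vandermonde_apply, mul_comm]
  have hcre : 1 < (SS a b - (s + 1)).re := by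
    simp at hS ⊢; linarith
  have hGc : Gamma (SS a b - (s + 1)) ≠ 0 := Gamma_ne_zero_of_re_pos (by linarith)
  have hGj : ∀ j, Gamma (β - a j) ≠ 0 := fun j => Gamma_ne_zero_of_re_pos (by linarith [hβ j])
  have hGi : ∀ i, Gamma (β + x i) ≠ 0 := fun i => Gamma_ne_zero_of_re_pos (by linarith [hσ i])
  have hratio := gamma_ratio_limit (fun j => β - a j) (Fin.cons (SS a b - (s + 1)) (fun i => β + x i) : Fin (s + 2) → ℂ) hGj
    (by
      intro j
      refine Fin.cases ?_ (fun i => ?_) j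
      · simpa using hGc
      · simpa using hGi i) (by
      rw [Fin.sum_univ_succ (Fin.cons _ _)]
      simp only [Fin.cons_zero, Fin.cons_succ, SS, hx, Finset.sum_add_distrib, Finset.sum_sub_distrib]
      rw [Fin.sum_univ_castSucc b]
      simp
      ring)
  have hprod := (hdet.comp (tendsto_add_atTop_nat 1)).mul hratio
  rw [mul_one] at hprod
  have hlim := tendsto_nhds_unique hprod (tendsto_const_nhds.congr (f₁ := fun _ => 
      TT a b x * (Gamma (SS a b - (s + 1)))⁻¹ * ∏ j, Gamma (b (Fin.last _) - a j)) (fun N => by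
    rw [← (F_const s a b x hS1 hβ (N + 1)).2]
    simp only [Function.comp, Fin.prod_univ_succ (fun j => Gamma ((Fin.cons (SS a b - (s + 1)) (fun i => β + x i) : Fin (s + 2) → ℂ) j + N + 1)), Fin.cons_zero, Fin.cons_succ]
    have hne : ∏ i, Gamma (β + x i + N + 1) ≠ 0 := by
      refine Finset.prod_ne_zero_iff.2 fun i _ => Gamma_ne_zero_of_re_pos ?_
      have := hσ i
      rw [add_re, add_re, natCast_re, one_re]
      linarith [N.cast_nonneg (α := ℝ)]
    push_cast
    simp only [← add_assoc]
    simp only [← hβ']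
    field_simp))
  have hne : ∏ j, Gamma (β - a j) ≠ 0 := Finset.prod_ne_zero_iff.2 fun j _ => hGj j
  have hfin : TT a b x = Gamma (SS a b - (s + 1)) * (∏ j, (Gamma (β - a j))⁻¹) * ((∏ i, AA s a b (x i)) * (Matrix.vandermonde x).det) := by
    rw [hlim, Finset.prod_inv_distrib, ← hβ']
    field_simp
  rw [hfin, RHSf, Wf, Fin.prod_univ_castSucc (fun i => ∏ j, (Gamma (b i - a j))⁻¹)]
  have hAA : ∏ i, AA s a b (x i) = (∏ i : Fin (s + 1), ∏ j, (Gamma (b i.castSucc - a j))⁻¹) *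
      ∏ i, ∏ j, (Gamma (1 + x j - x i))⁻¹ := by
    simp only [AA]
    rw [Finset.prod_mul_distrib]
    congr 1
    · refine Finset.prod_congr rfl fun i _ => Finset.prod_congr rfl fun j _ => ?_
      congr 2; simp only [hx]; ring
    · rw [Finset.prod_comm]
      refine Finset.prod_congr rfl fun i _ => Finset.prod_congr rfl fun j _ => ?_
      congr 2; simp only [hx]; ring
  rw [hAA]
  ring

lemma Wf_ne_zero {r : ℕ} (x : Fin r → ℂ) (hx : ∀ i j : Fin r, i ≠ j → ∀ m : ℤ, x i - x j ≠ m) : Wf x ≠ 0 := by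
  refine mul_ne_zero (Matrix.det_vandermonde_ne_zero_iff.2 fun i j hij => ?_)
    (Finset.prod_ne_zero_iff.2 fun i _ => Finset.prod_ne_zero_iff.2 fun j _ => inv_ne_zero ?_)
  · by_contra h
    exact hx i j h 0 (by simp [hij])
  · rw [ne_eq, Gamma_eq_zero_iff]
    rintro ⟨m, hm⟩
    by_cases h : j = i
    · subst h
      have h2 := congrArg Complex.re hm
      simp at h2
      linarith [m.cast_nonneg (α := ℝ)]
    · refine hx j i h (-m - 1) ?_
      push_cast
      linear_combination hm

lemma main_generic (s : ℕ) (a b : Fin (s + 2) → ℂ) (h3 : ∀ j, (3 : ℝ) ≤ (b j - a j).re)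
    (hβ : ∀ j, 1 ≤ (b (Fin.last _) - a j).re)
    (hβb : ∀ i : Fin (s + 1), 0 ≤ (b (Fin.last _) - b i.castSucc).re)
    (hgen : ∀ i j : Fin (s + 1), i ≠ j → ∀ m : ℤ, b i.castSucc - b j.castSucc ≠ m) (x : Fin (s + 1) → ℂ) :
    TT a b x = RHSf s a b * Wf x := by
  obtain ⟨D, hD⟩ := TT_Wf s a b h3
  have hS : ((s + 2 : ℕ) : ℝ) < (SS a b).re := by
    have : ∑ j : Fin (s + 2), (3 : ℝ) ≤ (SS a b).re := by
      rw [SS, re_sum]; exact Finset.sum_le_sum (fun j _ => h3 j)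
    simp at this ⊢
    linarith
  have h := eval_star s a b hS hβ hβb
  rw [hD] at h
  have := mul_right_cancel₀ (Wf_ne_zero _ (fun i j hij m => by
    have := hgen j i hij.symm m
    intro h
    apply this
    linear_combination h)) h
  rw [hD, this]

end part7

section part8
open Filter Topology

noncomputable def bt {n : ℕ} (b : Fin n → ℂ) (t : ℝ) : Fin n → ℂ := fun j => b j + I * t * (j : ℕ)

lemma bt_re {n : ℕ} (b : Fin n → ℂ) (t : ℝ) (j : Fin n) : (bt b t j).re = (b j).re := by
  simp [bt]

lemma bt_zero {n : ℕ} (b : Fin n → ℂ) : bt b 0 = b := by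
  funext j; simp [bt]

lemma bt_cont {n : ℕ} (b : Fin n → ℂ) (j : Fin n) : Continuous fun t => bt b t j := by
  unfold bt; fun_prop

lemma good_dense (s : ℕ) (b : Fin (s + 2) → ℂ) :
    ∃ᶠ t in 𝓝 (0 : ℝ), ∀ i j : Fin (s + 1), i ≠ j → ∀ m : ℤ, bt b t i.castSucc - bt b t j.castSucc ≠ m := by
  set bad : Set ℝ := ⋃ p : Fin (s + 1) × Fin (s + 1) × ℤ, {t : ℝ | p.1 ≠ p.2.1 ∧ bt b t p.1.castSucc - bt b t p.2.1.castSucc = p.2.2} with hbad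
  have hc : bad.Countable := by
    refine Set.countable_iUnion fun p => Set.Subsingleton.countable ?_
    rintro t ⟨hne, ht⟩ u ⟨_, hu⟩
    simp only [bt, Fin.val_castSucc] at ht hu
    have h1 : I * (((t - u) : ℝ) : ℂ) * (((p.1 : ℕ) : ℂ) - ((p.2.1 : ℕ) : ℂ)) = 0 := by
      push_cast
      linear_combination ht - hu
    have h2 : (((p.1 : ℕ) : ℂ) - ((p.2.1 : ℕ) : ℂ)) ≠ 0 := by
      rw [sub_ne_zero]
      intro h
      exact hne (Fin.ext (by exact_mod_cast h))
    have h3 : (((t - u) : ℝ) : ℂ) = 0 := by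
      simpa [h2, I_ne_zero] using h1
    have : t - u = 0 := by exact_mod_cast h3
    linarith
  have hd := hc.dense_compl ℝ
  have := mem_closure_iff_frequently.1 (hd.closure_eq ▸ Set.mem_univ (0 : ℝ) : (0 : ℝ) ∈ closure badᶜ)
  refine this.mono fun t ht i j hij m h => ht ?_
  exact Set.mem_iUnion.2 ⟨(i, j, m), hij, h⟩

lemma gt_cont {n : ℕ} (a b : Fin n → ℂ) (z : ℂ) (k : ℤ) : Continuous fun t => gt a (bt b t) z k := by
  unfold gt hh gphi
  refine continuous_const.mul (continuous_finset_prod _ fun j _ => continuous_const.mul ?_)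
  exact continuous_rGamma.comp ((bt_cont b j).add continuous_const)

lemma GG_lim (s : ℕ) (a b : Fin (s + 2) → ℂ) (h3 : ∀ j, (3 : ℝ) ≤ (b j - a j).re) (m : ℕ) (hm : m ≤ s) (z : ℂ) :
    Tendsto (fun t => GG a (bt b t) (Polynomial.X ^ m) z) (𝓝 0) (𝓝 (GG a b (Polynomial.X ^ m) z)) := by
  obtain ⟨C, hC0, hC⟩ := hh_uniform (fun j => (fun t : ℝ => (a j, bt b t j)) '' Set.Icc (-1) 1)
    (fun j => isCompact_Icc.image (continuous_const.prodMk (bt_cont b j)))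
    (fun j p hp => by
      obtain ⟨t, _, rfl⟩ := hp
      simp only [sub_re, bt_re]
      simpa using h3 j)
  unfold GG
  refine tendsto_tsum_of_dominated_convergence
    (bound := fun k : ℤ => C * Real.exp (Real.pi * (s + 2) * |z.im|) * (1 + |z.re|) ^ 2 * (1 + |(k : ℝ)|) ^ (-2 : ℝ))
    ((summable_int_rpow _ (by norm_num)).mul_left _) (fun k => ?_) ?_
  · have := ((gt_cont a b z k).tendsto 0).const_mul ((Polynomial.X ^ m : Polynomial ℂ).eval (z + k))
    rwa [bt_zero] at this
  · have : ∀ᶠ t : ℝ in 𝓝 0, t ∈ Set.Icc (-1 : ℝ) 1 := Icc_mem_nhds (by norm_num) (by norm_num)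
    filter_upwards [this] with t ht k
    have h1 := GG_term_uniform s a (bt b t) C (hC a (bt b t) (fun j => ⟨t, ht, rfl⟩)) m hm z |z.re| le_rfl k
    exact (le_mul_of_one_le_right (norm_nonneg _) (by linarith [abs_nonneg z.im])).trans h1

lemma main_big (s : ℕ) (a b : Fin (s + 2) → ℂ) (h3 : ∀ j, (3 : ℝ) ≤ (b j - a j).re)
    (hβ : ∀ j, 1 ≤ (b (Fin.last _) - a j).re)
    (hβb : ∀ i : Fin (s + 1), 0 ≤ (b (Fin.last _) - b i.castSucc).re) (x : Fin (s + 1) → ℂ) :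
    TT a b x = RHSf s a b * Wf x := by
  have hSr : ∀ t, (SS a (bt b t)).re = (SS a b).re := by
    intro t
    simp only [SS, re_sum, sub_re, bt_re]
  have hS : ((s + 2 : ℕ) : ℝ) < (SS a b).re := by
    have : ∑ j : Fin (s + 2), (3 : ℝ) ≤ (SS a b).re := by
      rw [SS, re_sum]; exact Finset.sum_le_sum (fun j _ => h3 j)
    simp at this ⊢
    linarith
  have hS1 : ((s + 1 : ℕ) : ℝ) < (SS a b).re := by push_cast at hS ⊢; linarith
  have hTe : ∀ t, TT a (bt b t) x = (Matrix.of fun i m : Fin (s + 1) => GG a (bt b t) (Polynomial.X ^ (m : ℕ)) (x i)).det := 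
    fun t => (TT_eq a (bt b t) x (by rw [hSr]; exact hS1)).2 (fun m => Polynomial.X ^ (m : ℕ)) (by simp) (fun i => Polynomial.monic_X_pow _)
  have hT : Tendsto (fun t => TT a (bt b t) x) (𝓝 0) (𝓝 (TT a b x)) := by
    have h0 := hTe 0
    rw [bt_zero] at h0
    simp only [hTe, h0]
    refine ((continuous_id.matrix_det (n := Fin (s + 1)) (R := ℂ)).tendsto _).comp ?_
    refine tendsto_pi_nhds.2 fun i => tendsto_pi_nhds.2 fun m => ?_
    exact GG_lim s a b h3 m (by omega) (x i)
  have hR : Tendsto (fun t => RHSf s a (bt b t) * Wf x) (𝓝 0) (𝓝 (RHSf s a b * Wf x)) := by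
    refine Tendsto.mul_const _ ?_
    have hc : ContinuousAt (fun t => RHSf s a (bt b t)) 0 := by
      unfold RHSf
      refine ContinuousAt.mul ?_ ?_
      · have h1 : ContinuousAt Gamma (SS a (bt b 0) - (s + 1)) := by
          rw [bt_zero]
          refine (differentiableAt_Gamma _ fun m h => ?_).continuousAt
          have := congrArg Complex.re h
          simp at this
          push_cast at hS1
          linarith [m.cast_nonneg (α := ℝ)]
        have h2 : Continuous fun t => SS a (bt b t) - (s + 1) := by
          unfold SS
          exact (continuous_finset_sum _ fun j _ => (bt_cont b j).sub continuous_const).sub continuous_const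
        exact ContinuousAt.comp (f := fun t => SS a (bt b t) - (s + 1)) h1 h2.continuousAt
      · refine Continuous.continuousAt (continuous_finset_prod _ fun i _ => continuous_finset_prod _ fun j _ => ?_)
        exact continuous_rGamma.comp ((bt_cont b i).sub continuous_const)
    have := hc.tendsto
    rwa [bt_zero] at this
  have hfr : ∃ᶠ t in 𝓝 (0 : ℝ), TT a (bt b t) x = RHSf s a (bt b t) * Wf x := by
    refine (good_dense s b).mono fun t ht => main_generic s a (bt b t) (fun j => ?_) (fun j => ?_) (fun i => ?_) ht x
    · have := h3 j; simpa only [sub_re, bt_re] using this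
    · have := hβ j; simpa only [sub_re, bt_re] using this
    · have := hβb i; simpa only [sub_re, bt_re] using this
  exact tendsto_nhds_unique_of_frequently_eq hT hR hfr

end part8

section part9
open Filter Topology

lemma RHSf_rec (s : ℕ) (a b : Fin (s + 2) → ℂ) (j : Fin (s + 2)) (hc : SS a b - (s + 1) ≠ 0) :
    (SS a b - (s + 1)) * RHSf s a b = (∏ i, (b j - a i)) * RHSf s a (Function.update b j (b j + 1)) := by
  have h1 : SS a (Function.update b j (b j + 1)) - (s + 1) = SS a b - (s + 1) + 1 := by
    rw [SS_succ]; ring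
  rw [RHSf, RHSf, h1, Gamma_add_one _ hc, ← Finset.mul_prod_erase _ _ (Finset.mem_univ j),
    ← Finset.mul_prod_erase _ (fun i => ∏ l, (Gamma (Function.update b j (b j + 1) i - a l))⁻¹) (Finset.mem_univ j)]
  have h2 : ∏ i ∈ Finset.univ.erase j, ∏ l, (Gamma (Function.update b j (b j + 1) i - a l))⁻¹ =
      ∏ i ∈ Finset.univ.erase j, ∏ l, (Gamma (b i - a l))⁻¹ :=
    Finset.prod_congr rfl fun i hi => by rw [Function.update_of_ne (Finset.ne_of_mem_erase hi)]
  have h3 : ∏ l, (Gamma (b j - a l))⁻¹ = (∏ l, (b j - a l)) * ∏ l, (Gamma (Function.update b j (b j + 1) j - a l))⁻¹ := by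
    rw [← Finset.prod_mul_distrib]
    refine Finset.prod_congr rfl fun l _ => ?_
    rw [rGamma_step, Function.update_self]
    congr 3; ring
  rw [h2, h3]; ring

lemma main_step_s16 (s : ℕ) (a b : Fin (s + 2) → ℂ) (x : Fin (s + 1) → ℂ) (j : Fin (s + 2))
    (hS : ((s + 1 : ℕ) : ℝ) < (SS a b).re)
    (h : TT a (Function.update b j (b j + 1)) x = RHSf s a (Function.update b j (b j + 1)) * Wf x) :
    TT a b x = RHSf s a b * Wf x := by
  have hc : SS a b - (s + 1) ≠ 0 := by
    intro h0
    have := congrArg Complex.re h0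
    simp at this
    push_cast at hS
    linarith
  refine mul_left_cancel₀ hc ?_
  rw [TT_rec s a b x j hS, h, ← mul_assoc, ← mul_assoc, RHSf_rec s a b j hc]

lemma main_descent (s : ℕ) (a : Fin (s + 2) → ℂ) (x : Fin (s + 1) → ℂ) (M : ℕ) :
    ∀ (N : Fin (s + 2) → ℕ) (_ : ∑ j, N j = M) (b : Fin (s + 2) → ℂ) (_ : ((s + 1 : ℕ) : ℝ) < (SS a b).re)
      (_ : TT a (fun j => b j + N j) x = RHSf s a (fun j => b j + N j) * Wf x), TT a b x = RHSf s a b * Wf x := by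
  induction M with
  | zero =>
    intro N hN b hS h
    have h0 : ∀ j, N j = 0 := by simpa using hN
    simpa [h0] using h
  | succ M ih =>
    intro N hN b hS h
    obtain ⟨j, hj⟩ : ∃ j, N j ≠ 0 := by
      by_contra hcon
      push Not at hcon
      simp [hcon] at hN
    refine main_step_s16 s a b x j hS ?_
    refine ih (Function.update N j (N j - 1)) ?_ _ ?_ ?_
    · rw [← Finset.add_sum_erase _ _ (Finset.mem_univ j)] at hN ⊢
      rw [Function.update_self]
      have : ∑ i ∈ Finset.univ.erase j, Function.update N j (N j - 1) i = ∑ i ∈ Finset.univ.erase j, N i :=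
        Finset.sum_congr rfl fun i hi => by rw [Function.update_of_ne (Finset.ne_of_mem_erase hi)]
      omega
    · rw [SS_succ, add_re, one_re]; linarith
    · have : (fun i => Function.update b j (b j + 1) i + ((Function.update N j (N j - 1) i : ℕ) : ℂ)) = fun i => b i + N i := by
        funext i
        by_cases hi : i = j
        · subst hi
          simp only [Function.update_self]
          rw [Nat.cast_sub (by omega)]; push_cast; ring
        · simp [Function.update_of_ne hi]
      rw [this]; exact h

lemma exists_nat_bound {n : ℕ} (f : Fin n → ℝ) : ∃ N : ℕ, ∀ j, f j ≤ N := by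
  obtain ⟨N, hN⟩ := exists_nat_ge (∑ j, |f j|)
  exact ⟨N, fun j => (le_abs_self _).trans ((Finset.single_le_sum (f := fun j => |f j|) (fun _ _ => abs_nonneg _) (Finset.mem_univ j)).trans hN)⟩

theorem main_all_s16 (s : ℕ) (a b : Fin (s + 2) → ℂ) (x : Fin (s + 1) → ℂ) (hS : ((s + 1 : ℕ) : ℝ) < (SS a b).re) :
    TT a b x = RHSf s a b * Wf x := by
  obtain ⟨N0, h0⟩ := exists_nat_bound (fun j => 3 - (b j - a j).re)
  obtain ⟨N1, h1⟩ := exists_nat_bound (fun j => 1 - (b (Fin.last _) - a j).re)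
  obtain ⟨N2, h2⟩ := exists_nat_bound (fun j => (b j - b (Fin.last _)).re)
  set N : Fin (s + 2) → ℕ := fun j => if j = Fin.last _ then N0 + N1 + N2 else N0 with hN
  have hl : N (Fin.last _) = N0 + N1 + N2 := by simp [hN]
  have hi : ∀ i : Fin (s + 1), N i.castSucc = N0 := by intro i; simp [hN]
  have p0 := N0.cast_nonneg (α := ℝ)
  have p1 := N1.cast_nonneg (α := ℝ)
  have p2 := N2.cast_nonneg (α := ℝ)
  refine main_descent s a x _ N rfl b hS (main_big s a _ (fun j => ?_) (fun j => ?_) (fun i => ?_) x)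
  · have := h0 j
    have h3 : (N0 : ℝ) ≤ N j := by
      simp only [hN]; split_ifs
      · push_cast; linarith
      · exact le_rfl
    simp only [sub_re, add_re, natCast_re] at this ⊢
    linarith
  · have := h1 j
    simp only [hl]
    push_cast
    simp only [sub_re, add_re, natCast_re] at this ⊢
    linarith
  · have := h2 i.castSucc
    simp only [hl, hi]
    push_cast
    simp only [sub_re, add_re, natCast_re] at this ⊢
    linarith

lemma poch_num (α : ℂ) (h : Gamma (1 - α) ≠ 0) (k : ℤ) :
    poch α k = (-1) ^ k * (Gamma (1 - α) * (Gamma (1 - α - k))⁻¹) := by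
  rw [poch]
  split_ifs with hk
  · obtain ⟨n, rfl⟩ := Int.eq_ofNat_of_zero_le hk
    have := rGamma_sub_nat α n
    simp only [Int.toNat_natCast, Int.cast_natCast, zpow_natCast]
    rw [this]
    have h1 : ((-1 : ℂ) ^ n) * (-1) ^ n = 1 := by rw [← mul_pow]; simp
    calc _ = ((-1 : ℂ) ^ n * (-1) ^ n) * (∏ l ∈ Finset.range n, (α + l)) * (Gamma (1 - α) * (Gamma (1 - α))⁻¹) := by
          rw [h1, mul_inv_cancel₀ h]; ring
      _ = _ := by ring
  · obtain ⟨n, hn⟩ := Int.eq_ofNat_of_zero_le (by omega : 0 ≤ -k)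
    obtain rfl : k = -(n : ℤ) := by omega
    have := rGamma_mul_prod (1 - α) n
    simp only [neg_neg, Int.toNat_natCast, Int.cast_neg, Int.cast_natCast, sub_neg_eq_add, zpow_neg, zpow_natCast]
    have h2 : ∏ l ∈ Finset.range n, (1 - α + l) = (-1) ^ n * ∏ l ∈ Finset.range n, (α - 1 - l) := by
      rw [show ((-1 : ℂ)) ^ n = ∏ j ∈ Finset.range n, (-1 : ℂ) by simp, ← Finset.prod_mul_distrib]
      exact Finset.prod_congr rfl fun l _ => by ring
    symm
    refine eq_inv_of_mul_eq_one_left ?_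
    have h1 : ((-1 : ℂ) ^ n)⁻¹ = (-1) ^ n := by rw [← inv_pow]; norm_num
    rw [h1]
    calc _ = Gamma (1 - α) * (((-1) ^ n * ∏ l ∈ Finset.range n, (α - 1 - l)) * (Gamma (1 - α + n))⁻¹) := by ring
      _ = 1 := by rw [← h2, ← this, mul_inv_cancel₀ h]

lemma poch_den (ρ : ℂ) (h : Gamma ρ ≠ 0) (k : ℤ) :
    (poch ρ k)⁻¹ = Gamma ρ * (Gamma (ρ + k))⁻¹ := by
  rw [poch]
  split_ifs with hk
  · obtain ⟨n, rfl⟩ := Int.eq_ofNat_of_zero_le hk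
    simp only [Int.toNat_natCast, Int.cast_natCast]
    symm
    refine eq_inv_of_mul_eq_one_left ?_
    rw [mul_assoc, mul_comm _ (∏ _ ∈ _, _), ← rGamma_mul_prod, mul_inv_cancel₀ h]
  · obtain ⟨n, hn⟩ := Int.eq_ofNat_of_zero_le (by omega : 0 ≤ -k)
    obtain rfl : k = -(n : ℤ) := by omega
    have := rGamma_mul_prod (ρ - n) n
    simp only [neg_neg, Int.toNat_natCast, Int.cast_neg, Int.cast_natCast, inv_inv, ← sub_eq_add_neg]
    rw [this, sub_add_cancel, mul_left_comm, mul_inv_cancel₀ h, mul_one, ← Finset.prod_range_reflect]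
    refine Finset.prod_congr rfl fun l hl => ?_
    rw [Finset.mem_range] at hl
    rw [Nat.sub_sub, Nat.cast_sub (by omega)]
    push_cast; ring

lemma vander_ratio {r : ℕ} (x y : Fin r → ℂ) :
    (∏ i : Fin r, ∏ j : Fin r, if i < j then (y i - y j) / (x i - x j) else 1) =
      (Matrix.vandermonde y).det / (Matrix.vandermonde x).det := by
  rw [Matrix.det_vandermonde, Matrix.det_vandermonde, ← Finset.prod_div_distrib]
  refine Finset.prod_congr rfl fun i _ => ?_
  rw [← Finset.prod_div_distrib, ← Finset.prod_filter]
  have : Finset.filter (fun j => i < j) Finset.univ = Finset.Ioi i := by ext; simp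
  rw [this]
  refine Finset.prod_congr rfl fun j _ => ?_
  rw [← neg_sub (y i), ← neg_sub (x i), neg_div_neg_eq]

end part9

/-- Gustafson's `A_r` extension of Dougall's `₂H₂` summation. -/
theorem gustafson_Ar_2H2 (r : ℕ) (hr : 1 ≤ r)
    (a b : Fin (r + 1) → ℂ) (x : Fin r → ℂ)
    (hx : ∀ i j : Fin r, i ≠ j → ∀ m : ℤ, x i - x j ≠ (m : ℂ))
    (hg1 : ∀ (i : Fin r) (j : Fin (r + 1)) (m : ℕ), 1 - a j - x i ≠ -(m : ℂ))
    (hg2 : ∀ (i : Fin r) (j : Fin (r + 1)) (m : ℕ), b j + x i ≠ -(m : ℂ))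
    (hg3 : ∀ (i j : Fin (r + 1)) (m : ℕ), b j - a i ≠ -(m : ℂ))
    (hden : ∀ (i : Fin r) (j : Fin (r + 1)) (m : ℤ), poch (b j + x i) m ≠ 0)
    (hre : 0 < ((-(r : ℂ) + ∑ j, (b j - a j)).re)) :
    (Summable fun k : Fin r → ℤ =>
      ‖(∏ i : Fin r, ∏ j : Fin r,
          if i < j then (x i + k i - x j - (k j : ℂ)) / (x i - x j) else 1) *
        ∏ i : Fin r, ∏ j : Fin (r + 1), poch (a j + x i) (k i) / poch (b j + x i) (k i)‖) ∧
    (∑' k : Fin r → ℤ,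
      (∏ i : Fin r, ∏ j : Fin r,
          if i < j then (x i + k i - x j - (k j : ℂ)) / (x i - x j) else 1) *
        ∏ i : Fin r, ∏ j : Fin (r + 1), poch (a j + x i) (k i) / poch (b j + x i) (k i)) =
      Complex.Gamma (-(r : ℂ) + ∑ j, (b j - a j)) *
        (∏ i : Fin r, ∏ j : Fin (r + 1),
          Complex.Gamma (1 - a j - x i) * Complex.Gamma (b j + x i)) /
        ((∏ i : Fin (r + 1), ∏ j : Fin (r + 1), Complex.Gamma (b j - a i)) *
          ∏ i : Fin r, ∏ j : Fin r, Complex.Gamma (1 + x j - x i)) := by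
  obtain ⟨s, rfl⟩ : ∃ s, r = s + 1 := ⟨r - 1, by omega⟩
  have hS : ((s + 1 : ℕ) : ℝ) < (SS a b).re := by
    rw [add_re, neg_re, natCast_re] at hre
    rw [SS]; linarith
  have hV : (Matrix.vandermonde x).det ≠ 0 :=
    Matrix.det_vandermonde_ne_zero_iff.2 fun i j hij => by
      by_contra h
      exact hx i j h 0 (by simp [hij])
  set P : ℂ := ∏ i : Fin (s + 1), ∏ j : Fin (s + 1 + 1), Gamma (1 - a j - x i) * Gamma (b j + x i) with hP
  have hterm : ∀ k : Fin (s + 1) → ℤ, (∏ i : Fin (s + 1), ∏ j : Fin (s + 1),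
          if i < j then (x i + k i - x j - (k j : ℂ)) / (x i - x j) else 1) *
        ∏ i : Fin (s + 1), ∏ j : Fin (s + 1 + 1), poch (a j + x i) (k i) / poch (b j + x i) (k i) =
      P / (Matrix.vandermonde x).det * Tterm a b x k := by
    intro k
    have e1 := vander_ratio x (fun i => x i + (k i : ℂ))
    simp only [← sub_sub] at e1
    rw [e1]
    have e2 : ∏ i : Fin (s + 1), ∏ j : Fin (s + 1 + 1), poch (a j + x i) (k i) / poch (b j + x i) (k i) =
        P * ∏ i, gt a b (x i) (k i) := by
      rw [hP, ← Finset.prod_mul_distrib]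
      refine Finset.prod_congr rfl fun i _ => ?_
      have e3 : ((-1 : ℂ) ^ (s + 1 + 1)) ^ (k i) = ∏ j : Fin (s + 1 + 1), (-1 : ℂ) ^ (k i) := by
        rw [Finset.prod_const, Finset.card_univ, Fintype.card_fin, ← zpow_natCast, ← zpow_natCast, ← zpow_mul, ← zpow_mul, mul_comm]
      rw [gt, hh, e3, ← Finset.prod_mul_distrib, ← Finset.prod_mul_distrib]
      refine Finset.prod_congr rfl fun j _ => ?_
      have g1 : Gamma (1 - (a j + x i)) ≠ 0 := by
        rw [← sub_sub]
        exact Gamma_ne_zero (hg1 i j)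
      have g2 : Gamma (b j + x i) ≠ 0 := Gamma_ne_zero (hg2 i j)
      rw [div_eq_mul_inv, poch_num _ g1, poch_den _ g2, gphi, ← sub_sub, ← sub_sub, ← add_assoc]
      ring
    rw [e2, Tterm]
    ring
  simp only [hterm]
  constructor
  · simp only [norm_mul (P / _)]
    exact (TT_eq a b x hS).1.mul_left _
  · rw [tsum_mul_left]
    have := main_all_s16 s a b x hS
    rw [TT] at this
    rw [this, RHSf, Wf]
    have e1 : -((s + 1 : ℕ) : ℂ) + ∑ j, (b j - a j) = SS a b - (s + 1) := by
      rw [SS]; push_cast; ring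
    have e2 : ∏ i, ∏ j, (Gamma (b i - a j))⁻¹ = (∏ i : Fin (s + 1 + 1), ∏ j : Fin (s + 1 + 1), Gamma (b j - a i))⁻¹ := by
      rw [Finset.prod_comm]
      simp only [Finset.prod_inv_distrib]
    rw [e1, e2]
    simp only [Finset.prod_inv_distrib]
    rw [div_eq_mul_inv _ (_ * _), mul_inv]
    field_simp
end
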